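/- arXiv:1408.0235 — 3 statements merged into one kernel-verified Lean document; each statement's English description precedes it below -/
import Mathlib

section
/- There exists p₀ > 0 such that for every prime p ≥ p₀ the following holds: if d ≥ 1 is an integer, f is a monic polynomial over 𝔽_p = ℤ/pℤ of degree d which is a product of d distinct monic linear factors, and N is an integer with 0 ≤ N ≤ p - 1, then |∑_{x=0}^{N} η_p(f(x))| ≤ d·(1 + log p)·√p, where x runs over the integers 0, 1, …, N reduced modulo p and log is the natural logarithm. -/
open Polynomial in
theorem stepanov_plus {K : Type*} [Field K] [Fintype K] [DecidableEq K] (p k : ℕ) [Fact p.Prime]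
    [CharP K p] (m g : ℕ) (hr : p ^ k = 2 * m + 1) (hcard : Fintype.card K = (p ^ k) ^ 2)
    (F : K[X]) (hF : F.natDegree = 2 * g + 1) (hmg : g < m) :
    (Finset.univ.filter fun x : K => F.eval x ^ (2 * m * (m + 1)) = 1).card
      ≤ (m + 2 * g + 2) * (2 * m + 1) := by
  classical
  set r := p ^ k with hrdef
  set I := m + g + 2 with hI
  set M := r * m + I + g with hM
  have hF0 : F ≠ 0 := by
    rintro rfl
    simp at hF
  set U : (Fin (m + 1) → K) →ₗ[K] K[X] :=
    (degreeLT K (m+1)).subtype ∘ₗ (degreeLTEquiv K (m + 1)).symm.toLinearMap with hU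
  set V : (Fin (m - g) → K) →ₗ[K] K[X] :=
    (degreeLT K (m-g)).subtype ∘ₗ (degreeLTEquiv K (m - g)).symm.toLinearMap with hV
  have hUdeg : ∀ a, (U a).degree < (m + 1 : ℕ) := fun a =>
    mem_degreeLT.1 ((degreeLTEquiv K (m + 1)).symm a).2
  have hVdeg : ∀ a, (V a).degree < (m - g : ℕ) := fun a =>
    mem_degreeLT.1 ((degreeLTEquiv K (m - g)).symm a).2
  have hUinj : ∀ a, U a = 0 → a = 0 := by
    intro a ha
    have : ((degreeLTEquiv K (m + 1)).symm a) = 0 := Subtype.ext ha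
    simpa using this
  have hVinj : ∀ a, V a = 0 → a = 0 := by
    intro a ha
    have : ((degreeLTEquiv K (m - g)).symm a) = 0 := Subtype.ext ha
    simpa using this
  have hUnat : ∀ a, (U a).natDegree ≤ m := fun a => by
    have h1 := hUdeg a
    by_cases h0 : U a = 0
    · simp [h0]
    · have := (natDegree_lt_iff_degree_lt h0).2 h1
      omega
  have hVnat : ∀ a, (V a).natDegree ≤ m - g - 1 := fun a => by
    have h1 := hVdeg a
    by_cases h0 : V a = 0
    · simp [h0]
    · have := (natDegree_lt_iff_degree_lt h0).2 h1
      omega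
  -- the constraint polynomial
  let Φ : (Fin I → Fin (m + 1) → K) × (Fin I → Fin (m - g) → K) → K[X] := fun ab =>
    ∑ i : Fin I, X ^ (i : ℕ) * (U (ab.1 i) ^ r + V (ab.2 i) ^ r * F ^ (m + 1))
  have hΦsub : ∀ x y, Φ (x - y) = Φ x - Φ y := by
    intro x y
    simp only [Φ, ← Finset.sum_sub_distrib, Prod.fst_sub, Prod.snd_sub, Pi.sub_apply, map_sub]
    refine Finset.sum_congr rfl fun i _ => ?_
    rw [hrdef, sub_pow_char_pow, sub_pow_char_pow]
    ring
  have hΦdeg : ∀ x, (Φ x).natDegree < M := by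
    intro x
    have : (Φ x).natDegree ≤ M - 1 := by
      apply natDegree_sum_le_of_forall_le
      intro i _
      have hi := i.2
      refine natDegree_mul_le.trans ?_
      rw [natDegree_X_pow]
      have h1 : (U (x.1 i) ^ r).natDegree ≤ r * m :=
        natDegree_pow_le.trans (Nat.mul_le_mul_left _ (hUnat _))
      have h2 : (V (x.2 i) ^ r * F ^ (m+1)).natDegree ≤ r * (m - g - 1) + (m+1) * (2 * g + 1) := by
        refine natDegree_mul_le.trans ?_
        refine add_le_add (natDegree_pow_le.trans (Nat.mul_le_mul_left _ (hVnat _))) ?_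
        rw [natDegree_pow, hF]
      have h3 : r * (m - g - 1) + (m+1) * (2 * g + 1) ≤ r * m + g := by
        obtain ⟨s, rfl⟩ : ∃ s, m = g + 1 + s := ⟨m - g - 1, by omega⟩
        have : g + 1 + s - g - 1 = s := by omega
        rw [this, hr]
        nlinarith
      have h4 := natDegree_add_le (U (x.1 i) ^ r) (V (x.2 i) ^ r * F ^ (m+1))
      have h5 : (U (x.1 i) ^ r + V (x.2 i) ^ r * F ^ (m+1)).natDegree ≤ r * m + g :=
        h4.trans (max_le (by omega) (by omega))
      omega
    omega
  let Ψ : (Fin I → Fin (m + 1) → K) × (Fin I → Fin (m - g) → K) → (Fin M → K) :=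
    fun x j => (Φ x).coeff j
  have hq : 1 < Fintype.card K := Fintype.one_lt_card
  have hlt : Fintype.card (Fin M → K) <
      Fintype.card ((Fin I → Fin (m + 1) → K) × (Fin I → Fin (m - g) → K)) := by
    simp only [Fintype.card_prod, Fintype.card_fun, Fintype.card_fin]
    rw [← pow_mul, ← pow_mul, ← pow_add]
    apply Nat.pow_lt_pow_right hq
    rw [hM, hr, hI]
    obtain ⟨s, rfl⟩ : ∃ s, m = g + 1 + s := ⟨m - g - 1, by omega⟩
    have : g + 1 + s - g = s + 1 := by omega
    rw [this]
    nlinarith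
  obtain ⟨x, y, hxy, hΨ⟩ := Fintype.exists_ne_map_eq_of_card_lt Ψ hlt
  set w := x - y with hw
  have hw0 : w ≠ 0 := sub_ne_zero.2 hxy
  have hΦw : Φ w = 0 := by
    rw [hw, hΦsub, sub_eq_zero]
    ext j
    by_cases hj : j < M
    · exact congrFun hΨ ⟨j, hj⟩
    · rw [coeff_eq_zero_of_natDegree_lt (lt_of_lt_of_le (hΦdeg x) (not_lt.1 hj)),
        coeff_eq_zero_of_natDegree_lt (lt_of_lt_of_le (hΦdeg y) (not_lt.1 hj))]
  -- the auxiliary polynomial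
  let term : Fin I ⊕ Fin I → K[X] := Sum.elim
    (fun i => X ^ ((i : ℕ) * r) * U (w.1 i)) (fun i => X ^ ((i : ℕ) * r) * (V (w.2 i) * F ^ (m + 1)))
  let A : K[X] := ∑ s, term s
  have hdl : ∀ i : Fin I, term (Sum.inl i) ≠ 0 →
      ∃ c ≤ m, (term (Sum.inl i)).natDegree = i * r + c := by
    intro i hi
    refine ⟨(U (w.1 i)).natDegree, hUnat _, ?_⟩
    have h : U (w.1 i) ≠ 0 := fun h => hi (by simp [term, h])
    simp [term, natDegree_mul (pow_ne_zero _ X_ne_zero) h]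
  have hdr : ∀ i : Fin I, term (Sum.inr i) ≠ 0 →
      ∃ c, m < c ∧ c < r ∧ (term (Sum.inr i)).natDegree = (i + g) * r + c := by
    intro i hi
    have h : V (w.2 i) ≠ 0 := fun h => hi (by simp [term, h])
    have h1 := hVnat (w.2 i)
    refine ⟨g + m + 1 + (V (w.2 i)).natDegree, by omega, by omega, ?_⟩
    simp only [term, Sum.elim_inr]
    rw [natDegree_mul (pow_ne_zero _ X_ne_zero) (mul_ne_zero h (pow_ne_zero _ hF0)),
      natDegree_mul h (pow_ne_zero _ hF0), natDegree_pow, natDegree_pow, hF, natDegree_X, hr]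
    ring
  have hrpos : 0 < r := by omega
  have hdisj : Set.Pairwise {s | s ∈ (Finset.univ : Finset (Fin I ⊕ Fin I)) ∧ term s ≠ 0}
      (Function.onFun Ne (degree ∘ term)) := by
    have key : ∀ a b c d : ℕ, c < r → d < r → a * r + c = b * r + d → a = b ∧ c = d := by
      intro a b c d hc hd h
      have h1 : c = d := by
        have := congrArg (· % r) h
        simpa [Nat.mod_eq_of_lt hc, Nat.mod_eq_of_lt hd] using this
      subst h1
      exact ⟨Nat.eq_of_mul_eq_mul_right hrpos (by omega), rfl⟩
    rintro (i | i) ⟨-, hi⟩ (j | j) ⟨-, hj⟩ hij h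
    all_goals
      have h' : (term _).natDegree = (term _).natDegree := natDegree_eq_of_degree_eq h
    · obtain ⟨c, hc, hc'⟩ := hdl i hi
      obtain ⟨d, hd, hd'⟩ := hdl j hj
      rw [hc', hd'] at h'
      have := (key _ _ _ _ (by omega) (by omega) h').1
      exact hij (by rw [Fin.ext this])
    · obtain ⟨c, hc, hc'⟩ := hdl i hi
      obtain ⟨d, hd, hd1, hd'⟩ := hdr j hj
      rw [hc', hd'] at h'
      have := (key _ _ _ _ (by omega) (by omega) h').2
      omega
    · obtain ⟨c, hc, hc1, hc'⟩ := hdr i hi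
      obtain ⟨d, hd, hd'⟩ := hdl j hj
      rw [hc', hd'] at h'
      have := (key _ _ _ _ (by omega) (by omega) h').2
      omega
    · obtain ⟨c, hc, hc1, hc'⟩ := hdr i hi
      obtain ⟨d, hd, hd1, hd'⟩ := hdr j hj
      rw [hc', hd'] at h'
      have := (key _ _ _ _ (by omega) (by omega) h').1
      exact hij (by rw [Fin.ext (by omega : (i : ℕ) = j)])
  have hAdeg := degree_sum_eq_of_disjoint term Finset.univ hdisj
  have hA0 : A ≠ 0 := by
    intro hA
    rw [show (∑ s, term s) = A from rfl, hA, degree_zero] at hAdeg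
    have hall : ∀ s, term s = 0 := by
      intro s
      have := Finset.le_sup (f := fun i => (term i).degree) (Finset.mem_univ s)
      rw [← hAdeg] at this
      exact degree_eq_bot.1 (le_bot_iff.1 this)
    apply hw0
    refine Prod.ext (funext fun i => ?_) (funext fun i => ?_)
    · have := hall (Sum.inl i)
      simp only [term, Sum.elim_inl] at this
      exact hUinj _ ((mul_eq_zero.1 this).resolve_left (pow_ne_zero _ X_ne_zero))
    · have := hall (Sum.inr i)
      simp only [term, Sum.elim_inr] at this
      exact hVinj _ ((mul_eq_zero.1 ((mul_eq_zero.1 this).resolve_left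
        (pow_ne_zero _ X_ne_zero))).resolve_right (pow_ne_zero _ hF0))
  have hAnat : A.natDegree ≤ (I + g) * r := by
    apply natDegree_sum_le_of_forall_le
    rintro (i | i) -
    · by_cases h : term (Sum.inl i) = 0
      · simp [h]
      · obtain ⟨c, hc, hc'⟩ := hdl i h
        rw [hc']
        have := i.2
        have : (i + 1 : ℕ) * r ≤ (I + g) * r := Nat.mul_le_mul_right _ (by omega)
        nlinarith
    · by_cases h : term (Sum.inr i) = 0
      · simp [h]
      · obtain ⟨c, hc, hc1, hc'⟩ := hdr i h
        rw [hc']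
        have := i.2
        have : (i + g + 1 : ℕ) * r ≤ (I + g) * r := Nat.mul_le_mul_right _ (by omega)
        nlinarith
  have hsub : (Finset.univ.filter fun x : K => F.eval x ^ (2 * m * (m + 1)) = 1)
      ⊆ A.roots.toFinset := by
    intro z hz
    have hz' : F.eval z ^ (2 * m * (m + 1)) = 1 := by simpa using hz
    rw [Multiset.mem_toFinset, mem_roots hA0, IsRoot.def]
    have hzq : (z ^ r) ^ r = z := by
      rw [← pow_mul, ← sq, ← hcard, FiniteField.pow_card]
    have hEr : (F.eval z ^ (m + 1)) ^ r = F.eval z ^ (m + 1) := by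
      rw [← pow_mul, show (m + 1) * r = 2 * m * (m + 1) + (m + 1) by rw [hr]; ring, pow_add, hz',
        one_mul]
    have hAz : A.eval z = ∑ i : Fin I, (z ^ r) ^ (i : ℕ) *
        ((U (w.1 i)).eval z + (V (w.2 i)).eval z * F.eval z ^ (m + 1)) := by
      simp only [A, term, Fintype.sum_sum_type, Sum.elim_inl, Sum.elim_inr, eval_add,
        eval_finsetSum, eval_mul, eval_pow, eval_X, ← Finset.sum_add_distrib]
      refine Finset.sum_congr rfl fun i _ => ?_
      rw [← pow_mul, mul_comm r]
      ring
    have h0 : (A.eval z) ^ r = (Φ w).eval z := by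
      rw [hAz, hrdef, sum_pow_char_pow]
      simp only [Φ, eval_finsetSum, eval_mul, eval_add, eval_pow, eval_X]
      refine Finset.sum_congr rfl fun i _ => ?_
      rw [mul_pow, add_pow_char_pow, mul_pow, ← hrdef, hEr, ← pow_mul, mul_comm (i : ℕ) r, pow_mul,
        hzq]
    rw [hΦw, eval_zero] at h0
    exact pow_eq_zero_iff (by omega) |>.1 h0
  calc _ ≤ A.roots.toFinset.card := Finset.card_le_card hsub
    _ ≤ A.roots.card := Multiset.toFinset_card_le _
    _ ≤ A.natDegree := card_roots' _
    _ ≤ (I + g) * r := hAnat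
    _ = _ := by rw [hr, hI]; ring

open Polynomial in
theorem weil_odd {K : Type*} [Field K] [Fintype K] [DecidableEq K] (p k : ℕ) [Fact p.Prime]
    [CharP K p] (m g : ℕ) (hr : p ^ k = 2 * m + 1) (hcard : Fintype.card K = (p ^ k) ^ 2)
    (F : K[X]) (hF : F.natDegree = 2 * g + 1) (hmg : g < m) :
    |∑ x : K, quadraticChar K (F.eval x)| ≤ (4 * g + 3) * (p ^ k : ℤ) + (2 * g + 1) := by
  classical
  have hF0 : F ≠ 0 := by
    rintro rfl
    simp at hF
  have hc2 : ringChar K ≠ 2 := by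
    intro h
    have h1 := FiniteField.even_card_of_char_two h
    rw [hcard, hr] at h1
    have : Odd ((2 * m + 1) ^ 2) := Odd.pow ⟨m, rfl⟩
    rw [Nat.odd_iff] at this
    omega
  have hhalf : Fintype.card K / 2 = 2 * m * (m + 1) := by
    rw [hcard, hr]
    have : (2 * m + 1) ^ 2 = 2 * (2 * m * (m + 1)) + 1 := by ring
    omega
  have hplus : ∀ G : K[X], G.natDegree = 2 * g + 1 →
      (Finset.univ.filter fun x : K => quadraticChar K (G.eval x) = 1).card
        ≤ (m + 2 * g + 2) * (2 * m + 1) := by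
    intro G hG
    refine le_trans (Finset.card_le_card ?_) (stepanov_plus p k m g hr hcard G hG hmg)
    intro x hx
    simp only [Finset.mem_filter, Finset.mem_univ, true_and] at hx ⊢
    have := quadraticChar_eq_pow_of_char_ne_two' hc2 (G.eval x)
    rw [hx, hhalf] at this
    simpa using this.symm
  set P := Finset.univ.filter fun x : K => quadraticChar K (F.eval x) = 1 with hP
  set Nn := Finset.univ.filter fun x : K => quadraticChar K (F.eval x) = -1 with hN
  set Z := Finset.univ.filter fun x : K => F.eval x = 0 with hZ
  have hPc : P.card ≤ (m + 2 * g + 2) * (2 * m + 1) := hplus F hF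
  have hNc : Nn.card ≤ (m + 2 * g + 2) * (2 * m + 1) := by
    obtain ⟨e, he⟩ := FiniteField.exists_nonsquare hc2
    have he' := quadraticChar_neg_one_iff_not_isSquare.2 he
    have he0 : e ≠ 0 := by
      rintro rfl
      exact he (IsSquare.zero)
    have := hplus (C e * F) (by rw [natDegree_C_mul he0, hF])
    refine le_trans (Finset.card_le_card ?_) this
    intro x hx
    simp only [hN, Finset.mem_filter, Finset.mem_univ, true_and] at hx ⊢
    rw [eval_mul, eval_C, map_mul, he', hx]
    norm_num
  have hZc : Z.card ≤ 2 * g + 1 := by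
    calc Z.card ≤ F.roots.toFinset.card := Finset.card_le_card (by
          intro x hx
          simpa [hZ, hF0] using hx)
      _ ≤ F.roots.card := Multiset.toFinset_card_le _
      _ ≤ _ := hF ▸ card_roots' _
  have hdich : ∀ x : K, (F.eval x = 0 ∧ quadraticChar K (F.eval x) = 0) ∨
      (F.eval x ≠ 0 ∧ quadraticChar K (F.eval x) = 1) ∨
      (F.eval x ≠ 0 ∧ quadraticChar K (F.eval x) = -1) := by
    intro x
    by_cases h : F.eval x = 0
    · left; simp [h]
    · right
      rcases quadraticChar_dichotomy h with h1 | h1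
      · exact Or.inl ⟨h, h1⟩
      · exact Or.inr ⟨h, h1⟩
  have hsum : ∑ x : K, quadraticChar K (F.eval x) = (P.card : ℤ) - Nn.card := by
    rw [hP, hN, Finset.card_filter, Finset.card_filter]
    push_cast
    rw [← Finset.sum_sub_distrib]
    refine Finset.sum_congr rfl fun x _ => ?_
    rcases hdich x with ⟨_, h⟩ | ⟨_, h⟩ | ⟨_, h⟩ <;> rw [h] <;> simp
    all_goals norm_num
  have htot : (Fintype.card K : ℤ) = P.card + Nn.card + Z.card := by
    rw [hP, hN, hZ, Finset.card_filter, Finset.card_filter, Finset.card_filter, Fintype.card,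
      Finset.card_eq_sum_ones]
    push_cast
    rw [← Finset.sum_add_distrib, ← Finset.sum_add_distrib]
    refine Finset.sum_congr rfl fun x _ => ?_
    rcases hdich x with ⟨h', h⟩ | ⟨h', h⟩ | ⟨h', h⟩ <;> rw [h] <;> simp [h']
    all_goals norm_num
  have hr' : (p ^ k : ℤ) = 2 * m + 1 := by exact_mod_cast hr
  rw [hcard] at htot
  push_cast at htot
  rw [hr'] at htot ⊢
  rw [hsum, abs_le]
  zify at hPc hNc hZc
  constructor <;> nlinarith

open Polynomial in
theorem weil_even {K : Type*} [Field K] [Fintype K] [DecidableEq K] (p k : ℕ) [Fact p.Prime]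
    [CharP K p] (m g : ℕ) (hr : p ^ k = 2 * m + 1) (hcard : Fintype.card K = (p ^ k) ^ 2)
    (F : K[X]) (hF : F.natDegree = 2 * g + 2) (h0 : F.coeff 0 = 0) (h1 : F.coeff 1 ≠ 0)
    (hmg : g < m) :
    |∑ x : K, quadraticChar K (F.eval x)| ≤ (4 * g + 3) * (p ^ k : ℤ) + (2 * g + 2) := by
  classical
  have hF0 : F ≠ 0 := by
    rintro rfl
    simp at hF
  have htr : F.natTrailingDegree = 1 := by
    apply le_antisymm (natTrailingDegree_le_of_ne_zero h1)
    rw [Nat.one_le_iff_ne_zero]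
    intro h
    rw [natTrailingDegree_eq_zero] at h
    exact h.elim hF0 (fun h => h h0)
  have hG : F.reverse.natDegree = 2 * g + 1 := by
    rw [reverse_natDegree, hF, htr]
    omega
  have hb := weil_odd p k m g hr hcard F.reverse hG hmg
  have hval : ∀ x : K, x ≠ 0 →
      quadraticChar K (F.eval x) = quadraticChar K (F.reverse.eval x⁻¹) := by
    intro x hx
    letI := invertibleOfNonzero hx
    have h := eval₂_reverse_mul_pow (RingHom.id K) x F
    rw [invOf_eq_inv, hF] at h
    change eval x⁻¹ F.reverse * x ^ (2 * g + 2) = eval x F at h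
    rw [← h, map_mul, show x ^ (2 * g + 2) = (x ^ (g + 1)) ^ 2 by ring,
      quadraticChar_sq_one' (pow_ne_zero _ hx), mul_one]
  have hs : ∑ x : K, quadraticChar K (F.eval x)
      = (∑ x : K, quadraticChar K (F.reverse.eval x)) - quadraticChar K (F.reverse.eval 0) := by
    rw [← Equiv.sum_comp (Equiv.inv K) (fun x => quadraticChar K (F.reverse.eval x)), ]
    rw [← Finset.add_sum_erase _ _ (Finset.mem_univ (0 : K)),
      ← Finset.add_sum_erase _ (fun i => quadraticChar K (F.reverse.eval _)) (Finset.mem_univ (0 : K))]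
    have : F.eval 0 = 0 := by rw [← coeff_zero_eq_eval_zero, h0]
    rw [this]
    simp only [Equiv.inv_apply, inv_zero, MulChar.map_zero, zero_add, add_sub_cancel_left]
    refine Finset.sum_congr rfl fun x hx => hval x (Finset.ne_of_mem_erase hx)
  have hq : |quadraticChar K (F.reverse.eval 0)| ≤ 1 := by
    by_cases h : F.reverse.eval 0 = 0
    · simp [h]
    · rcases quadraticChar_dichotomy h with h1 | h1 <;> rw [h1] <;> simp
  rw [hs]
  refine (abs_sub _ _).trans ?_
  linarith

open Polynomial in
theorem weil_artin_schreier {K : Type*} [Field K] [Fintype K] [DecidableEq K] (p k : ℕ)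
    [Fact p.Prime] [Algebra (ZMod p) K] (hp2 : p ≠ 2)
    (hcard : Fintype.card K = (p ^ k) ^ 2) (T : Finset (ZMod p)) (hT : (0 : ZMod p) ∈ T)
    (hk : p * T.card < p ^ k) :
    |∑ z : K, quadraticChar K (∏ c ∈ T, (z ^ p - z - algebraMap (ZMod p) K c))|
      ≤ (3 * p * T.card + 3) * (p ^ k : ℤ) := by
  classical
  haveI : CharP K p := charP_of_injective_algebraMap (algebraMap (ZMod p) K).injective p
  have hp : p.Prime := Fact.out
  have hp1 : 1 < p := hp.one_lt
  have hodd : Odd (p ^ k) := (hp.odd_of_ne_two hp2).pow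
  obtain ⟨m, hm⟩ := hodd
  set F : K[X] := ∏ c ∈ T, (X ^ p - X - C (algebraMap (ZMod p) K c)) with hFdef
  have hfac : ∀ c : K, (X ^ p - X - C c : K[X]).natDegree = p := by
    intro c
    rw [natDegree_sub_C]
    exact FiniteField.X_pow_card_sub_X_natDegree_eq K hp1
  have hfac0 : ∀ c : K, (X ^ p - X - C c : K[X]) ≠ 0 := by
    intro c h
    have := hfac c
    rw [h, natDegree_zero] at this
    omega
  have hFdeg : F.natDegree = p * T.card := by
    rw [hFdef, natDegree_prod _ _ (fun c _ => hfac0 _)]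
    simp [hfac, mul_comm]
  have hev : ∀ z : K, ∏ c ∈ T, (z ^ p - z - algebraMap (ZMod p) K c) = F.eval z := by
    intro z
    simp [hFdef, eval_prod]
  simp only [hev]
  have hTpos : 0 < T.card := Finset.card_pos.2 ⟨_, hT⟩
  have hD : 2 ≤ p * T.card := by nlinarith
  have hpk : (p ^ k : ℤ) = 2 * m + 1 := by exact_mod_cast hm
  rcases Nat.even_or_odd' (p * T.card) with ⟨g, hg | hg⟩
  · obtain ⟨g, rfl⟩ : ∃ g', g = g' + 1 := ⟨g - 1, by omega⟩
    have hsplit : F = X * ((X ^ (p - 1) - 1) *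
        ∏ c ∈ T.erase 0, (X ^ p - X - C (algebraMap (ZMod p) K c))) := by
      rw [hFdef, ← Finset.mul_prod_erase _ _ hT]
      obtain ⟨q, hq⟩ : ∃ q, p = q + 1 := ⟨p - 1, by omega⟩
      simp only [map_zero, sub_zero, hq, Nat.add_sub_cancel]
      ring
    have h0 : F.coeff 0 = 0 := by rw [hsplit, coeff_X_mul_zero]
    have h1 : F.coeff 1 ≠ 0 := by
      rw [hsplit, coeff_X_mul, coeff_zero_eq_eval_zero, eval_mul, eval_prod]
      refine mul_ne_zero ?_ (Finset.prod_ne_zero_iff.2 fun c hc => ?_)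
      · simp [zero_pow (show p - 1 ≠ 0 by omega)]
      · have := Finset.ne_of_mem_erase hc
        simpa [hp.ne_zero] using this
    have := weil_even p k m g hm hcard F (by rw [hFdeg, hg]; ring) h0 h1 (by omega)
    refine this.trans ?_
    have hg' : (p : ℤ) * T.card = 2 * (g + 1) := by exact_mod_cast hg
    rw [mul_assoc 3, hg', hpk]
    nlinarith
  · have := weil_odd p k m g hm hcard F (by rw [hFdeg, hg]) (by omega)
    refine this.trans ?_
    have hg' : (p : ℤ) * T.card = 2 * g + 1 := by exact_mod_cast hg
    rw [mul_assoc 3, hg', hpk]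
    nlinarith

theorem quadraticChar_norm {K : Type*} [Field K] [Fintype K] [DecidableEq K] (p : ℕ)
    [Fact p.Prime] [Algebra (ZMod p) K] (hp2 : p ≠ 2) (u : K) :
    quadraticChar (ZMod p) (Algebra.norm (ZMod p) u) = quadraticChar K u := by
  have : CharP K p := charP_of_injective_algebraMap (algebraMap (ZMod p) K).injective p
  have hp : p.Prime := Fact.out
  have hc2 : ringChar K ≠ 2 := by rwa [ringChar.eq K p]
  have hc2' : ringChar (ZMod p) ≠ 2 := by rwa [ringChar.eq (ZMod p) p]
  by_cases hu : u = 0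
  · simp [hu, Algebra.norm_zero]
  have hNu : Algebra.norm (ZMod p) u ≠ 0 := (Algebra.norm_ne_zero_iff).2 hu
  have h1 := quadraticChar_eq_pow_of_char_ne_two' hc2 u
  have h2 := congrArg (algebraMap (ZMod p) K)
    (quadraticChar_eq_pow_of_char_ne_two' hc2' (Algebra.norm (ZMod p) u))
  rw [map_intCast, map_pow, FiniteField.algebraMap_norm_eq_pow, ← pow_mul, ZMod.card,
    Nat.card_zmod, Nat.card_eq_fintype_card] at h2
  have h3 : (Fintype.card K - 1) / (p - 1) * (p / 2) = Fintype.card K / 2 := by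
    obtain ⟨s, hs⟩ := hp.odd_of_ne_two hp2
    have hcard := Module.card_eq_pow_finrank (K := ZMod p) (V := K)
    rw [ZMod.card] at hcard
    have hdvd : p - 1 ∣ Fintype.card K - 1 := by
      rw [hcard]
      exact Nat.sub_one_dvd_pow_sub_one p _
    obtain ⟨t, ht⟩ := hdvd
    have hpos : 0 < Fintype.card K := Fintype.card_pos
    have e1 : p - 1 = 2 * s := by omega
    have e2 : p / 2 = s := by omega
    have hs0 : 0 < s := by
      have := hp.two_le
      omega
    rw [ht, e1, e2, Nat.mul_div_cancel_left _ (by omega)]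
    rw [e1] at ht
    have : Fintype.card K = 2 * (t * s) + 1 := by
      have : 2 * s * t = 2 * (t * s) := by ring
      omega
    omega
  rw [h3, ← h1] at h2
  refine Int.cast_injOn_of_ringChar_ne_two hc2 ?_ ?_ h2
  · rcases quadraticChar_dichotomy hNu with h | h <;> rw [h] <;> simp
  · rcases quadraticChar_dichotomy hu with h | h <;> rw [h] <;> simp

open Polynomial in
theorem artin_schreier_count {K : Type*} [Field K] [Fintype K] [DecidableEq K] (p : ℕ)
    [Fact p.Prime] [Algebra (ZMod p) K] (x : K) :
    (Finset.univ.filter fun z : K => z ^ p - z = x).card =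
      if Algebra.trace (ZMod p) K x = 0 then p else 0 := by
  classical
  have : CharP K p := charP_of_injective_algebraMap (algebraMap (ZMod p) K).injective p
  have hp : p.Prime := Fact.out
  have hp1 : 1 < p := hp.one_lt
  set c : K → ℕ := fun x => (Finset.univ.filter fun z : K => z ^ p - z = x).card with hc
  have hle : ∀ x, c x ≤ p := by
    intro x
    have hdeg : (X ^ p - X - C x : K[X]).natDegree = p := by
      rw [natDegree_sub_C]
      exact FiniteField.X_pow_card_sub_X_natDegree_eq K hp1
    have h0 : (X ^ p - X - C x : K[X]) ≠ 0 := by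
      intro h
      rw [h, natDegree_zero] at hdeg
      omega
    calc c x ≤ (X ^ p - X - C x : K[X]).roots.toFinset.card := Finset.card_le_card (by
          intro z hz
          have : z ^ p - z = x := by simpa using hz
          rw [Multiset.mem_toFinset, mem_roots h0]
          simp [this])
      _ ≤ (X ^ p - X - C x : K[X]).roots.card := Multiset.toFinset_card_le _
      _ ≤ (X ^ p - X - C x : K[X]).natDegree := card_roots' _
      _ = p := hdeg
  have htr : ∀ z : K, Algebra.trace (ZMod p) K (z ^ p - z) = 0 := by
    intro z
    rw [map_sub, sub_eq_zero]
    have := Algebra.trace_eq_of_algEquiv (FiniteField.frobeniusAlgEquivOfAlgebraic (ZMod p) K) z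
    simpa [ZMod.card] using this
  have hne : ∀ x, Algebra.trace (ZMod p) K x ≠ 0 → c x = 0 := by
    intro x hx
    rw [hc]
    simp only [Finset.card_eq_zero, Finset.filter_eq_empty_iff, Finset.mem_univ, true_implies]
    rintro z rfl
    exact hx (htr z)
  have htot : ∑ x, c x = Fintype.card K := by
    rw [Fintype.card, Finset.card_eq_sum_card_fiberwise (f := fun z : K => z ^ p - z)
      (t := Finset.univ) (by simp)]
  set Z := Finset.univ.filter fun x : K => Algebra.trace (ZMod p) K x = 0 with hZ
  have hker : Z.card * p = Fintype.card K := by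
    have h1 := Submodule.card_eq_card_quotient_mul_card (LinearMap.ker (Algebra.trace (ZMod p) K))
    have h2 := Nat.card_congr ((Algebra.trace (ZMod p) K).quotKerEquivOfSurjective
      (Algebra.trace_surjective (ZMod p) K)).toEquiv
    rw [h2, Nat.card_zmod, Nat.card_eq_fintype_card] at h1
    rw [h1]
    congr 1
    rw [Nat.card_eq_fintype_card, hZ]
    exact (Fintype.card_of_subtype _ (by simp)).symm
  have hsumZ : ∑ x ∈ Z, c x = ∑ x ∈ Z, p := by
    rw [Finset.sum_const, smul_eq_mul, hker, ← htot]
    apply Finset.sum_subset (Finset.subset_univ _)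
    intro x _ hx
    apply hne
    simpa [hZ] using hx
  have heq := (Finset.sum_eq_sum_iff_of_le (fun x _ => hle x)).1 hsumZ
  change c x = _
  split_ifs with h
  · exact heq x (by simpa [hZ] using h)
  · exact hne x h

noncomputable def extSum (p : ℕ) [Fact p.Prime] (T : Finset (ZMod p)) (a : ZMod p)
    (K : Type*) [Field K] [Fintype K] [Algebra (ZMod p) K] : ℂ :=
  ∑ x : K, ((quadraticChar (ZMod p)
      (Algebra.norm (ZMod p) (∏ c ∈ T, (x - algebraMap (ZMod p) K c))) : ℤ) : ℂ) *
    ZMod.stdAddChar (a * Algebra.trace (ZMod p) K x)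

theorem sum_extSum (p : ℕ) [Fact p.Prime] (hp2 : p ≠ 2) (T : Finset (ZMod p))
    (K : Type*) [Field K] [Fintype K] [DecidableEq K] [Algebra (ZMod p) K] :
    ∑ a : ZMod p, extSum p T a K =
      ((∑ z : K, quadraticChar K (∏ c ∈ T, (z ^ p - z - algebraMap (ZMod p) K c)) : ℤ) : ℂ) := by
  unfold extSum
  rw [Finset.sum_comm]
  simp only [← Finset.mul_sum, quadraticChar_norm p hp2]
  simp only [AddChar.sum_mulShift _ (ZMod.isPrimitive_stdAddChar p), ZMod.card]
  push_cast
  conv_rhs => rw [← Finset.sum_fiberwise (s := Finset.univ) (g := fun z : K => z ^ p - z)]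
  refine Finset.sum_congr rfl fun x _ => ?_
  have : ∀ z ∈ Finset.univ.filter (fun z : K => z ^ p - z = x),
      ((quadraticChar K (∏ c ∈ T, (z ^ p - z - algebraMap (ZMod p) K c)) : ℤ) : ℂ)
      = ((quadraticChar K (∏ c ∈ T, (x - algebraMap (ZMod p) K c)) : ℤ) : ℂ) := by
    intro z hz
    simp only [Finset.mem_filter, Finset.mem_univ, true_and] at hz
    rw [hz]
  rw [Finset.sum_congr rfl this, Finset.sum_const, artin_schreier_count, nsmul_eq_mul, mul_comm]
  push_cast
  rfl

theorem norm_le_of_power_sums {ι : Type*} [Fintype ι] (z : ι → ℂ) (B R : ℝ) (hR : 0 < R) (k₀ : ℕ)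
    (h : ∀ k, k₀ ≤ k → ‖∑ i, z i ^ k‖ ≤ B * R ^ k) (j : ι) : ‖z j‖ ≤ R := by
  classical
  by_contra! hlt
  -- unimodular parts
  let u : ι → ℂ := fun i => if z i = 0 then 1 else z i / ‖z i‖
  have hu : ∀ i, ‖u i‖ = 1 := by
    intro i
    by_cases hi : z i = 0
    · simp [u, hi]
    · simp [u, hi]
  have hzu : ∀ i, z i = ‖z i‖ * u i := by
    intro i
    by_cases hi : z i = 0
    · simp [hi]
    · have : (‖z i‖ : ℂ) ≠ 0 := by simpa using hi
      simp only [u, hi, if_false]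
      field_simp
  have hrec : ∀ n₀ : ℕ, ∃ n, n₀ ≤ n ∧ ∀ i, ‖u i ^ n - 1‖ ≤ 1 / 2 := by
    intro n₀
    have hcomp : IsCompact (Metric.closedBall (0 : ι → ℂ) 1) := isCompact_closedBall _ _
    obtain ⟨a, -, φ, hφ, hlim⟩ := hcomp.tendsto_subseq (x := fun n i => u i ^ n) (by
      intro n
      rw [mem_closedBall_zero_iff, pi_norm_le_iff_of_nonneg zero_le_one]
      intro i
      simp [hu])
    have hc := Metric.cauchySeq_iff.1 hlim.cauchySeq (1 / 2) (by norm_num)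
    obtain ⟨N, hN⟩ := hc
    have hd := hN (N + n₀) (by simp) N (le_refl _)
    have hge : φ N + n₀ ≤ φ (N + n₀) := by
      clear hd
      induction n₀ with
      | zero => simp
      | succ n ih =>
        have := hφ (show N + n < N + (n + 1) by omega)
        omega
    refine ⟨φ (N + n₀) - φ N, by omega, fun i => ?_⟩
    rw [dist_eq_norm] at hd
    have h1 := (norm_le_pi_norm _ i).trans hd.le
    simp only [Function.comp, Pi.sub_apply] at h1
    have h2 : u i ^ φ (N + n₀) - u i ^ φ N = (u i ^ (φ (N + n₀) - φ N) - 1) * u i ^ φ N := by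
      rw [sub_mul, ← pow_add, one_mul, Nat.sub_add_cancel (by omega)]
    rw [h2, norm_mul, norm_pow, hu, one_pow, mul_one] at h1
    exact h1
  have hkey : ∀ n₀ : ℕ, ∃ n, n₀ ≤ n ∧ (‖z j‖ / R) ^ n ≤ 2 * B := by
    intro n₀
    obtain ⟨n, hn, hn'⟩ := hrec (max n₀ k₀)
    refine ⟨n, (le_max_left _ _).trans hn, ?_⟩
    have hb := h n ((le_max_right _ _).trans hn)
    have hre : ∀ i, ‖z i‖ ^ n / 2 ≤ (z i ^ n).re := by
      intro i
      have h1 : z i ^ n = ((‖z i‖ ^ n : ℝ) : ℂ) * u i ^ n := by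
        conv_lhs => rw [hzu i, mul_pow]
        push_cast
        rfl
      rw [h1, Complex.re_ofReal_mul]
      have h2 : 1 / 2 ≤ (u i ^ n).re := by
        have := (Complex.abs_re_le_norm _).trans (hn' i)
        rw [Complex.sub_re, Complex.one_re, abs_le] at this
        linarith
      have h3 : 0 ≤ ‖z i‖ ^ n := by positivity
      nlinarith
    have h4 : ‖z j‖ ^ n / 2 ≤ B * R ^ n := by
      calc ‖z j‖ ^ n / 2 ≤ ∑ i, ‖z i‖ ^ n / 2 :=
            Finset.single_le_sum (f := fun i => ‖z i‖ ^ n / 2) (fun i _ => by positivity)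
              (Finset.mem_univ j)
        _ ≤ ∑ i, (z i ^ n).re := Finset.sum_le_sum fun i _ => hre i
        _ = (∑ i, z i ^ n).re := (Complex.re_sum _ _).symm
        _ ≤ ‖∑ i, z i ^ n‖ := Complex.re_le_norm _
        _ ≤ _ := hb
    rw [div_pow, div_le_iff₀ (by positivity)]
    linarith
  have h1 : 1 < ‖z j‖ / R := (one_lt_div hR).2 hlt
  obtain ⟨N, hN⟩ := (Filter.tendsto_atTop.1 (tendsto_pow_atTop_atTop_of_one_lt h1)
    (2 * B + 1)).exists_forall_of_atTop
  obtain ⟨n, hn, hn'⟩ := hkey N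
  linarith [hN n hn]

open Polynomial in
theorem factor_one_sub (d : ℕ) (L : ℂ[X]) (hd : L.natDegree ≤ d) (h0 : L.coeff 0 = 1) :
    ∃ ω : Fin d → ℂ, L = ∏ i, (1 - C (ω i) * X) := by
  induction d generalizing L with
  | zero =>
    refine ⟨Fin.elim0, ?_⟩
    rw [eq_C_of_natDegree_le_zero hd, h0]
    simp
  | succ d ih =>
    by_cases hdeg : L.natDegree = 0
    · refine ⟨fun _ => 0, ?_⟩
      rw [eq_C_of_natDegree_le_zero hdeg.le, h0]
      simp
    · obtain ⟨x, hx⟩ := IsAlgClosed.exists_root L (by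
        intro h
        exact hdeg (natDegree_eq_of_degree_eq_some h))
      obtain ⟨M, hM⟩ := dvd_iff_isRoot.2 hx
      have hc : L.coeff 0 = -x * M.coeff 0 := by rw [hM]; simp [mul_coeff_zero]
      rw [h0] at hc
      have hx0 : x ≠ 0 := by rintro rfl; simp at hc
      have hM0 : M ≠ 0 := by rintro rfl; simp at hc
      have hLM : L = (1 - C x⁻¹ * X) * (C (-x) * M) := by
        rw [hM]
        have : (C x⁻¹ * C x : ℂ[X]) = 1 := by rw [← C_mul, inv_mul_cancel₀ hx0, C_1]
        rw [C_neg]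
        linear_combination (-X * M) * this
      obtain ⟨ω, hω⟩ := ih (C (-x) * M) (by
        rw [natDegree_C_mul (neg_ne_zero.2 hx0)]
        rw [hM, natDegree_mul (X_sub_C_ne_zero x) hM0, natDegree_X_sub_C] at hd
        omega) (by rw [coeff_C_mul, ← hc])
      refine ⟨Fin.cons x⁻¹ ω, ?_⟩
      rw [Fin.prod_univ_succ]
      simp only [Fin.cons_zero, Fin.cons_succ]
      rw [← hω, hLM]

open Polynomial in
theorem power_sums_of_rec (d : ℕ) (A S : ℕ → ℂ) (hA0 : A 0 = 1) (hA : ∀ n, d < n → A n = 0)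
    (hrec : ∀ n : ℕ, (n : ℂ) * A n = ∑ ij ∈ Finset.HasAntidiagonal.antidiagonal n, S ij.1 * A ij.2) :
    ∃ ω : Fin d → ℂ, ∀ n, 1 ≤ n → S n = -∑ i, ω i ^ n := by
  classical
  set L : ℂ[X] := ∑ n ∈ Finset.range (d + 1), C (A n) * X ^ n with hL
  have hcoef : ∀ n, L.coeff n = A n := by
    intro n
    rw [hL, finsetSum_coeff]
    simp only [coeff_C_mul_X_pow]
    rw [Finset.sum_ite_eq]
    split_ifs with h
    · rfl
    · rw [hA n (by simpa using h)]
  obtain ⟨ω, hω⟩ := factor_one_sub d L (by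
    rw [natDegree_le_iff_coeff_eq_zero]
    intro n hn
    rw [hcoef, hA n hn]) (by rw [hcoef, hA0])
  refine ⟨ω, ?_⟩
  let G : ℂ → PowerSeries ℂ := fun w => PowerSeries.mk fun n => if n = 0 then 0 else - w ^ n
  have hG : ∀ w, ((1 - C w * X : ℂ[X]) : PowerSeries ℂ) * G w = ((- C w * X : ℂ[X]) : PowerSeries ℂ) := by
    intro w
    ext n
    simp only [Polynomial.coe_sub, Polynomial.coe_one, Polynomial.coe_mul, Polynomial.coe_C,
      Polynomial.coe_X, sub_mul, one_mul, map_sub, Polynomial.coe_neg, mul_assoc,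
      PowerSeries.coeff_C_mul, neg_mul, map_neg]
    rcases n with _ | _ | n
    · simp [G]
    · simp [G, PowerSeries.coeff_succ_X_mul]
    · simp [G, PowerSeries.coeff_succ_X_mul, PowerSeries.coeff_X, pow_succ]
      ring
  have hder : ∀ s : Finset (Fin d), ((X * derivative (∏ i ∈ s, (1 - C (ω i) * X)) : ℂ[X]) : PowerSeries ℂ)
      = ((∏ i ∈ s, (1 - C (ω i) * X) : ℂ[X]) : PowerSeries ℂ) * ∑ i ∈ s, G (ω i) := by
    intro s
    induction s using Finset.induction_on with
    | empty => simp
    | insert i s hi ih =>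
      rw [Finset.prod_insert hi, Finset.sum_insert hi, derivative_mul, mul_add]
      rw [show (X * (derivative (1 - C (ω i) * X) * ∏ i ∈ s, (1 - C (ω i) * X)) +
        X * ((1 - C (ω i) * X) * derivative (∏ i ∈ s, (1 - C (ω i) * X))) : ℂ[X])
        = (- C (ω i) * X) * (∏ i ∈ s, (1 - C (ω i) * X)) + (1 - C (ω i) * X) *
          (X * derivative (∏ i ∈ s, (1 - C (ω i) * X))) by
          simp only [derivative_sub, derivative_one, derivative_mul, derivative_C, derivative_X]
          ring]
      rw [Polynomial.coe_add, Polynomial.coe_mul, Polynomial.coe_mul (1 - C (ω i) * X), ih, ← hG,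
        Polynomial.coe_mul]
      ring
  have hfin := hder Finset.univ
  rw [← hω] at hfin
  set S' : ℕ → ℂ := fun n => if n = 0 then 0 else -∑ i, ω i ^ n with hS'
  have hGsum : ∀ n, PowerSeries.coeff n (∑ i, G (ω i)) = S' n := by
    intro n
    rw [map_sum]
    by_cases h : n = 0
    · simp [G, hS', h]
    · simp [G, hS', h]
  have hrec' : ∀ n : ℕ, (n : ℂ) * A n = ∑ ij ∈ Finset.HasAntidiagonal.antidiagonal n, S' ij.1 * A ij.2 := by
    intro n
    have := congrArg (PowerSeries.coeff n) hfin
    rw [mul_comm (L : PowerSeries ℂ), PowerSeries.coeff_mul, Polynomial.coeff_coe] at this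
    simp only [hGsum, Polynomial.coeff_coe, hcoef] at this
    rw [← this]
    rcases n with _ | n
    · simp
    · rw [coeff_X_mul, coeff_derivative, hcoef]
      push_cast
      ring
  have hSS : ∀ n, S n = S' n := by
    intro n
    induction n using Nat.strong_induction_on with
    | _ n ih =>
      have h1 := (hrec n).symm.trans (hrec' n)
      rw [← Finset.add_sum_erase _ _ (show (n, 0) ∈ Finset.HasAntidiagonal.antidiagonal n by simp),
        ← Finset.add_sum_erase (Finset.HasAntidiagonal.antidiagonal n) (fun ij => S' ij.1 * A ij.2)
          (show (n, 0) ∈ Finset.HasAntidiagonal.antidiagonal n by simp)] at h1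
      have h2 : ∑ ij ∈ (Finset.HasAntidiagonal.antidiagonal n).erase (n, 0), S ij.1 * A ij.2
          = ∑ ij ∈ (Finset.HasAntidiagonal.antidiagonal n).erase (n, 0), S' ij.1 * A ij.2 := by
        refine Finset.sum_congr rfl fun ij hij => ?_
        rw [Finset.mem_erase, Finset.HasAntidiagonal.mem_antidiagonal] at hij
        rw [ih ij.1 (by
          rcases ij with ⟨a, b⟩
          simp only [ne_eq, Prod.mk.injEq, not_and] at hij ⊢
          omega)]
      rw [h2] at h1
      have h3 := add_right_cancel h1
      simpa [hA0] using h3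
  intro n hn
  rw [hSS n, hS']
  simp [show n ≠ 0 by omega]

section Lfunction
open Polynomial

variable {p : ℕ} [Fact p.Prime]

/-- The completely multiplicative character on monic polynomials. -/
noncomputable def chi (T : Finset (ZMod p)) (a : ZMod p) (g : (ZMod p)[X]) : ℂ :=
  ((quadraticChar (ZMod p) (∏ c ∈ T, ((-1) ^ g.natDegree * g.eval c)) : ℤ) : ℂ) *
    ZMod.stdAddChar (a * -g.nextCoeff)

theorem chi_one (T : Finset (ZMod p)) (a : ZMod p) : chi T a 1 = 1 := by
  have : (1 : (ZMod p)[X]).nextCoeff = 0 := by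
    rw [← C_1, nextCoeff_C_eq_zero]
  simp only [chi, this]
  simp

theorem chi_mul (T : Finset (ZMod p)) (a : ZMod p) {g h : (ZMod p)[X]} (hg : g.Monic)
    (hh : h.Monic) : chi T a (g * h) = chi T a g * chi T a h := by
  unfold chi
  rw [hg.nextCoeff_mul hh, hg.natDegree_mul hh, neg_add, mul_add, AddChar.map_add_eq_mul]
  have : ∏ c ∈ T, ((-1) ^ (g.natDegree + h.natDegree) * (g * h).eval c)
      = (∏ c ∈ T, ((-1) ^ g.natDegree * g.eval c)) * ∏ c ∈ T, ((-1) ^ h.natDegree * h.eval c) := by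
    rw [← Finset.prod_mul_distrib]
    refine Finset.prod_congr rfl fun c _ => ?_
    rw [eval_mul, pow_add]
    ring
  rw [this, map_mul]
  push_cast
  ring

theorem chi_pow (T : Finset (ZMod p)) (a : ZMod p) {g : (ZMod p)[X]} (hg : g.Monic) (e : ℕ) :
    chi T a (g ^ e) = chi T a g ^ e := by
  induction e with
  | zero => simp [chi_one]
  | succ e ih => rw [pow_succ, chi_mul T a (hg.pow e) hg, ih, pow_succ]

open IntermediateField in
theorem norm_eq_minpoly {K : Type*} [Field K] [Finite K] [Algebra (ZMod p) K] (y : K) (m e : ℕ)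
    (hm : (minpoly (ZMod p) y).natDegree = m) (hm0 : 0 < m)
    (he : m * e = Module.finrank (ZMod p) K) :
    Algebra.norm (ZMod p) y = ((-1) ^ m * (minpoly (ZMod p) y).coeff 0) ^ e := by
  have hy : IsIntegral (ZMod p) y := .of_finite _ y
  have h1 := Module.finrank_mul_finrank (ZMod p) (ZMod p)⟮y⟯ K
  rw [adjoin.finrank hy, hm, ← he] at h1
  have h2 : Module.finrank (ZMod p)⟮y⟯ K = e := Nat.eq_of_mul_eq_mul_left hm0 h1
  rw [Algebra.norm_eq_norm_adjoin, h2]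
  congr 1
  have h3 := Algebra.PowerBasis.norm_gen_eq_coeff_zero_minpoly (adjoin.powerBasis hy)
  rw [adjoin.powerBasis_gen, adjoin.powerBasis_dim, minpoly_gen, hm] at h3
  exact h3

open IntermediateField in
theorem ext_term_eq {K : Type*} [Field K] [Finite K] [Algebra (ZMod p) K]
    (T : Finset (ZMod p)) (a : ZMod p) (x : K) (e : ℕ)
    (he : (minpoly (ZMod p) x).natDegree * e = Module.finrank (ZMod p) K) :
    ((quadraticChar (ZMod p)
      (Algebra.norm (ZMod p) (∏ c ∈ T, (x - algebraMap (ZMod p) K c))) : ℤ) : ℂ) *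
    ZMod.stdAddChar (a * Algebra.trace (ZMod p) K x) = chi T a (minpoly (ZMod p) x ^ e) := by
  have hx : IsIntegral (ZMod p) x := .of_finite _ x
  have hm0 : 0 < (minpoly (ZMod p) x).natDegree := minpoly.natDegree_pos hx
  have hmon := minpoly.monic hx
  rw [chi_pow T a hmon, chi, mul_pow, ← AddChar.map_nsmul_eq_pow, ← Int.cast_pow, ← map_pow,
    ← Finset.prod_pow, map_prod]
  congr 1
  · refine congrArg _ ?_
    refine congrArg _ (Finset.prod_congr rfl fun c _ => ?_)
    have hd : (minpoly (ZMod p) (x - algebraMap (ZMod p) K c)).natDegree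
        = (minpoly (ZMod p) x).natDegree := by
      rw [minpoly.sub_algebraMap, natDegree_comp, natDegree_X_add_C, mul_one]
    rw [norm_eq_minpoly _ _ e hd hm0 he, minpoly.sub_algebraMap, coeff_zero_eq_eval_zero, eval_comp]
    simp
  · congr 1
    have h1 := Module.finrank_mul_finrank (ZMod p) (ZMod p)⟮x⟯ K
    rw [adjoin.finrank hx, ← he] at h1
    have h2 : Module.finrank (ZMod p)⟮x⟯ K = e := Nat.eq_of_mul_eq_mul_left hm0 h1
    rw [trace_eq_finrank_mul_minpoly_nextCoeff, h2, nsmul_eq_mul]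
    ring

theorem monic_set_finite (p : ℕ) [Fact p.Prime] (n : ℕ) :
    {g : (ZMod p)[X] | g.Monic ∧ g.natDegree = n}.Finite := by
  have h : Finite (degreeLT (ZMod p) n) := Finite.of_equiv _ (degreeLTEquiv (ZMod p) n).symm.toEquiv
  exact Finite.of_equiv _ (monicEquivDegreeLT (R := ZMod p) n).symm

/-- The monic polynomials of degree `n`. -/
noncomputable def monics (p : ℕ) [Fact p.Prime] (n : ℕ) : Finset (ZMod p)[X] :=
  (monic_set_finite p n).toFinset

theorem mem_monics {n : ℕ} {g : (ZMod p)[X]} : g ∈ monics p n ↔ g.Monic ∧ g.natDegree = n := by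
  simp [monics]

/-- Coefficients of the `L`-function. -/
noncomputable def Lcoeff (T : Finset (ZMod p)) (a : ZMod p) (n : ℕ) : ℂ :=
  ∑ g ∈ monics p n, chi T a g

theorem Lcoeff_zero (T : Finset (ZMod p)) (a : ZMod p) : Lcoeff T a 0 = 1 := by
  have : monics p 0 = {1} := by
    ext g
    rw [mem_monics, Finset.mem_singleton]
    constructor
    · rintro ⟨h1, h2⟩
      exact (Monic.natDegree_eq_zero h1).1 h2
    · rintro rfl
      exact ⟨monic_one, natDegree_one⟩
  rw [Lcoeff, this, Finset.sum_singleton, chi_one]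

theorem monics_add {n : ℕ} {g h : (ZMod p)[X]} (hg : g ∈ monics p n) (hh : h.degree < n) :
    g + h ∈ monics p n := by
  rw [mem_monics] at hg ⊢
  have hdeg : h.degree < g.degree := by rwa [degree_eq_natDegree hg.1.ne_zero, hg.2]
  exact ⟨hg.1.add_of_left hdeg, by rw [natDegree_add_eq_left_of_degree_lt hdeg, hg.2]⟩

theorem sum_monics_shift {n : ℕ} (h : (ZMod p)[X]) (hh : h.degree < n)
    (f : (ZMod p)[X] → ℂ) : ∑ g ∈ monics p n, f (g + h) = ∑ g ∈ monics p n, f g := by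
  refine Finset.sum_bij' (fun g _ => g + h) (fun g _ => g - h) ?_ ?_ ?_ ?_ ?_
  · intro g hg
    exact monics_add hg hh
  · intro g hg
    rw [sub_eq_add_neg]
    exact monics_add hg (by rwa [degree_neg])
  · intro g _
    simp
  · intro g _
    simp
  · intro g _
    rfl

theorem Lcoeff_eq_zero (hp2 : p ≠ 2) (T : Finset (ZMod p)) (hT : (0 : ZMod p) ∈ T) (a : ZMod p)
    (n : ℕ) (hn : T.card < n) : Lcoeff T a n = 0 := by
  classical
  by_cases ha : a = 0
  · subst ha
    set h : (ZMod p)[X] := ∏ c ∈ T.erase 0, (X - C c) with hh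
    have hh0 : h.eval 0 ≠ 0 := by
      rw [hh, eval_prod, Finset.prod_ne_zero_iff]
      intro c hc
      simpa using Finset.ne_of_mem_erase hc
    have hhc : ∀ c ∈ T.erase 0, h.eval c = 0 := by
      intro c hc
      rw [hh, eval_prod]
      exact Finset.prod_eq_zero hc (by simp)
    have hdeg : ∀ t : ZMod p, (C t * h).degree < n := by
      intro t
      refine lt_of_le_of_lt (degree_le_of_natDegree_le (natDegree_C_mul_le t h)) ?_
      have : h.natDegree = (T.erase 0).card := by
        rw [hh, natDegree_prod_of_monic _ _ (fun c _ => monic_X_sub_C c)]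
        simp
      rw [this]
      have := Finset.card_erase_lt_of_mem hT
      exact_mod_cast this.trans hn
    have hpne : (p : ℂ) ≠ 0 := by exact_mod_cast (Fact.out : p.Prime).ne_zero
    have key : (p : ℂ) * Lcoeff T 0 n = 0 := by
      have h1 : (p : ℂ) * Lcoeff T 0 n
          = ∑ t : ZMod p, ∑ g ∈ monics p n, chi T 0 (g + C t * h) := by
        rw [Finset.sum_congr rfl fun t _ => sum_monics_shift (C t * h) (hdeg t) (chi T 0)]
        simp [Lcoeff, ZMod.card]
      rw [h1, Finset.sum_comm]
      refine Finset.sum_eq_zero fun g hg => ?_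
      have h2 : ∀ t : ZMod p, chi T 0 (g + C t * h) =
          ((quadraticChar (ZMod p) ((-1) ^ n * (g.eval 0 + t * h.eval 0)) : ℤ) : ℂ) *
          ((quadraticChar (ZMod p) (∏ c ∈ T.erase 0, ((-1) ^ n * g.eval c)) : ℤ) : ℂ) := by
        intro t
        have hnd := (mem_monics.1 (monics_add hg (hdeg t))).2
        rw [chi, hnd, ← Finset.mul_prod_erase _ _ hT, map_mul]
        rw [Finset.prod_congr rfl (g := fun c => (-1) ^ n * g.eval c) (by
          intro c hc
          simp [hhc c hc])]
        simp
      rw [Finset.sum_congr rfl fun t _ => h2 t, ← Finset.sum_mul, ← Int.cast_sum]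
      have h3 : ∑ t : ZMod p, quadraticChar (ZMod p) ((-1) ^ n * (g.eval 0 + t * h.eval 0)) = 0 := by
        have hs : ((-1) ^ n : ZMod p) ≠ 0 := pow_ne_zero _ (by simp)
        let σ : ZMod p ≃ ZMod p := ((Equiv.mulRight₀ (h.eval 0) hh0).trans
          (Equiv.addLeft (g.eval 0))).trans (Equiv.mulLeft₀ ((-1) ^ n : ZMod p) hs)
        have := Equiv.sum_comp σ (fun y => quadraticChar (ZMod p) y)
        rw [quadraticChar_sum_zero (by rwa [ringChar.eq (ZMod p) p])] at this
        simpa [σ] using this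
      rw [h3]
      simp
    exact (mul_eq_zero.1 key).resolve_left hpne
  · obtain ⟨s, rfl⟩ : ∃ s, n = T.card + s + 1 := ⟨n - T.card - 1, by omega⟩
    set h : (ZMod p)[X] := X ^ s * ∏ c ∈ T, (X - C c) with hh
    have hmon : h.Monic := (monic_X_pow s).mul (monic_prod_of_monic _ _ fun c _ => monic_X_sub_C c)
    have hnat : h.natDegree = T.card + s := by
      rw [hh, (monic_X_pow s).natDegree_mul (monic_prod_of_monic _ _ fun c _ => monic_X_sub_C c),
        natDegree_prod_of_monic _ _ (fun c _ => monic_X_sub_C c)]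
      simp [add_comm]
    have hdeg : h.degree < (T.card + s + 1 : ℕ) := by
      rw [degree_eq_natDegree hmon.ne_zero, hnat]
      exact_mod_cast Nat.lt_succ_self _
    have hhc : ∀ c ∈ T, h.eval c = 0 := by
      intro c hc
      rw [hh, eval_mul, eval_prod, Finset.prod_eq_zero hc (by simp), mul_zero]
    have h1 := sum_monics_shift h hdeg (chi T a)
    have h2 : ∀ g ∈ monics p (T.card + s + 1), chi T a (g + h)
        = ZMod.stdAddChar (-a) * chi T a g := by
      intro g hg
      have hg' := mem_monics.1 hg
      have hgh := mem_monics.1 (monics_add hg hdeg)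
      have hnc : (g + h).nextCoeff = g.nextCoeff + 1 := by
        rw [nextCoeff_of_natDegree_pos (by omega), nextCoeff_of_natDegree_pos (by omega), hgh.2,
          hg'.2, coeff_add, Nat.add_sub_cancel]
        congr 1
        rw [← hnat]
        exact hmon
      rw [chi, chi, hnc, hgh.2, hg'.2, Finset.prod_congr rfl
        (g := fun c => (-1) ^ (T.card + s + 1) * g.eval c) (by
          intro c hc
          simp [hhc c hc]), show a * -(g.nextCoeff + 1) = -a + a * -g.nextCoeff by ring,
        AddChar.map_add_eq_mul]
      ring
    rw [Finset.sum_congr rfl h2, ← Finset.mul_sum] at h1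
    change _ * Lcoeff T a _ = Lcoeff T a _ at h1
    have h3 : ZMod.stdAddChar (-a) ≠ (1 : ℂ) := by
      intro h
      have := ZMod.injective_stdAddChar (N := p) (h.trans (AddChar.map_zero_eq_one _).symm)
      exact ha (neg_eq_zero.1 this)
    have h4 : (ZMod.stdAddChar (-a) - 1 : ℂ) * Lcoeff T a (T.card + s + 1) = 0 := by
      rw [sub_mul, h1]; ring
    exact (mul_eq_zero.1 h4).resolve_left (sub_ne_zero.2 h3)

end Lfunction

section Recurrence
open Polynomial
variable {p : ℕ} [Fact p.Prime]

theorem minpoly_natDegree_dvd {K : Type*} [Field K] [Finite K] [Algebra (ZMod p) K] (x : K) :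
    (minpoly (ZMod p) x).natDegree ∣ Module.finrank (ZMod p) K :=
  minpoly.degree_dvd (.of_finite _ x)

theorem fiber_card {K : Type*} [Field K] [Fintype K] [DecidableEq K] [Algebra (ZMod p) K]
    (π : (ZMod p)[X]) (hmon : π.Monic) (hirr : Irreducible π) :
    (Finset.univ.filter fun x : K => minpoly (ZMod p) x = π).card
      = if π.natDegree ∣ Module.finrank (ZMod p) K then π.natDegree else 0 := by
  classical
  split_ifs with h
  · have h1 : π ∣ X ^ (Nat.card (ZMod p)) ^ (Module.finrank (ZMod p) K) - X :=
      hirr.natDegree_dvd_iff_dvd_X_pow_card_pow_sub_X.1 h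
    have hc : (Nat.card (ZMod p)) ^ (Module.finrank (ZMod p) K) = Fintype.card K := by
      rw [Module.card_eq_pow_finrank (K := ZMod p) (V := K), Nat.card_eq_fintype_card]
    rw [hc] at h1
    have h2 : (π.map (algebraMap (ZMod p) K)).Splits := by
      have h3 : (X ^ Fintype.card K - X : K[X]).Splits := by
        rw [splits_iff_card_roots, FiniteField.roots_X_pow_card_sub_X K,
          FiniteField.X_pow_card_sub_X_natDegree_eq K Fintype.one_lt_card]
        rfl
      refine h3.of_dvd (FiniteField.X_pow_card_sub_X_ne_zero K Fintype.one_lt_card) ?_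
      have := Polynomial.map_dvd (algebraMap (ZMod p) K) h1
      simpa using this
    have h4 := card_rootSet_eq_natDegree (PerfectField.separable_of_irreducible hirr) h2
    rw [← h4, Fintype.card_subtype]
    congr 1
    ext x
    simp only [Finset.mem_filter, Finset.mem_univ, true_and]
    rw [mem_rootSet]
    constructor
    · rintro rfl
      exact ⟨hmon.ne_zero, minpoly.aeval _ _⟩
    · rintro ⟨_, hx⟩
      exact (minpoly.eq_of_irreducible_of_monic hirr hx hmon).symm
  · rw [Finset.card_eq_zero, Finset.filter_eq_empty_iff]
    rintro x _ rfl
    exact h (minpoly_natDegree_dvd x)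

noncomputable instance galoisFintype (k : ℕ) : Fintype (GaloisField p k) := Fintype.ofFinite _

/-- The power of the minimal polynomial of degree `k`. -/
noncomputable def qpoly (k : ℕ) (x : GaloisField p k) : (ZMod p)[X] :=
  minpoly (ZMod p) x ^ (k / (minpoly (ZMod p) x).natDegree)

theorem qpoly_mem (k : ℕ) (hk : k ≠ 0) (x : GaloisField p k) : qpoly k x ∈ monics p k := by
  rw [mem_monics, qpoly]
  have hx : IsIntegral (ZMod p) x := .of_finite _ x
  refine ⟨(minpoly.monic hx).pow _, ?_⟩
  rw [natDegree_pow, Nat.div_mul_cancel]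
  have := minpoly_natDegree_dvd (p := p) x
  rwa [GaloisField.finrank p hk] at this

theorem prime_pow_count (g π : (ZMod p)[X]) (hg : g.Monic) (hmon : π.Monic) (hirr : Irreducible π)
    (e : ℕ) : π ^ e ∣ g ↔ e ≤ (UniqueFactorizationMonoid.normalizedFactors g).count π := by
  have := UniqueFactorizationMonoid.emultiplicity_eq_count_normalizedFactors hirr hg.ne_zero
  rw [hmon.normalize_eq_self] at this
  rw [pow_dvd_iff_le_emultiplicity, this]
  simp

open Classical in
theorem count_factors (n : ℕ) (g : (ZMod p)[X]) (hg : g ∈ monics p n) :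
    ∑ k ∈ Finset.Icc 1 n, ∑ x : GaloisField p k, (if qpoly k x ∣ g then 1 else 0) = n := by
  classical
  rw [mem_monics] at hg
  obtain ⟨hg, hn⟩ := hg
  set s := UniqueFactorizationMonoid.normalizedFactors g with hs
  have hmem : ∀ π, π ∈ s.toFinset ↔ Irreducible π ∧ π.Monic ∧ π ∣ g := by
    intro π
    rw [Multiset.mem_toFinset, hs, Polynomial.mem_normalizedFactors_iff hg.ne_zero]
  have h1 : ∀ k ∈ Finset.Icc 1 n, ∑ x : GaloisField p k, (if qpoly k x ∣ g then 1 else 0)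
      = ∑ π ∈ s.toFinset, if π.natDegree ∣ k ∧ π ^ (k / π.natDegree) ∣ g then π.natDegree else 0 := by
    intro k hk
    have hk0 : k ≠ 0 := by
      have := (Finset.mem_Icc.1 hk).1
      omega
    rw [← Finset.card_filter, Finset.card_eq_sum_card_fiberwise
      (f := fun x => minpoly (ZMod p) x) (t := s.toFinset)]
    · refine Finset.sum_congr rfl fun π hπ => ?_
      obtain ⟨hirr, hmon, hdvd⟩ := (hmem π).1 hπ
      rw [Finset.filter_filter]
      have hf := fiber_card (K := GaloisField p k) π hmon hirr
      rw [GaloisField.finrank p hk0] at hf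
      by_cases hd : π ^ (k / π.natDegree) ∣ g
      · simp only [hd, and_true]
        rw [← hf]
        congr 1
        ext x
        rw [Finset.mem_filter, Finset.mem_filter]
        simp only [Finset.mem_univ, true_and, qpoly]
        constructor
        · exact fun h => h.2
        · rintro rfl
          exact ⟨hd, rfl⟩
      · simp only [hd, and_false, if_false]
        rw [Finset.card_eq_zero, Finset.filter_eq_empty_iff]
        rintro x _ ⟨h2, rfl⟩
        exact hd h2
    · intro x hx
      have hx' : qpoly k x ∣ g := by simpa using hx
      have hxint : IsIntegral (ZMod p) x := .of_finite _ x
      have hdk := minpoly_natDegree_dvd (p := p) x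
      rw [GaloisField.finrank p hk0] at hdk
      refine (hmem _).2 ⟨minpoly.irreducible hxint, minpoly.monic hxint, ?_⟩
      refine (dvd_pow_self _ ?_).trans hx'
      have := Nat.div_pos (Nat.le_of_dvd (Nat.pos_of_ne_zero hk0) hdk) (minpoly.natDegree_pos hxint)
      omega
  rw [Finset.sum_congr rfl h1, Finset.sum_comm]
  have h2 : ∀ π ∈ s.toFinset, (∑ k ∈ Finset.Icc 1 n,
      if π.natDegree ∣ k ∧ π ^ (k / π.natDegree) ∣ g then π.natDegree else 0)
      = s.count π * π.natDegree := by
    intro π hπ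
    obtain ⟨hirr, hmon, hdvd⟩ := (hmem π).1 hπ
    have hpos : 0 < π.natDegree := hirr.natDegree_pos
    rw [← Finset.sum_filter, Finset.sum_const, smul_eq_mul]
    congr 1
    have : (Finset.Icc 1 n).filter (fun k => π.natDegree ∣ k ∧ π ^ (k / π.natDegree) ∣ g)
        = (Finset.Icc 1 (s.count π)).image (fun e => π.natDegree * e) := by
      ext k
      simp only [Finset.mem_filter, Finset.mem_Icc, Finset.mem_image]
      constructor
      · rintro ⟨⟨hk1, hk2⟩, ⟨e, rfl⟩, h⟩
        rw [Nat.mul_div_cancel_left _ hpos, prime_pow_count g π hg hmon hirr] at h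
        refine ⟨e, ⟨?_, h⟩, rfl⟩
        rcases Nat.eq_zero_or_pos e with rfl | he
        · simp at hk1
        · exact he
      · rintro ⟨e, ⟨he1, he2⟩, rfl⟩
        rw [Nat.mul_div_cancel_left _ hpos]
        have hd := (prime_pow_count g π hg hmon hirr e).2 he2
        refine ⟨⟨Nat.mul_pos hpos he1, ?_⟩, dvd_mul_right _ _, hd⟩
        have := natDegree_le_of_dvd hd hg.ne_zero
        rw [natDegree_pow, hn] at this
        rwa [mul_comm]
    rw [this, Finset.card_image_of_injective _ (fun _ _ h => Nat.eq_of_mul_eq_mul_left hpos h)]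
    simp
  rw [Finset.sum_congr rfl h2]
  have h3 : s.prod = g := by
    have := UniqueFactorizationMonoid.prod_normalizedFactors_eq hg.ne_zero
    rwa [hg.normalize_eq_self] at this
  have h4 : ∀ f ∈ s, Monic f := fun f hf => ((hmem f).1 (Multiset.mem_toFinset.2 hf)).2.1
  have h5 := natDegree_multiset_prod_of_monic s h4
  rw [h3, hn, Finset.sum_multiset_map_count] at h5
  rw [h5]
  rfl

/-- The extension sums. -/
noncomputable def Ssum (T : Finset (ZMod p)) (a : ZMod p) (k : ℕ) : ℂ :=
  if k = 0 then 0 else extSum p T a (GaloisField p k)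

theorem sum_monics_dvd (T : Finset (ZMod p)) (a : ZMod p) (n k : ℕ) (hk : k ≤ n)
    (q : (ZMod p)[X]) (hq : q ∈ monics p k) [DecidablePred fun g : (ZMod p)[X] => q ∣ g] :
    ∑ g ∈ monics p n, (if q ∣ g then chi T a g else 0) = chi T a q * Lcoeff T a (n - k) := by
  classical
  have hq' := mem_monics.1 hq
  rw [← Finset.sum_filter, Lcoeff, Finset.mul_sum]
  symm
  refine Finset.sum_bij (fun h _ => q * h) ?_ ?_ ?_ ?_
  · intro h hh
    have hh' := mem_monics.1 hh
    rw [Finset.mem_filter, mem_monics]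
    refine ⟨⟨hq'.1.mul hh'.1, ?_⟩, dvd_mul_right _ _⟩
    rw [hq'.1.natDegree_mul hh'.1, hq'.2, hh'.2]
    omega
  · intro h₁ _ h₂ _ h
    exact mul_left_cancel₀ hq'.1.ne_zero h
  · intro g hg
    rw [Finset.mem_filter, mem_monics] at hg
    obtain ⟨⟨hg1, hg2⟩, h, rfl⟩ := hg
    have hh : h.Monic := hq'.1.of_mul_monic_left hg1
    refine ⟨h, mem_monics.2 ⟨hh, ?_⟩, rfl⟩
    rw [hq'.1.natDegree_mul hh] at hg2
    omega
  · intro h hh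
    exact (chi_mul T a hq'.1 (mem_monics.1 hh).1).symm

theorem Lcoeff_rec (T : Finset (ZMod p)) (a : ZMod p) (n : ℕ) :
    (n : ℂ) * Lcoeff T a n
      = ∑ ij ∈ Finset.HasAntidiagonal.antidiagonal n, Ssum T a ij.1 * Lcoeff T a ij.2 := by
  classical
  rw [Finset.Nat.sum_antidiagonal_eq_sum_range_succ_mk]
  have h0 : ∑ k ∈ Finset.range n.succ, Ssum T a k * Lcoeff T a (n - k)
      = ∑ k ∈ Finset.Icc 1 n, Ssum T a k * Lcoeff T a (n - k) := by
    symm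
    refine Finset.sum_subset ?_ ?_
    · intro k hk
      rw [Finset.mem_Icc] at hk
      rw [Finset.mem_range]
      omega
    · intro k hk hk'
      rw [Finset.mem_range] at hk
      rw [Finset.mem_Icc] at hk'
      have : k = 0 := by omega
      simp [Ssum, this]
  refine Eq.trans ?_ h0.symm
  have h1 : (n : ℂ) * Lcoeff T a n = ∑ g ∈ monics p n, ∑ k ∈ Finset.Icc 1 n,
      ∑ x : GaloisField p k, (if qpoly k x ∣ g then chi T a g else 0) := by
    rw [Lcoeff, Finset.mul_sum]
    refine Finset.sum_congr rfl fun g hg => ?_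
    have := congrArg (Nat.cast (R := ℂ)) (count_factors n g hg)
    rw [← this]
    push_cast
    rw [Finset.sum_mul]
    refine Finset.sum_congr rfl fun k _ => ?_
    rw [Finset.sum_mul]
    refine Finset.sum_congr rfl fun x _ => ?_
    split_ifs <;> simp
  rw [h1, Finset.sum_comm]
  refine Finset.sum_congr rfl fun k hk => ?_
  rw [Finset.mem_Icc] at hk
  have hk0 : k ≠ 0 := by omega
  rw [Finset.sum_comm, Ssum, if_neg hk0, extSum, Finset.sum_mul]
  refine Finset.sum_congr rfl fun x _ => ?_
  rw [sum_monics_dvd T a n k hk.2 _ (qpoly_mem k hk0 x), qpoly, ext_term_eq]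
  have hdk := minpoly_natDegree_dvd (p := p) x
  rw [GaloisField.finrank p hk0] at hdk ⊢
  exact Nat.mul_div_cancel' hdk

end Recurrence

section Final
variable {p : ℕ} [Fact p.Prime]

theorem extSum_congr (T : Finset (ZMod p)) (a : ZMod p) {K L : Type*} [Field K] [Fintype K]
    [Algebra (ZMod p) K] [Field L] [Fintype L] [Algebra (ZMod p) L] (e : K ≃ₐ[ZMod p] L) :
    extSum p T a K = extSum p T a L := by
  rw [extSum, extSum]
  refine Fintype.sum_equiv e.toEquiv _ _ fun x => ?_
  have h1 : ∏ c ∈ T, (e.toEquiv x - algebraMap (ZMod p) L c)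
      = e (∏ c ∈ T, (x - algebraMap (ZMod p) K c)) := by
    rw [map_prod]
    refine Finset.prod_congr rfl fun c _ => ?_
    rw [map_sub, AlgEquiv.commutes]
    rfl
  have h2 : Algebra.trace (ZMod p) L (e.toEquiv x) = Algebra.trace (ZMod p) K x :=
    Algebra.trace_eq_of_algEquiv e x
  rw [h1, h2, Algebra.norm_eq_of_algEquiv]

/-- The complete sum. -/
noncomputable def csum (T : Finset (ZMod p)) (a : ZMod p) : ℂ :=
  ∑ x : ZMod p, ((quadraticChar (ZMod p) (∏ c ∈ T, (x - c)) : ℤ) : ℂ) * ZMod.stdAddChar (a * x)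

theorem csum_eq (T : Finset (ZMod p)) (a : ZMod p) : csum T a = Ssum T a 1 := by
  rw [Ssum, if_neg one_ne_zero, extSum_congr T a (GaloisField.equivZmodP p), extSum, csum]
  simp

theorem csum_bound_zero (hp2 : p ≠ 2) (T : Finset (ZMod p)) (hT : (0 : ZMod p) ∈ T) (a : ZMod p) :
    ‖csum T a‖ ≤ T.card * Real.sqrt p := by
  classical
  have hp : p.Prime := Fact.out
  choose ω hω using fun a : ZMod p => power_sums_of_rec T.card (Lcoeff T a) (Ssum T a)
    (Lcoeff_zero T a) (fun n hn => Lcoeff_eq_zero hp2 T hT a n hn) (Lcoeff_rec T a)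
  have key : ∀ j : ZMod p × Fin T.card, ‖ω j.1 j.2 ^ 2‖ ≤ (p : ℝ) := by
    refine norm_le_of_power_sums (fun j : ZMod p × Fin T.card => ω j.1 j.2 ^ 2)
      (3 * p * T.card + 3) p (by exact_mod_cast hp.pos) (p * T.card + 1) ?_
    intro k hk
    have h1 : ∑ j : ZMod p × Fin T.card, (ω j.1 j.2 ^ 2) ^ k
        = -∑ a : ZMod p, extSum p T a (GaloisField p (2 * k)) := by
      rw [Fintype.sum_prod_type, ← Finset.sum_neg_distrib]
      refine Finset.sum_congr rfl fun a _ => ?_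
      have h2 := hω a (2 * k) (by omega)
      rw [Ssum, if_neg (by omega)] at h2
      rw [h2, neg_neg]
      exact Finset.sum_congr rfl fun i _ => (pow_mul _ _ _).symm
    have hcard : Fintype.card (GaloisField p (2 * k)) = (p ^ k) ^ 2 := by
      rw [← Nat.card_eq_fintype_card, GaloisField.card p _ (by omega), ← pow_mul, mul_comm]
    have hlt : p * T.card < p ^ k := lt_of_lt_of_le (by omega) (Nat.lt_pow_self hp.one_lt).le
    have h3 := weil_artin_schreier p k hp2 hcard T hT hlt
    rw [h1, norm_neg, sum_extSum p hp2 T, Complex.norm_intCast]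
    exact_mod_cast h3
  rw [csum_eq, hω a 1 le_rfl, norm_neg]
  refine (norm_sum_le _ _).trans ?_
  have h5 : ∀ i ∈ (Finset.univ : Finset (Fin T.card)), ‖ω a i ^ 1‖ ≤ Real.sqrt p := by
    intro i _
    rw [pow_one]
    refine Real.le_sqrt_of_sq_le ?_
    rw [← norm_pow]
    exact key (a, i)
  refine (Finset.sum_le_sum h5).trans ?_
  simp

theorem csum_bound (hp2 : p ≠ 2) (T : Finset (ZMod p)) (hT : T.Nonempty) (a : ZMod p) :
    ‖csum T a‖ ≤ T.card * Real.sqrt p := by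
  classical
  obtain ⟨c₁, hc₁⟩ := hT
  have hinj : Function.Injective (fun c : ZMod p => c - c₁) := sub_left_injective
  have h0 : (0 : ZMod p) ∈ T.image (fun c => c - c₁) :=
    Finset.mem_image.2 ⟨c₁, hc₁, sub_self _⟩
  have h1 := csum_bound_zero hp2 _ h0 a
  rw [Finset.card_image_of_injective _ hinj] at h1
  have h2 : csum T a = ZMod.stdAddChar (a * c₁) * csum (T.image (fun c => c - c₁)) a := by
    rw [csum, csum, Finset.mul_sum, ← Equiv.sum_comp (Equiv.addRight c₁)]
    refine Finset.sum_congr rfl fun x _ => ?_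
    rw [Finset.prod_image (fun _ _ _ _ h => hinj h), Equiv.coe_addRight, mul_add,
      AddChar.map_add_eq_mul, Finset.prod_congr rfl (fun c _ => show x + c₁ - c = x - (c - c₁) by ring)]
    ring
  rw [h2, norm_mul, AddChar.norm_apply, one_mul]
  exact h1

theorem norm_stdAddChar_sub_one (m : ℕ) (hm : p = 2 * m + 1) (j : ℤ) (hj : |j| ≤ m) :
    4 * |(j : ℝ)| / p ≤ ‖(ZMod.stdAddChar (j : ZMod p) : ℂ) - 1‖ := by
  have hp0 : (0 : ℝ) < p := by exact_mod_cast (Fact.out : p.Prime).pos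
  have hπ := Real.pi_pos
  rw [ZMod.stdAddChar_coe]
  have h1 : (2 * Real.pi * Complex.I * j / p : ℂ)
      = Complex.I * ((2 * (Real.pi * j / p) : ℝ) : ℂ) := by
    push_cast
    ring
  rw [h1, Complex.norm_exp_I_mul_ofReal_sub_one, mul_div_cancel_left₀ _ (two_ne_zero),
    Real.norm_eq_abs, abs_mul, abs_two]
  have hj' : |(j : ℝ)| ≤ m := by exact_mod_cast hj
  have h2 : |Real.pi * j / p| = Real.pi * |(j : ℝ)| / p := by
    rw [abs_div, abs_mul, abs_of_pos hπ, abs_of_pos hp0]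
  have hpm : (p : ℝ) = 2 * m + 1 := by exact_mod_cast hm
  have h3 : |Real.pi * j / p| ≤ Real.pi / 2 := by
    rw [h2, div_le_div_iff₀ hp0 two_pos]
    nlinarith
  have h4 := Real.mul_abs_le_abs_sin h3
  rw [h2] at h4
  have h5 : 2 / Real.pi * (Real.pi * |(j : ℝ)| / p) = 2 * |(j : ℝ)| / p := by
    field_simp
  rw [h5] at h4
  calc 4 * |(j : ℝ)| / p = 2 * (2 * |(j : ℝ)| / p) := by ring
    _ ≤ _ := by linarith

/-- The geometric sums. -/
noncomputable def gsum (N : ℕ) (a : ZMod p) : ℂ :=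
  ∑ n ∈ Finset.range (N + 1), ZMod.stdAddChar (-(a * (n : ZMod p)))

theorem gsum_bound (m : ℕ) (hm : p = 2 * m + 1) (N : ℕ) (j : ℤ) (hj : |j| ≤ m) (hj0 : j ≠ 0) :
    ‖gsum N (j : ZMod p)‖ ≤ p / (2 * |(j : ℝ)|) := by
  have hp0 : (0 : ℝ) < p := by exact_mod_cast (Fact.out : p.Prime).pos
  have hjp : 0 < |(j : ℝ)| := by simpa using hj0
  set z : ℂ := ZMod.stdAddChar ((-j : ℤ) : ZMod p) with hz
  have hzn : ‖z‖ = 1 := AddChar.norm_apply _ _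
  have h1 : gsum N (j : ZMod p) = ∑ n ∈ Finset.range (N + 1), z ^ n := by
    refine Finset.sum_congr rfl fun n _ => ?_
    rw [hz, ← AddChar.map_nsmul_eq_pow, nsmul_eq_mul]
    congr 1
    push_cast
    ring
  have h2 := geom_sum_mul z (N + 1)
  have h3 : ‖gsum N (j : ZMod p)‖ * ‖z - 1‖ ≤ 2 := by
    rw [h1, ← norm_mul, h2]
    refine (norm_sub_le _ _).trans ?_
    rw [norm_pow, hzn]
    norm_num
  have h4 := norm_stdAddChar_sub_one m hm (-j) (by rwa [abs_neg])
  rw [← hz] at h4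
  push_cast at h4
  rw [abs_neg] at h4
  have h5 : ‖gsum N (j : ZMod p)‖ * (4 * |(j : ℝ)| / p) ≤ 2 :=
    (mul_le_mul_of_nonneg_left h4 (norm_nonneg _)).trans h3
  rw [le_div_iff₀ (by positivity)]
  rw [mul_div_assoc', div_le_iff₀ hp0] at h5
  linarith

theorem harmonic_log (m : ℕ) :
    ∑ j ∈ Finset.range m, (1 : ℝ) / (j + 1) ≤ Real.log (2 * m + 1) := by
  induction m with
  | zero => simp
  | succ m ih =>
    rw [Finset.sum_range_succ]
    have h0 : (0 : ℝ) ≤ m := Nat.cast_nonneg m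
    have h1 := Real.le_log_one_add_of_nonneg (x := 2 / (2 * (m : ℝ) + 1)) (by positivity)
    have h2 : 2 * (2 / (2 * (m : ℝ) + 1)) / (2 / (2 * (m : ℝ) + 1) + 2) = 1 / (m + 1) := by
      field_simp
      ring
    have h3 : (2 * ((m + 1 : ℕ) : ℝ) + 1) = (2 * m + 1) * (1 + 2 / (2 * (m : ℝ) + 1)) := by
      push_cast
      field_simp
      ring
    rw [h3, Real.log_mul (by positivity) (by positivity)]
    rw [h2] at h1
    linarith

theorem sum_range_odd (m : ℕ) (h : ℕ → ℝ) : ∑ j ∈ Finset.range (2 * m + 1), h j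
    = h 0 + ∑ j ∈ Finset.range m, (h (j + 1) + h (2 * m - j)) := by
  rw [show 2 * m + 1 = (m + 1) + m by ring, Finset.sum_range_add, Finset.sum_range_succ',
    Finset.sum_add_distrib, ← Finset.sum_range_reflect (fun x => h (m + 1 + x))]
  have : ∑ j ∈ Finset.range m, h (m + 1 + (m - 1 - j)) = ∑ j ∈ Finset.range m, h (2 * m - j) := by
    refine Finset.sum_congr rfl fun j hj => ?_
    rw [Finset.mem_range] at hj
    congr 1
    omega
  rw [this]
  ring

theorem sum_gsum (m : ℕ) (hm : p = 2 * m + 1) (N : ℕ) (hN : N ≤ p - 1) :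
    ∑ a : ZMod p, ‖gsum N a‖ ≤ p * (1 + Real.log p) := by
  have hp0 : (0 : ℝ) < p := by exact_mod_cast (Fact.out : p.Prime).pos
  have hppos := (Fact.out : p.Prime).pos
  have h1 : ∑ a : ZMod p, ‖gsum N a‖ = ∑ j ∈ Finset.range p, ‖gsum N (j : ZMod p)‖ := by
    symm
    refine Finset.sum_bij (fun j _ => (j : ZMod p)) ?_ ?_ ?_ ?_
    · intro j _
      exact Finset.mem_univ _
    · intro i hi j hj h
      rw [Finset.mem_range] at hi hj
      have := congrArg ZMod.val h
      rwa [ZMod.val_natCast_of_lt hi, ZMod.val_natCast_of_lt hj] at this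
    · intro a _
      exact ⟨a.val, Finset.mem_range.2 (ZMod.val_lt a), ZMod.natCast_zmod_val a⟩
    · intro j _
      rfl
  have h0 : ‖gsum N ((0 : ℕ) : ZMod p)‖ ≤ p := by
    have : gsum N ((0 : ℕ) : ZMod p) = ((N + 1 : ℕ) : ℂ) := by
      simp [gsum]
    rw [this, Complex.norm_natCast]
    exact_mod_cast (by omega : N + 1 ≤ p)
  have h2 : ∀ j ∈ Finset.range m, ‖gsum N ((j + 1 : ℕ) : ZMod p)‖
      + ‖gsum N ((2 * m - j : ℕ) : ZMod p)‖ ≤ p * (1 / (j + 1)) := by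
    intro j hj
    rw [Finset.mem_range] at hj
    have hjj : (0 : ℝ) < (j : ℝ) + 1 := by positivity
    have e1 : |((j : ℤ) + 1)| = (j : ℤ) + 1 := abs_of_nonneg (by positivity)
    have e2 : |((j : ℝ) + 1)| = (j : ℝ) + 1 := abs_of_pos hjj
    have g1 := gsum_bound m hm N ((j : ℤ) + 1) (by rw [e1]; exact_mod_cast hj) (by omega)
    have g2 := gsum_bound m hm N (-((j : ℤ) + 1)) (by rw [abs_neg, e1]; exact_mod_cast hj) (by omega)
    have c2 : ((2 * m - j : ℕ) : ZMod p) = ((-((j : ℤ) + 1) : ℤ) : ZMod p) := by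
      have : ((2 * m - j : ℕ) : ZMod p) + ((j + 1 : ℕ) : ZMod p) = 0 := by
        rw [← Nat.cast_add, show 2 * m - j + (j + 1) = p by omega]
        exact ZMod.natCast_self p
      rw [eq_neg_of_add_eq_zero_left this]
      push_cast
      ring
    rw [c2]
    push_cast at g1 g2 ⊢
    rw [abs_neg, e2] at g2
    rw [e2] at g1
    have : (p : ℝ) * (1 / (j + 1)) = p / (2 * (j + 1)) + p / (2 * (j + 1)) := by
      field_simp
      ring
    rw [this]
    exact add_le_add g1 g2
  rw [h1, Finset.sum_congr (congrArg Finset.range hm) (fun _ _ => rfl),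
    sum_range_odd m (fun j => ‖gsum N (j : ZMod p)‖)]
  have h3 := Finset.sum_le_sum h2
  rw [← Finset.mul_sum] at h3
  have h4 := harmonic_log m
  have hpm : (2 * (m : ℝ) + 1) = p := by rw [hm]; push_cast; ring
  rw [hpm] at h4
  have h5 := mul_le_mul_of_nonneg_left h4 hp0.le
  rw [mul_add, mul_one]
  exact add_le_add h0 (h3.trans h5)

theorem completion (T : Finset (ZMod p)) (N : ℕ) :
    (p : ℂ) * ((∑ x ∈ Finset.range (N + 1),
      quadraticChar (ZMod p) (∏ c ∈ T, ((x : ZMod p) - c)) : ℤ) : ℂ)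
      = ∑ a : ZMod p, csum T a * gsum N a := by
  classical
  have h1 : ∀ y : ZMod p, ∑ a : ZMod p, csum T a * ZMod.stdAddChar (-(a * y))
      = (p : ℂ) * ((quadraticChar (ZMod p) (∏ c ∈ T, (y - c)) : ℤ) : ℂ) := by
    intro y
    simp only [csum, Finset.sum_mul]
    rw [Finset.sum_comm]
    have h2 : ∀ x : ZMod p, ∑ a : ZMod p,
        ((quadraticChar (ZMod p) (∏ c ∈ T, (x - c)) : ℤ) : ℂ) * ZMod.stdAddChar (a * x)
          * ZMod.stdAddChar (-(a * y))
        = if x = y then (p : ℂ) * ((quadraticChar (ZMod p) (∏ c ∈ T, (x - c)) : ℤ) : ℂ) else 0 := by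
      intro x
      have h3 := AddChar.sum_mulShift (x - y) (ZMod.isPrimitive_stdAddChar p)
      have h4 : ∀ a : ZMod p, ((quadraticChar (ZMod p) (∏ c ∈ T, (x - c)) : ℤ) : ℂ)
          * ZMod.stdAddChar (a * x) * ZMod.stdAddChar (-(a * y))
          = ((quadraticChar (ZMod p) (∏ c ∈ T, (x - c)) : ℤ) : ℂ)
            * ZMod.stdAddChar (a * (x - y)) := by
        intro a
        rw [mul_assoc, ← AddChar.map_add_eq_mul]
        congr 2
        ring
      rw [Finset.sum_congr rfl fun a _ => h4 a, ← Finset.mul_sum, h3]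
      simp only [sub_eq_zero, ZMod.card]
      split_ifs
      · ring
      · simp
    rw [Finset.sum_congr rfl fun x _ => h2 x]
    simp
  simp only [gsum, Finset.mul_sum]
  rw [Finset.sum_comm]
  push_cast
  rw [Finset.mul_sum]
  exact Finset.sum_congr rfl fun n _ => (h1 n).symm

end Final

theorem incomplete_weil_sum_bound :
    ∃ p₀ : ℕ, 0 < p₀ ∧ ∀ (p : ℕ) [Fact p.Prime], p₀ ≤ p →
      ∀ d : ℕ, 1 ≤ d → ∀ f : Polynomial (ZMod p), ∀ t : Finset (ZMod p), t.card = d →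
        f = ∏ r ∈ t, (Polynomial.X - Polynomial.C r) →
        ∀ N : ℕ, N ≤ p - 1 →
          |((∑ x ∈ Finset.range (N + 1), quadraticChar (ZMod p) (f.eval (x : ZMod p)) : ℤ) : ℝ)|
            ≤ (d : ℝ) * (1 + Real.log p) * Real.sqrt p := by
  refine ⟨3, by norm_num, ?_⟩
  intro p _ hp3 d hd f t ht hf N hN
  have hp : p.Prime := Fact.out
  have hp2 : p ≠ 2 := by omega
  obtain ⟨m, hm⟩ := hp.odd_of_ne_two hp2
  have hp0 : (0 : ℝ) < p := by exact_mod_cast hp.pos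
  have hne : t.Nonempty := Finset.card_pos.1 (by omega)
  have heval : ∀ x : ℕ, f.eval (x : ZMod p) = ∏ c ∈ t, ((x : ZMod p) - c) := by
    intro x
    rw [hf, Polynomial.eval_prod]
    simp
  have h1 := completion t N
  simp only [heval]
  set s : ℤ := ∑ x ∈ Finset.range (N + 1),
    quadraticChar (ZMod p) (∏ c ∈ t, ((x : ZMod p) - c)) with hs
  have h2 : (p : ℝ) * |(s : ℝ)| ≤ (p : ℝ) * ((d : ℝ) * (1 + Real.log p) * Real.sqrt p) := by
    calc (p : ℝ) * |(s : ℝ)| = ‖(p : ℂ) * (s : ℂ)‖ := by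
          rw [norm_mul, Complex.norm_natCast, Complex.norm_intCast]
      _ = ‖∑ a : ZMod p, csum t a * gsum N a‖ := by rw [h1]
      _ ≤ ∑ a : ZMod p, (d * Real.sqrt p) * ‖gsum N a‖ := by
          refine (norm_sum_le _ _).trans (Finset.sum_le_sum fun a _ => ?_)
          rw [norm_mul, ← ht]
          exact mul_le_mul_of_nonneg_right (csum_bound hp2 t hne a) (norm_nonneg _)
      _ = (d * Real.sqrt p) * ∑ a : ZMod p, ‖gsum N a‖ := by rw [Finset.mul_sum]
      _ ≤ (d * Real.sqrt p) * (p * (1 + Real.log p)) :=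
          mul_le_mul_of_nonneg_left (sum_gsum m hm N hN) (by positivity)
      _ = _ := by ring
  exact le_of_mul_le_mul_left h2 hp0
end

section
/- Let W = {z₁ < z₂ < ⋯ < z_r} be a nonempty finite set of nonnegative integers and let ε : {1, …, r} → {-1, 1}. For an odd prime p, let c_ε(p) be the number of integers n ≥ 1 with n + z_r ≤ p - 1 such that χ_p(n + z_i) = ε(i) for all i ∈ {1, …, r}, and let c_σ(p) be the number of integers n ≥ 1 with n + z_r ≤ p - 1 such that for every integer m with n + z₁ ≤ m ≤ n + z_r one has χ_p(m) = 1 if and only if m ∈ {n + z₁, …, n + z_r}. Then, as p → ∞ through the primes, c_ε(p)/p → 2^{-r} and c_σ(p)/p → 2^{-(1 + z_r - z₁)}. -/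
open Polynomial in
/-- Iterated twisted derivative: `f^k D^k (f^e v) = f^e T_k v`. -/
noncomputable def stepT {F : Type*} [Field F] (e : ℕ) (f : F[X]) : ℕ → F[X] → F[X]
  | 0, v => v
  | k + 1, v => f * derivative (stepT e f k v) + ((e : F[X]) - (k : F[X])) * derivative f * stepT e f k v

section
open Polynomial

theorem stepT_add {F : Type*} [Field F] (e : ℕ) (f : F[X]) (k : ℕ) (u v : F[X]) :
    stepT e f k (u + v) = stepT e f k u + stepT e f k v := by
  induction k with
  | zero => rfl
  | succ k ih => simp only [stepT, ih, derivative_add]; ring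

theorem stepT_smul {F : Type*} [Field F] (e : ℕ) (f : F[X]) (k : ℕ) (c : F) (v : F[X]) :
    stepT e f k (c • v) = c • stepT e f k v := by
  induction k with
  | zero => rfl
  | succ k ih => simp only [stepT, ih, derivative_smul]; simp only [smul_eq_C_mul]; ring

theorem stepT_natDegree {F : Type*} [Field F] (e : ℕ) (f : F[X]) (k : ℕ) (v : F[X]) :
    (stepT e f k v).natDegree ≤ v.natDegree + k * f.natDegree := by
  induction k with
  | zero => simp [stepT]
  | succ k ih =>
    simp only [stepT]
    refine (natDegree_add_le _ _).trans (max_le ?_ ?_)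
    · refine natDegree_mul_le.trans ?_
      have := natDegree_derivative_le (stepT e f k v)
      rw [add_mul]; omega
    · refine natDegree_mul_le.trans ?_
      have h1 : (((e : F[X]) - (k : F[X])) * derivative f).natDegree ≤ f.natDegree := by
        refine natDegree_mul_le.trans ?_
        have h2 : ((e : F[X]) - (k : F[X])).natDegree = 0 := by
          have : ((e : F[X]) - (k : F[X])) = C ((e : F) - k) := by simp
          rw [this, natDegree_C]
        have := natDegree_derivative_le f
        omega
      rw [add_mul]; omega

theorem stepT_spec {F : Type*} [Field F] (e : ℕ) (f : F[X]) (k : ℕ) (v : F[X]) :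
    f ^ k * derivative^[k] (f ^ e * v) = f ^ e * stepT e f k v := by
  induction k with
  | zero => simp [stepT]
  | succ k ih =>
    have h := congrArg derivative ih
    rw [derivative_mul, derivative_mul] at h
    have hk : f * derivative (f ^ k) = (k : F[X]) * f ^ k * derivative f := by
      rcases k with _ | k
      · simp
      · rw [derivative_pow]; simp; ring
    have he : f * derivative (f ^ e) = (e : F[X]) * f ^ e * derivative f := by
      rcases e with _ | e
      · simp
      · rw [derivative_pow]; simp; ring
    rw [Function.iterate_succ_apply']
    simp only [stepT]
    linear_combination f * h - (derivative^[k] (f ^ e * v)) * hk + stepT e f k v * he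
      - (k : F[X]) * derivative f * ih

theorem iter_mul_X_pow {p : ℕ} [Fact p.Prime] (k j : ℕ) (q : (ZMod p)[X]) :
    derivative^[k] (q * X ^ (p * j)) = derivative^[k] q * X ^ (p * j) := by
  induction k with
  | zero => rfl
  | succ k ih =>
    rw [Function.iterate_succ_apply', Function.iterate_succ_apply', ih, derivative_mul]
    simp [derivative_X_pow]

theorem step_nonvanish {p : ℕ} [Fact p.Prime] (e d B : ℕ) (hp : p = 2 * e + 1)
    (f : (ZMod p)[X]) (hfd : f.natDegree = d) (r : ZMod p) (hr : f.rootMultiplicity r = 1)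
    (f0 : f.eval 0 ≠ 0) (hB : d + 2 * B ≤ p) (J : ℕ) (u v : Fin J → (ZMod p)[X])
    (hu : ∀ j, (u j).natDegree < B) (hv : ∀ j, (v j).natDegree < B)
    (h : ∑ j, (u j + f ^ e * v j) * X ^ (p * (j : ℕ)) = 0) : ∀ j, u j = 0 ∧ v j = 0 := by
  have hf : f ≠ 0 := by rintro rfl; simp at f0
  have hp0 : p ≠ 0 := by omega
  induction J with
  | zero => intro j; exact j.elim0
  | succ J ih =>
    rw [Fin.sum_univ_succ] at h
    have hs : ∑ j : Fin J, (u j.succ + f ^ e * v j.succ) * X ^ (p * (j.succ : ℕ))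
        = X ^ p * ∑ j : Fin J, (u j.succ + f ^ e * v j.succ) * X ^ (p * (j : ℕ)) := by
      rw [Finset.mul_sum]
      refine Finset.sum_congr rfl fun j _ => ?_
      rw [Fin.val_succ, mul_add, pow_add]; ring
    rw [hs] at h
    simp only [Fin.val_zero, mul_zero, pow_zero, mul_one] at h
    have key : u 0 = 0 ∧ v 0 = 0 := by
      have hc : (X : (ZMod p)[X]) ^ p ∣ f ^ p - C (f.eval 0) := by
        have h1 : f ^ p - C (f.eval 0) = (f - C (f.eval 0)) ^ p := by
          rw [sub_pow_char, ← C_pow, ZMod.pow_card]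
        rw [h1]
        apply pow_dvd_pow_of_dvd
        rw [X_dvd_iff]; simp [coeff_zero_eq_eval_zero]
      have hd1 : (X : (ZMod p)[X]) ^ p ∣ f * u 0 ^ 2 - C (f.eval 0) * v 0 ^ 2 := by
        have h2 : (X : (ZMod p)[X]) ^ p ∣ f * u 0 ^ 2 - f ^ p * v 0 ^ 2 := by
          have h3 : f * u 0 ^ 2 - f ^ p * v 0 ^ 2
              = (u 0 + f ^ e * v 0) * (f * (u 0 - f ^ e * v 0)) := by
            have : f ^ p = f * (f ^ e) ^ 2 := by
              calc f ^ p = f ^ (2 * e + 1) := congrArg (fun n => f ^ n) hp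
                _ = _ := by ring
            rw [this]; ring
          rw [h3]
          refine Dvd.dvd.mul_right ?_ _
          rw [eq_neg_of_add_eq_zero_left h]
          exact (Dvd.intro _ rfl).neg_right
        have h4 := dvd_add h2 (hc.mul_right (v 0 ^ 2))
        convert h4 using 1; ring
      have hz : f * u 0 ^ 2 - C (f.eval 0) * v 0 ^ 2 = 0 := by
        apply eq_zero_of_dvd_of_natDegree_lt hd1
        rw [natDegree_X_pow]
        have := hu 0
        have := hv 0
        refine lt_of_le_of_lt (natDegree_sub_le _ _) (max_lt ?_ ?_)
        · refine lt_of_le_of_lt natDegree_mul_le ?_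
          rw [natDegree_pow]; omega
        · refine lt_of_le_of_lt (natDegree_C_mul_le _ _) ?_
          rw [natDegree_pow]; omega
      have hz' := sub_eq_zero.mp hz
      by_cases hu0 : u 0 = 0
      · refine ⟨hu0, ?_⟩
        rw [hu0] at hz'
        have : C (f.eval 0) ≠ 0 := by simpa using f0
        simpa [this, f0] using hz'.symm
      · exfalso
        have hl : f * u 0 ^ 2 ≠ 0 := mul_ne_zero hf (pow_ne_zero _ hu0)
        have hR : C (f.eval 0) * v 0 ^ 2 ≠ 0 := hz' ▸ hl
        have hv2 : v 0 ^ 2 ≠ 0 := right_ne_zero_of_mul hR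
        have hm := congrArg (rootMultiplicity r) hz'
        rw [rootMultiplicity_mul hl, rootMultiplicity_mul hR, hr, rootMultiplicity_C, sq, sq,
          rootMultiplicity_mul (by rw [← sq]; exact pow_ne_zero _ hu0),
          rootMultiplicity_mul (by rw [← sq]; exact hv2)] at hm
        omega
    rw [key.1, key.2] at h
    simp only [mul_zero, add_zero, zero_add] at h
    have h' := (mul_eq_zero.mp h).resolve_left (pow_ne_zero _ X_ne_zero)
    have := ih (fun j => u j.succ) (fun j => v j.succ) (fun j => hu _) (fun j => hv _) h'
    intro j
    refine Fin.cases key this j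

theorem stepanov {p : ℕ} [Fact p.Prime] (e d B K : ℕ) (hp : p = 2 * e + 1)
    (f : (ZMod p)[X]) (hfd : f.natDegree = d) (r : ZMod p) (hr : f.rootMultiplicity r = 1)
    (f0 : f.eval 0 ≠ 0) (a : ZMod p) (ha : a ≠ 0) (hK : 0 < K) (he : 0 < e)
    (hB : d + 2 * B ≤ p) (hBK : K * (2 * K * d + K + 1) < B) (h2K : 2 * K ≤ p) :
    2 * K * (Finset.univ.filter fun x : ZMod p => f.eval x ^ e = a).card ≤ B + d * e + p * K := by
  classical
  have hB0 : 0 < B := by omega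
  set M := 2 * K with hM
  set J := K + 1 with hJ
  set N := B + M * d + J with hN
  let P : ℕ → (Fin J → degreeLT (ZMod p) B × degreeLT (ZMod p) B) → (ZMod p)[X] := fun k w =>
    ∑ j, (f ^ k * derivative^[k] ((w j).1 : (ZMod p)[X]) + C a * stepT e f k ((w j).2 : (ZMod p)[X]))
      * X ^ (j : ℕ)
  let L : (Fin J → degreeLT (ZMod p) B × degreeLT (ZMod p) B) →ₗ[ZMod p] (Fin M → Fin N → ZMod p) :=
    { toFun := fun w k i => (P k w).coeff i
      map_add' := by
        intro w w'
        ext k i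
        simp only [P, Pi.add_apply, ← coeff_add, ← Finset.sum_add_distrib]
        congr 1
        refine Finset.sum_congr rfl fun j _ => ?_
        simp only [Prod.fst_add, Prod.snd_add, Submodule.coe_add, stepT_add, iterate_map_add]
        ring
      map_smul' := by
        intro c w
        ext k i
        simp only [P, Pi.smul_apply, RingHom.id_apply, ← coeff_smul, Finset.smul_sum]
        congr 1
        refine Finset.sum_congr rfl fun j _ => ?_
        simp only [Prod.smul_fst, Prod.smul_snd, Submodule.coe_smul, stepT_smul,
          iterate_derivative_smul]
        simp only [smul_eq_C_mul]
        ring }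
  have hfr : Module.finrank (ZMod p) (degreeLT (ZMod p) B) = B := by
    rw [(degreeLTEquiv (ZMod p) B).finrank_eq]; simp
  have : FiniteDimensional (ZMod p) (degreeLT (ZMod p) B) :=
    Module.Finite.equiv (degreeLTEquiv (ZMod p) B).symm
  have hker : LinearMap.ker L ≠ ⊥ := by
    apply LinearMap.ker_ne_bot_of_finrank_lt
    have e1 : Module.finrank (ZMod p) (Fin J → degreeLT (ZMod p) B × degreeLT (ZMod p) B)
        = J * (B + B) := by
      rw [Module.finrank_pi_fintype]
      simp [Module.finrank_prod, hfr]
    have e2 : Module.finrank (ZMod p) (Fin M → Fin N → ZMod p) = M * N := by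
      rw [Module.finrank_pi_fintype]
      simp
    rw [e1, e2, hN, hJ]
    rw [hM] at hBK ⊢
    nlinarith
  obtain ⟨w, hw, hw0⟩ := (Submodule.ne_bot_iff _).mp hker
  rw [LinearMap.mem_ker] at hw
  have hdeg : ∀ q : degreeLT (ZMod p) B, (q : (ZMod p)[X]).natDegree < B := by
    intro q
    have := mem_degreeLT.mp q.2
    by_cases hq : (q : (ZMod p)[X]) = 0
    · rw [hq]; simpa using hB0
    · exact (natDegree_lt_iff_degree_lt hq).mpr this
  have hP : ∀ k < M, P k w = 0 := by
    intro k hk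
    ext i
    rw [coeff_zero]
    by_cases hi : i < N
    · exact congrFun (congrFun hw ⟨k, hk⟩) ⟨i, hi⟩
    · apply coeff_eq_zero_of_natDegree_lt
      refine lt_of_lt_of_le ?_ (not_lt.mp hi)
      refine lt_of_le_of_lt (natDegree_sum_le_of_forall_le (n := N - 1) _ _ ?_) (by omega)
      intro j _
      refine natDegree_mul_le.trans ?_
      rw [natDegree_X_pow]
      have hkd : k * d ≤ M * d := Nat.mul_le_mul_right _ hk.le
      have hj := j.2
      have : (f ^ k * derivative^[k] ((w j).1 : (ZMod p)[X])
          + C a * stepT e f k ((w j).2 : (ZMod p)[X])).natDegree ≤ B - 1 + M * d := by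
        refine (natDegree_add_le _ _).trans (max_le ?_ ?_)
        · refine natDegree_mul_le.trans ?_
          rw [natDegree_pow, hfd]
          have h1 := natDegree_iterate_derivative ((w j).1 : (ZMod p)[X]) k
          have h2 := hdeg (w j).1
          omega
        · refine (natDegree_C_mul_le _ _).trans ?_
          refine (stepT_natDegree _ _ _ _).trans ?_
          rw [hfd]
          have h2 := hdeg (w j).2
          omega
      omega
  set h : (ZMod p)[X] := ∑ j, (((w j).1 : (ZMod p)[X]) + f ^ e * ((w j).2 : (ZMod p)[X]))
    * X ^ (p * (j : ℕ)) with hh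
  have hne : h ≠ 0 := by
    intro h0
    apply hw0
    have := step_nonvanish e d B hp f hfd r hr f0 hB J (fun j => ((w j).1 : (ZMod p)[X]))
      (fun j => ((w j).2 : (ZMod p)[X])) (fun j => hdeg _) (fun j => hdeg _) h0
    ext1 j
    exact Prod.ext (Subtype.ext (this j).1) (Subtype.ext (this j).2)
  have hdh : h.natDegree ≤ B + d * e + p * K := by
    refine natDegree_sum_le_of_forall_le _ _ ?_
    intro j _
    refine natDegree_mul_le.trans ?_
    rw [natDegree_X_pow]
    have hj : p * (j : ℕ) ≤ p * K := Nat.mul_le_mul_left _ (by have := j.2; omega)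
    refine add_le_add ((natDegree_add_le _ _).trans (max_le ?_ ?_)) hj
    · have := hdeg (w j).1
      exact this.le.trans (Nat.le_add_right _ _)
    · refine natDegree_mul_le.trans ?_
      rw [natDegree_pow, hfd, mul_comm e d]
      have := hdeg (w j).2
      omega
  have hroot : ∀ x : ZMod p, f.eval x ^ e = a → M ≤ h.rootMultiplicity x := by
    intro x hx
    have hfx : f.eval x ≠ 0 := by
      intro h0
      rw [h0, zero_pow he.ne'] at hx
      exact ha hx.symm
    have : M - 1 < h.rootMultiplicity x := by
      rw [lt_rootMultiplicity_iff_isRoot_iterate_derivative_of_mem_nonZeroDivisors' hne]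
      · intro m hm
        have h1 : f ^ m * derivative^[m] h = ∑ j, (f ^ m * derivative^[m] ((w j).1 : (ZMod p)[X])
            + f ^ e * stepT e f m ((w j).2 : (ZMod p)[X])) * X ^ (p * (j : ℕ)) := by
          rw [hh, iterate_derivative_sum, Finset.mul_sum]
          refine Finset.sum_congr rfl fun j _ => ?_
          rw [iter_mul_X_pow, iterate_map_add, ← stepT_spec]
          ring
        have h2 := congrArg (eval x) h1
        have h3 := congrArg (eval x) (hP m (by omega))
        have h4 : f.eval x ^ m * (derivative^[m] h).eval x = 0 := by
          simp only [eval_mul, eval_pow] at h2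
          rw [h2, ← eval_zero (x := x), ← h3]
          simp only [P, eval_finsetSum, eval_mul, eval_add, eval_pow, eval_X, eval_C, hx,
            pow_mul, ZMod.pow_card]
        exact (mul_eq_zero.mp h4).resolve_left (pow_ne_zero _ hfx)
      · intro m hm hm0
        apply mem_nonZeroDivisors_of_ne_zero
        intro h0
        rw [ZMod.natCast_eq_zero_iff] at h0
        have := Nat.le_of_dvd (by omega) h0
        omega
    omega
  refine le_trans ?_ hdh
  refine le_trans ?_ (card_roots' h)
  rw [mul_comm, ← smul_eq_mul, ← Finset.sum_const]
  calc _ ≤ ∑ x ∈ Finset.univ.filter (fun x : ZMod p => f.eval x ^ e = a), h.roots.count x := by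
        refine Finset.sum_le_sum fun x hx => ?_
        rw [count_roots]
        exact hroot x (by simpa using hx)
    _ ≤ ∑ x : ZMod p, h.roots.count x :=
        Finset.sum_le_sum_of_subset (Finset.filter_subset _ _)
    _ = _ := Multiset.sum_count_eq_card (by simp)

end

section
open Polynomial

theorem step_charsum {p : ℕ} [Fact p.Prime] (e d B K : ℕ) (hp : p = 2 * e + 1)
    (f : (ZMod p)[X]) (hfd : f.natDegree = d) (r : ZMod p) (hr : f.rootMultiplicity r = 1)
    (f0 : f.eval 0 ≠ 0) (hK : 0 < K) (he : 0 < e)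
    (hB : d + 2 * B ≤ p) (hBK : K * (2 * K * d + K + 1) < B) (h2K : 2 * K ≤ p) :
    2 * K * |∑ x : ZMod p, quadraticChar (ZMod p) (f.eval x)| ≤ (d + 1) * p + 2 * K * d := by
  classical
  have hchar : ringChar (ZMod p) ≠ 2 := by
    rw [ZMod.ringChar_zmod_n]; omega
  have hcard : Fintype.card (ZMod p) / 2 = e := by rw [ZMod.card]; omega
  have hf : f ≠ 0 := by rintro rfl; simp at f0
  have hone : (1 : ZMod p) ≠ 0 := one_ne_zero
  set A := (Finset.univ.filter fun x : ZMod p => quadraticChar (ZMod p) (f.eval x) = 1).card with hA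
  set A' := (Finset.univ.filter fun x : ZMod p => quadraticChar (ZMod p) (f.eval x) = -1).card with hA'
  set Z := (Finset.univ.filter fun x : ZMod p => quadraticChar (ZMod p) (f.eval x) = 0).card with hZ
  have hAle : 2 * K * A ≤ B + d * e + p * K := by
    refine le_trans (Nat.mul_le_mul_left _ (Finset.card_le_card ?_))
      (stepanov e d B K hp f hfd r hr f0 1 hone hK he hB hBK h2K)
    intro x hx
    simp only [Finset.mem_filter, Finset.mem_univ, true_and] at hx ⊢
    have := quadraticChar_eq_pow_of_char_ne_two' hchar (f.eval x)
    rw [hx, hcard] at this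
    simpa using this.symm
  have hA'le : 2 * K * A' ≤ B + d * e + p * K := by
    refine le_trans (Nat.mul_le_mul_left _ (Finset.card_le_card ?_))
      (stepanov e d B K hp f hfd r hr f0 (-1) (neg_ne_zero.mpr hone) hK he hB hBK h2K)
    intro x hx
    simp only [Finset.mem_filter, Finset.mem_univ, true_and] at hx ⊢
    have := quadraticChar_eq_pow_of_char_ne_two' hchar (f.eval x)
    rw [hx, hcard] at this
    simpa using this.symm
  have hZle : Z ≤ d := by
    rw [← hfd]
    refine le_trans ?_ (card_roots' f)
    refine le_trans (Finset.card_le_card ?_) (Multiset.toFinset_card_le f.roots)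
    intro x hx
    simp only [Finset.mem_filter, Finset.mem_univ, true_and, quadraticChar_eq_zero_iff] at hx
    simp [hf, hx]
  have htri : ∀ y : ZMod p, quadraticChar (ZMod p) y = 0 ∨ quadraticChar (ZMod p) y = 1 ∨
      quadraticChar (ZMod p) y = -1 := by
    intro y
    by_cases hy : y = 0
    · left; simp [hy]
    · right; exact quadraticChar_dichotomy hy
  have hsum : (A : ℤ) + A' + Z = p := by
    have h1 : (p : ℤ) = ∑ x : ZMod p, (1 : ℤ) := by simp
    rw [h1, hA, hA', hZ]
    simp only [Finset.card_filter]
    push_cast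
    rw [← Finset.sum_add_distrib, ← Finset.sum_add_distrib]
    refine Finset.sum_congr rfl fun x _ => ?_
    rcases htri (f.eval x) with h | h | h <;> rw [h] <;> norm_num
  have hS : ∑ x : ZMod p, quadraticChar (ZMod p) (f.eval x) = (A : ℤ) - A' := by
    rw [hA, hA']
    simp only [Finset.card_filter]
    push_cast
    rw [← Finset.sum_sub_distrib]
    refine Finset.sum_congr rfl fun x _ => ?_
    rcases htri (f.eval x) with h | h | h <;> rw [h] <;> norm_num
  rw [hS]
  zify at hAle hA'le hZle hp hB hK
  have hKZ : (K : ℤ) * Z ≤ K * d := mul_le_mul_of_nonneg_left hZle hK.le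
  have hs2 : (K : ℤ) * (A + A' + Z) = K * p := by rw [hsum]
  have hd : (0 : ℤ) ≤ d := by positivity
  have hde : 2 * ((d : ℤ) * e) ≤ d * p := by rw [hp]; nlinarith
  rcases abs_cases ((A : ℤ) - A') with ⟨h, _⟩ | ⟨h, _⟩ <;> rw [h] <;> nlinarith

theorem charsum_small (S : Finset ℕ) (hS : S.Nonempty) (δ : ℝ) (hδ : 0 < δ) :
    ∃ P0 : ℕ, ∀ (p : ℕ) [Fact p.Prime], P0 ≤ p →
      |((∑ x : ZMod p, ∏ w ∈ S, quadraticChar (ZMod p) (x + (w : ZMod p)) : ℤ) : ℝ)| ≤ δ * p := by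
  classical
  set d := S.card with hd
  obtain ⟨K, hK⟩ := exists_nat_gt ((d + 1) / δ)
  obtain ⟨Q, hQ⟩ := exists_nat_gt (2 * d / δ)
  have hKpos : 0 < K := by
    have : (0 : ℝ) < K := lt_of_le_of_lt (by positivity) hK
    exact_mod_cast this
  refine ⟨3 + Q + 2 * K + S.sup id + d + 2 + 2 * (K * (2 * K * d + K + 1) + 1), ?_⟩
  intro p hpF hP
  have hpp := hpF.out
  have hodd : p % 2 = 1 := (hpp.eq_two_or_odd).resolve_left (by omega)
  have hsup : ∀ w ∈ S, w + 1 < p := by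
    intro w hw
    have : w ≤ S.sup id := Finset.le_sup (f := id) hw
    omega
  set T : Finset (ZMod p) := S.image (fun w : ℕ => -((w : ZMod p) + 1)) with hT
  have hinj : Set.InjOn (fun w : ℕ => -((w : ZMod p) + 1)) S := by
    intro a ha b hb hab
    have h1 : (a : ZMod p) = b := by simpa using hab
    rw [ZMod.natCast_eq_natCast_iff'] at h1
    have h2 := hsup a ha
    have h3 := hsup b hb
    rwa [Nat.mod_eq_of_lt (by omega), Nat.mod_eq_of_lt (by omega)] at h1
  set f : (ZMod p)[X] := ∏ t ∈ T, (X - C t) with hf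
  have hfd : f.natDegree = d := by
    rw [hf, natDegree_finsetProd_X_sub_C_eq_card, hT, Finset.card_image_of_injOn hinj]
  have hfe : ∀ x, f.eval x = ∏ w ∈ S, (x + 1 + (w : ZMod p)) := by
    intro x
    rw [hf, eval_prod, hT, Finset.prod_image hinj]
    refine Finset.prod_congr rfl fun w _ => ?_
    simp; ring
  obtain ⟨w0, hw0⟩ := hS
  have hr : f.rootMultiplicity (-((w0 : ZMod p) + 1)) = 1 := by
    rw [← count_roots, hf, roots_prod_X_sub_C]
    have hmem : -((w0 : ZMod p) + 1) ∈ T :=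
      Finset.mem_image_of_mem (fun w : ℕ => -((w : ZMod p) + 1)) hw0
    exact Multiset.count_eq_one_of_mem T.nodup hmem
  have f0 : f.eval 0 ≠ 0 := by
    rw [hfe, Finset.prod_ne_zero_iff]
    intro w hw h0
    have h1 : ((w + 1 : ℕ) : ZMod p) = 0 := by push_cast; rw [← h0]; ring
    rw [ZMod.natCast_eq_zero_iff] at h1
    have := Nat.le_of_dvd (by omega) h1
    have := hsup w hw
    omega
  have key := step_charsum ((p - 1) / 2) d ((p - d) / 2) K (by omega) f hfd _ hr f0 hKpos (by omega)
    (by omega) (by omega) (by omega)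
  have hsum : ∑ x : ZMod p, ∏ w ∈ S, quadraticChar (ZMod p) (x + (w : ZMod p))
      = ∑ x : ZMod p, quadraticChar (ZMod p) (f.eval x) := by
    rw [← Equiv.sum_comp (Equiv.addRight (1 : ZMod p))]
    refine Finset.sum_congr rfl fun x _ => ?_
    rw [hfe, map_prod]
    rfl
  rw [hsum]
  have key' : 2 * (K : ℝ) * |((∑ x : ZMod p, quadraticChar (ZMod p) (f.eval x) : ℤ) : ℝ)|
      ≤ (d + 1) * p + 2 * K * d := by exact_mod_cast key
  rw [div_lt_iff₀ hδ] at hK hQ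
  have hQp : (Q : ℝ) ≤ p := by exact_mod_cast (show Q ≤ p by omega)
  have hKr : (0 : ℝ) < K := by exact_mod_cast hKpos
  have hpr : (0 : ℝ) < p := by exact_mod_cast hpp.pos
  have h1 : ((d : ℝ) + 1) * p ≤ K * δ * p := by nlinarith
  have h2 : 2 * (K : ℝ) * d ≤ K * (δ * p) := by nlinarith
  have h3 : 2 * (K : ℝ) * |((∑ x : ZMod p, quadraticChar (ZMod p) (f.eval x) : ℤ) : ℝ)|
      ≤ 2 * K * (δ * p) := by nlinarith
  exact le_of_mul_le_mul_left h3 (by positivity)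

end

theorem sum_zmod_range {p : ℕ} [NeZero p] (G : ZMod p → ℤ) :
    ∑ x : ZMod p, G x = ∑ n ∈ Finset.range p, G (n : ZMod p) := by
  refine Finset.sum_nbij' (fun x => x.val) (fun n => (n : ZMod p)) ?_ ?_ ?_ ?_ ?_
  · intro x _; simpa using ZMod.val_lt x
  · simp
  · intro x _; simp
  · intro n hn; exact ZMod.val_cast_of_lt (Finset.mem_range.mp hn)
  · intro x _; simp

theorem pattern_count {p : ℕ} [hp : Fact p.Prime] (W : Finset ℕ) (ε : ℕ → ℤ)
    (hε : ∀ w ∈ W, ε w = 1 ∨ ε w = -1) (m : ℕ) (hm : ∀ w ∈ W, w ≤ m) (hmp : m + 1 ≤ p) :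
    |(2 : ℤ) ^ W.card * ({n : ℕ | 1 ≤ n ∧ n + m ≤ p - 1 ∧ ∃ hp : Fact p.Prime, ∀ w ∈ W,
        @legendreSym p hp ((n + w : ℕ) : ℤ) = ε w}.ncard : ℤ)
      - ∑ x : ZMod p, ∏ w ∈ W, (1 + ε w * quadraticChar (ZMod p) (x + (w : ZMod p)))|
      ≤ (m + 1) * 2 ^ W.card := by
  classical
  set G : ZMod p → ℤ := fun x => ∏ w ∈ W, (1 + ε w * quadraticChar (ZMod p) (x + (w : ZMod p)))
    with hG
  have htri : ∀ y : ZMod p, quadraticChar (ZMod p) y = 0 ∨ quadraticChar (ZMod p) y = 1 ∨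
      quadraticChar (ZMod p) y = -1 := by
    intro y
    by_cases hy : y = 0
    · left; simp [hy]
    · right; exact quadraticChar_dichotomy hy
  have hfac : ∀ x, ∀ w ∈ W, 0 ≤ 1 + ε w * quadraticChar (ZMod p) (x + (w : ZMod p)) ∧
      1 + ε w * quadraticChar (ZMod p) (x + (w : ZMod p)) ≤ 2 := by
    intro x w hw
    rcases hε w hw with h | h <;> rcases htri (x + (w : ZMod p)) with h' | h' | h' <;>
      rw [h, h'] <;> norm_num
  have hG0 : ∀ x, 0 ≤ G x := fun x => Finset.prod_nonneg fun w hw => (hfac x w hw).1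
  have hG2 : ∀ x, G x ≤ 2 ^ W.card := by
    intro x
    rw [← Finset.prod_const]
    exact Finset.prod_le_prod (fun w hw => (hfac x w hw).1) fun w hw => (hfac x w hw).2
  have hset : {n : ℕ | 1 ≤ n ∧ n + m ≤ p - 1 ∧ ∃ hp : Fact p.Prime, ∀ w ∈ W,
        @legendreSym p hp ((n + w : ℕ) : ℤ) = ε w}
      = ((Finset.Icc 1 (p - 1 - m)).filter fun n => ∀ w ∈ W,
          quadraticChar (ZMod p) ((n : ZMod p) + (w : ZMod p)) = ε w : Finset ℕ) := by
    ext n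
    simp only [Set.mem_ofPred_eq, Finset.coe_filter, Finset.mem_Icc, legendreSym, Int.cast_natCast,
      Nat.cast_add, Int.cast_add]
    constructor
    · rintro ⟨h1, h2, _, h3⟩
      exact ⟨⟨h1, by omega⟩, h3⟩
    · rintro ⟨⟨h1, h2⟩, h3⟩
      exact ⟨h1, by omega, hp, h3⟩
  rw [hset, Set.ncard_coe_finset]
  have hc : (2 : ℤ) ^ W.card * (((Finset.Icc 1 (p - 1 - m)).filter fun n : ℕ => ∀ w ∈ W,
          quadraticChar (ZMod p) ((n : ZMod p) + (w : ZMod p)) = ε w).card : ℤ)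
      = ∑ n ∈ Finset.Icc 1 (p - 1 - m), G (n : ZMod p) := by
    rw [Finset.card_filter]
    push_cast
    rw [Finset.mul_sum]
    refine Finset.sum_congr rfl fun n hn => ?_
    rw [Finset.mem_Icc] at hn
    have hnz : ∀ w ∈ W, quadraticChar (ZMod p) ((n : ZMod p) + (w : ZMod p)) = 1 ∨
        quadraticChar (ZMod p) ((n : ZMod p) + (w : ZMod p)) = -1 := by
      intro w hw
      apply quadraticChar_dichotomy
      intro h0
      have h1 : ((n + w : ℕ) : ZMod p) = 0 := by push_cast; exact h0
      rw [ZMod.natCast_eq_zero_iff] at h1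
      have := Nat.le_of_dvd (by omega) h1
      have := hm w hw
      omega
    split_ifs with h
    · rw [mul_one, ← Finset.prod_const]
      refine Finset.prod_congr rfl fun w hw => ?_
      rw [h w hw]
      rcases hε w hw with h | h <;> rw [h] <;> norm_num
    · rw [mul_zero]
      push Not at h
      obtain ⟨w, hw, hne⟩ := h
      symm
      apply Finset.prod_eq_zero hw
      rcases hε w hw with h | h <;> rcases hnz w hw with h' | h' <;> rw [h, h'] at hne <;>
        first | exact absurd rfl hne | (rw [h, h']; norm_num)
  rw [hc, sum_zmod_range G]
  have hsub : Finset.Icc 1 (p - 1 - m) ⊆ Finset.range p := by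
    intro n hn
    rw [Finset.mem_Icc] at hn
    rw [Finset.mem_range]; omega
  rw [← Finset.sum_sdiff hsub, abs_sub_comm, add_sub_cancel_right,
    abs_of_nonneg (Finset.sum_nonneg fun n _ => hG0 _)]
  refine (Finset.sum_le_card_nsmul _ _ (2 ^ W.card) fun n _ => hG2 _).trans ?_
  rw [nsmul_eq_mul]
  refine mul_le_mul_of_nonneg_right ?_ (by positivity)
  rw [Finset.card_sdiff_of_subset hsub]
  simp only [Finset.card_range, Nat.card_Icc]
  have : p - (p - 1 - m + 1 - 1) ≤ m + 1 := by omega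
  exact_mod_cast this

theorem pattern_sum {p : ℕ} [hp : Fact p.Prime] (W : Finset ℕ) (ε : ℕ → ℤ)
    (hε : ∀ w ∈ W, ε w = 1 ∨ ε w = -1) (δ : ℝ)
    (h : ∀ S ∈ W.powerset, S.Nonempty →
      |((∑ x : ZMod p, ∏ w ∈ S, quadraticChar (ZMod p) (x + (w : ZMod p)) : ℤ) : ℝ)| ≤ δ * p)
    (hδ : 0 ≤ δ) :
    |((∑ x : ZMod p, ∏ w ∈ W, (1 + ε w * quadraticChar (ZMod p) (x + (w : ZMod p))) : ℤ) : ℝ) - p|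
      ≤ 2 ^ W.card * (δ * p) := by
  classical
  have h1 : ∑ x : ZMod p, ∏ w ∈ W, (1 + ε w * quadraticChar (ZMod p) (x + (w : ZMod p)))
      = ∑ S ∈ W.powerset, (∏ w ∈ S, ε w) *
          ∑ x : ZMod p, ∏ w ∈ S, quadraticChar (ZMod p) (x + (w : ZMod p)) := by
    simp_rw [Finset.prod_one_add, Finset.prod_mul_distrib]
    rw [Finset.sum_comm]
    simp_rw [Finset.mul_sum]
  have h2 : ∑ x : ZMod p, ∏ w ∈ W, (1 + ε w * quadraticChar (ZMod p) (x + (w : ZMod p))) - (p : ℤ)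
      = ∑ S ∈ W.powerset.erase ∅, (∏ w ∈ S, ε w) *
          ∑ x : ZMod p, ∏ w ∈ S, quadraticChar (ZMod p) (x + (w : ZMod p)) := by
    rw [h1, ← Finset.add_sum_erase _ _ (Finset.empty_mem_powerset W)]
    simp
  have h3 : ((∑ x : ZMod p, ∏ w ∈ W, (1 + ε w * quadraticChar (ZMod p) (x + (w : ZMod p))) : ℤ) : ℝ)
      - p = ∑ S ∈ W.powerset.erase ∅, ((∏ w ∈ S, ε w : ℤ) : ℝ) *
          ((∑ x : ZMod p, ∏ w ∈ S, quadraticChar (ZMod p) (x + (w : ZMod p)) : ℤ) : ℝ) := by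
    exact_mod_cast h2
  rw [h3]
  refine (Finset.abs_sum_le_sum_abs _ _).trans ?_
  refine (Finset.sum_le_card_nsmul _ _ (δ * p) ?_).trans ?_
  · intro S hS
    rw [Finset.mem_erase] at hS
    rw [abs_mul]
    have : |((∏ w ∈ S, ε w : ℤ) : ℝ)| = 1 := by
      push_cast
      rw [Finset.abs_prod]
      apply Finset.prod_eq_one
      intro w hw
      rcases hε w (Finset.mem_powerset.mp hS.2 hw) with h | h <;> rw [h] <;> norm_num
    rw [this, one_mul]
    exact h S hS.2 (Finset.nonempty_iff_ne_empty.mpr hS.1)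
  · rw [nsmul_eq_mul]
    refine mul_le_mul_of_nonneg_right ?_ (by positivity)
    have : (W.powerset.erase ∅).card ≤ 2 ^ W.card := by
      rw [← Finset.card_powerset]; exact Finset.card_erase_le
    exact_mod_cast this

theorem pattern_tendsto (W : Finset ℕ) (ε : ℕ → ℤ)
    (hε : ∀ w ∈ W, ε w = 1 ∨ ε w = -1) (m : ℕ) (hm : ∀ w ∈ W, w ≤ m) :
    Filter.Tendsto (fun p : ℕ =>
        ({n : ℕ | 1 ≤ n ∧ n + m ≤ p - 1 ∧
            ∃ hp : Fact p.Prime, ∀ w ∈ W,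
              @legendreSym p hp ((n + w : ℕ) : ℤ) = ε w}.ncard : ℝ) / (p : ℝ))
      (Filter.atTop ⊓ Filter.principal {p : ℕ | p.Prime})
      (nhds ((2 : ℝ) ^ (-(W.card : ℤ)))) := by
  classical
  rw [Metric.tendsto_nhds]
  intro η hη
  rw [Filter.eventually_inf_principal]
  have hc : ∀ S : Finset ℕ, ∃ P0 : ℕ, S.Nonempty → ∀ (p : ℕ) [Fact p.Prime], P0 ≤ p →
      |((∑ x : ZMod p, ∏ w ∈ S, quadraticChar (ZMod p) (x + (w : ZMod p)) : ℤ) : ℝ)|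
        ≤ (η / 3) * p := by
    intro S
    by_cases hS : S.Nonempty
    · obtain ⟨P0, h⟩ := charsum_small S hS (η / 3) (by positivity)
      exact ⟨P0, fun _ => h⟩
    · exact ⟨0, fun h => absurd h hS⟩
  choose P0 hP0 using hc
  obtain ⟨Q, hQ⟩ := exists_nat_gt ((m + 1) / (η / 3))
  rw [div_lt_iff₀ (by positivity)] at hQ
  filter_upwards [Filter.eventually_ge_atTop (W.powerset.sup P0 + Q + m + 1)] with p hpge hpp
  have : Fact p.Prime := ⟨hpp⟩
  have hpr : (0 : ℝ) < p := by exact_mod_cast hpp.pos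
  have hQp : (Q : ℝ) ≤ p := by exact_mod_cast (show Q ≤ p by omega)
  have k1 := pattern_count (p := p) W ε hε m hm (by omega)
  have k2 := pattern_sum (p := p) W ε hε (η / 3) (fun S hS hSn => hP0 S hSn p (by
    have : P0 S ≤ W.powerset.sup P0 := Finset.le_sup hS
    omega)) (by positivity)
  set c := {n : ℕ | 1 ≤ n ∧ n + m ≤ p - 1 ∧ ∃ hp : Fact p.Prime, ∀ w ∈ W,
              @legendreSym p hp ((n + w : ℕ) : ℤ) = ε w}.ncard with hcdef
  set Tot := ∑ x : ZMod p, ∏ w ∈ W, (1 + ε w * quadraticChar (ZMod p) (x + (w : ZMod p))) with hTot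
  have k1' : |(2 : ℝ) ^ W.card * (c : ℝ) - (Tot : ℝ)| ≤ (m + 1) * 2 ^ W.card := by
    exact_mod_cast k1
  have h2 : (0 : ℝ) < 2 ^ W.card := by positivity
  have k3 : |(2 : ℝ) ^ W.card * (c : ℝ) - p| ≤ 2 ^ W.card * ((2 * η / 3) * p) := by
    have := abs_sub_le ((2 : ℝ) ^ W.card * (c : ℝ)) (Tot : ℝ) p
    have h5 : ((m : ℝ) + 1) * 2 ^ W.card ≤ 2 ^ W.card * (η / 3 * p) := by
      rw [mul_comm]
      refine mul_le_mul_of_nonneg_left ?_ h2.le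
      nlinarith
    nlinarith
  rw [Real.dist_eq]
  have h6 : (c : ℝ) / p - 2 ^ (-(W.card : ℤ)) = ((2 : ℝ) ^ W.card * (c : ℝ) - p) / (2 ^ W.card * p) := by
    rw [zpow_neg, zpow_natCast]; field_simp
  rw [h6, abs_div, abs_of_pos (mul_pos h2 hpr), div_lt_iff₀ (mul_pos h2 hpr)]
  have h7 : 0 < 2 ^ W.card * p * η := by positivity
  nlinarith

/-- Proposition 9.3: let `W` be a nonempty finite set of nonnegative integers and `ε` a choice
of signs on `W`. Let `c_ε(p)` count the `n ≥ 1` with `n + max W ≤ p - 1` such that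
`χ_p(n + w) = ε(w)` for all `w ∈ W`, and let `c_σ(p)` count the `n ≥ 1` with
`n + max W ≤ p - 1` such that the shifted set `n + W` is exactly the set of quadratic residues
of `p` in `[n + min W, n + max W]`. Then, as `p → ∞` through the primes,
`c_ε(p)/p → 2^{-|W|}` and `c_σ(p)/p → 2^{-(1 + max W - min W)}`. -/
theorem residue_pattern_and_support_density (W : Finset ℕ) (hW : W.Nonempty)
    (ε : ℕ → ℤ) (hε : ∀ w ∈ W, ε w = 1 ∨ ε w = -1) :
    Filter.Tendsto (fun p : ℕ =>
        ({n : ℕ | 1 ≤ n ∧ n + W.max' hW ≤ p - 1 ∧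
            ∃ hp : Fact p.Prime, ∀ w ∈ W,
              @legendreSym p hp ((n + w : ℕ) : ℤ) = ε w}.ncard : ℝ) / (p : ℝ))
      (Filter.atTop ⊓ Filter.principal {p : ℕ | p.Prime})
      (nhds ((2 : ℝ) ^ (-(W.card : ℤ)))) ∧
    Filter.Tendsto (fun p : ℕ =>
        ({n : ℕ | 1 ≤ n ∧ n + W.max' hW ≤ p - 1 ∧
            ∃ hp : Fact p.Prime, ∀ m : ℕ, n + W.min' hW ≤ m → m ≤ n + W.max' hW →
              (@legendreSym p hp (m : ℤ) = 1 ↔ ∃ w ∈ W, m = n + w)}.ncard : ℝ) / (p : ℝ))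
      (Filter.atTop ⊓ Filter.principal {p : ℕ | p.Prime})
      (nhds ((2 : ℝ) ^ (-(1 + (W.max' hW : ℤ) - (W.min' hW : ℤ))))) := by
  classical
  refine ⟨pattern_tendsto W ε hε (W.max' hW) (fun w hw => W.le_max' w hw), ?_⟩
  have hmm : W.min' hW ≤ W.max' hW := W.min'_le _ (W.max'_mem hW)
  have h := pattern_tendsto (Finset.Icc (W.min' hW) (W.max' hW))
    (fun w => if w ∈ W then 1 else -1) (by intro w _; split_ifs <;> simp) (W.max' hW)
    (fun w hw => (Finset.mem_Icc.mp hw).2)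
  have hcard : -(((Finset.Icc (W.min' hW) (W.max' hW)).card : ℕ) : ℤ)
      = -(1 + (W.max' hW : ℤ) - (W.min' hW : ℤ)) := by
    rw [Nat.card_Icc]; omega
  rw [hcard] at h
  refine h.congr fun p => ?_
  congr 3
  ext n
  simp only [Set.mem_ofPred_eq]
  refine and_congr_right fun h1 => and_congr_right fun h2 => exists_congr fun hp => ?_
  have hdich : ∀ w ≤ W.max' hW, @legendreSym p hp ((n + w : ℕ) : ℤ) = 1 ∨
      @legendreSym p hp ((n + w : ℕ) : ℤ) = -1 := by
    intro w hw
    apply legendreSym.eq_one_or_neg_one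
    rw [Int.cast_natCast, Ne, ZMod.natCast_eq_zero_iff]
    intro hd
    have := Nat.le_of_dvd (by omega) hd
    omega
  constructor
  · intro hall k hk1 hk2
    obtain ⟨w, rfl⟩ : ∃ w, k = n + w := ⟨k - n, by omega⟩
    rw [hall w (Finset.mem_Icc.mpr ⟨by omega, by omega⟩)]
    by_cases hw : w ∈ W
    · simp [hw]
    · simp [hw]
  · intro hall w hw
    rw [Finset.mem_Icc] at hw
    have h3 := hall (n + w) (by omega) (by omega)
    have h4 : (∃ w' ∈ W, n + w = n + w') ↔ w ∈ W := by
      constructor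
      · rintro ⟨w', h5, h6⟩
        rwa [show w = w' by omega]
      · exact fun h5 => ⟨w, h5, rfl⟩
    rw [h4] at h3
    by_cases hw' : w ∈ W
    · rw [if_pos hw']; exact h3.mpr hw'
    · rw [if_neg hw']
      exact (hdich w hw.2).resolve_left fun h5 => hw' (h3.mp h5)
end

section
/- Let h : ℕ → ℕ satisfy h(q) ≥ 1 for all q, h(q) → ∞ as q → ∞ through the primes, and h(q)^r/√q → 0 as q → ∞ through the primes for every positive integer r. For an odd prime p and an integer x, set S_{h(p)}(x) = ∑_{n=x+1}^{x+h(p)} χ_p(n). Then for every real number λ, (1/p)·#{x ∈ {0, 1, …, p-1} : S_{h(p)}(x) ≤ λ·√(h(p))} → (1/√(2π))·∫_{-∞}^{λ} e^{-t²/2} dt as p → ∞ through the primes. -/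
open Polynomial in
theorem st_nonvanish {p : ℕ} [Fact p.Prime] (hp2 : p ≠ 2) (f : (ZMod p)[X])
    (hf0 : f.eval 0 ≠ 0) (α : ZMod p) (hα : Odd (f.rootMultiplicity α))
    (d : ℕ) (hd : 2 * d + f.natDegree ≤ p + 1) (J : ℕ) :
    ∀ (r s : ℕ → (ZMod p)[X]), (∀ j, (r j).degree < d) → (∀ j, (s j).degree < d) →
      ∑ j ∈ Finset.range J, (r j + s j * f ^ (p / 2)) * X ^ (j * p) = 0 →
      ∀ j < J, r j = 0 ∧ s j = 0 := by
  have hp : p.Prime := Fact.out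
  have hodd : p = 2 * (p / 2) + 1 := by
    have := hp.eq_two_or_odd; omega
  have hfne : f ≠ 0 := by rintro rfl; simp at hf0
  induction J with
  | zero => intro r s _ _ _ j hj; omega
  | succ J ih =>
    intro r s hr hs hsum
    rw [Finset.sum_range_succ'] at hsum
    have hX : ∑ k ∈ Finset.range J, (r (k + 1) + s (k + 1) * f ^ (p / 2)) * X ^ ((k + 1) * p)
        = X ^ p * ∑ k ∈ Finset.range J, (r (k + 1) + s (k + 1) * f ^ (p / 2)) * X ^ (k * p) := by
      rw [Finset.mul_sum]
      refine Finset.sum_congr rfl fun k _ => ?_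
      rw [show (k + 1) * p = p + k * p by ring, pow_add]; ring
    rw [hX] at hsum
    simp only [zero_mul, pow_zero, mul_one] at hsum
    set Q := ∑ k ∈ Finset.range J, (r (k + 1) + s (k + 1) * f ^ (p / 2)) * X ^ (k * p) with hQ
    have h1 : r 0 + s 0 * f ^ (p / 2) = - (X ^ p * Q) := by linear_combination hsum
    -- f^p = C + X^p u
    obtain ⟨u, hu⟩ : X ∣ f - C (f.eval 0) := by
      rw [X_dvd_iff]; simp [coeff_zero_eq_eval_zero]
    have hfp : f ^ p = C (f.eval 0 ^ p) + X ^ p * u ^ p := by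
      have : f = C (f.eval 0) + X * u := by linear_combination hu
      conv_lhs => rw [this]
      rw [add_pow_char, mul_pow, C_pow]
    have hdvd : X ^ p ∣ r 0 ^ 2 * f - C (f.eval 0 ^ p) * s 0 ^ 2 := by
      have hg : f ^ p = f ^ (p / 2) * f ^ (p / 2) * f := by
        rw [← pow_add, ← pow_succ, ← two_mul, ← hodd]
      refine ⟨- Q * (r 0 - s 0 * f ^ (p / 2)) * f + s 0 ^ 2 * u ^ p, ?_⟩
      have : C (f.eval 0 ^ p) = f ^ (p / 2) * f ^ (p / 2) * f - X ^ p * u ^ p := by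
        rw [← hg, hfp]; ring
      rw [this]
      linear_combination (r 0 - s 0 * f ^ (p / 2)) * f * h1
    have hnd : ∀ q : (ZMod p)[X], q.degree < d → q ≠ 0 → q.natDegree + 1 ≤ d := by
      intro q hq hq0
      rw [degree_eq_natDegree hq0] at hq
      exact_mod_cast hq
    have hppos := hp.pos
    have hzero : r 0 ^ 2 * f - C (f.eval 0 ^ p) * s 0 ^ 2 = 0 := by
      by_contra hne
      have h2 := natDegree_le_of_dvd hdvd hne
      rw [natDegree_X_pow] at h2
      have h3 : (r 0 ^ 2 * f - C (f.eval 0 ^ p) * s 0 ^ 2).natDegree < p := by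
        refine lt_of_le_of_lt (natDegree_sub_le _ _) (max_lt ?_ ?_)
        · by_cases h0 : r 0 = 0
          · simp [h0, hppos]
          · have := hnd _ (hr 0) h0
            have := natDegree_mul_le (p := r 0 ^ 2) (q := f)
            have := natDegree_pow_le (p := r 0) (n := 2)
            omega
        · by_cases h0 : s 0 = 0
          · simp [h0, hppos]
          · have := hnd _ (hs 0) h0
            have := natDegree_C_mul_le (f.eval 0 ^ p) (s 0 ^ 2)
            have := natDegree_pow_le (p := s 0) (n := 2)
            omega
      omega
    have hc : C (f.eval 0 ^ p) ≠ 0 := by simpa using fun h => absurd h hf0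
    have hr0 : r 0 = 0 := by
      by_contra h0
      have hs0 : s 0 ≠ 0 := by
        intro h; rw [h] at hzero; simp [h0, hfne] at hzero
      have heq : r 0 ^ 2 * f = C (f.eval 0 ^ p) * s 0 ^ 2 := sub_eq_zero.1 hzero
      have := congrArg (fun q => Multiset.count α q.roots) heq
      rw [roots_C_mul _ (by simpa using hc), roots_mul (mul_ne_zero (pow_ne_zero _ h0) hfne),
        roots_pow, roots_pow, Multiset.count_add, Multiset.count_nsmul, Multiset.count_nsmul,
        count_roots f] at this
      obtain ⟨e, he⟩ := hα
      omega
    have hs0 : s 0 = 0 := by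
      rw [hr0] at hzero
      by_contra h0
      have : C (f.eval 0 ^ p) * s 0 ^ 2 = 0 := by linear_combination -hzero
      exact mul_ne_zero hc (pow_ne_zero _ h0) this
    have hQ0 : Q = 0 := by
      rw [hr0, hs0] at hsum
      have : X ^ p * Q = 0 := by linear_combination hsum
      exact (mul_eq_zero.1 this).resolve_left (pow_ne_zero _ X_ne_zero)
    have := ih (fun j => r (j + 1)) (fun j => s (j + 1)) (fun j => hr _) (fun j => hs _) hQ0
    intro j hj
    cases j with
    | zero => exact ⟨hr0, hs0⟩
    | succ j => exact this j (by omega)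

open Polynomial in
/-- The linear operators of Stepanov's method. -/
noncomputable def stW {F : Type*} [Field F] (f : F[X]) (c : F) (l : ℕ) : ℕ → F[X] →ₗ[F] F[X]
  | 0 => LinearMap.id
  | k + 1 =>
    (LinearMap.mulLeft F (C (((l - k : ℕ) : F) + c) * derivative f)
      + (LinearMap.mulLeft F f) ∘ₗ derivative) ∘ₗ stW f c l k

open Polynomial in
theorem stW_succ {F : Type*} [Field F] (f : F[X]) (c : F) (l k : ℕ) (s : F[X]) :
    stW f c l (k + 1) s = C (((l - k : ℕ) : F) + c) * derivative f * stW f c l k s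
      + f * derivative (stW f c l k s) := by
  simp [stW, mul_assoc]

open Polynomial in
theorem stW_degree {F : Type*} [Field F] (f : F[X]) (c : F) (l d : ℕ) (s : F[X])
    (hs : s ∈ degreeLT F d) (k : ℕ) : stW f c l k s ∈ degreeLT F (d + k * f.natDegree) := by
  have key : ∀ (a b : F[X]) (n : ℕ), a.natDegree ≤ f.natDegree → b ∈ degreeLT F n →
      a * b ∈ degreeLT F (n + f.natDegree) := by
    intro a b n ha hb
    rw [mem_degreeLT] at hb ⊢
    by_cases hb0 : b = 0
    · simp [hb0]
    by_cases ha0 : a = 0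
    · simp [ha0]
    rw [degree_eq_natDegree hb0] at hb
    rw [degree_eq_natDegree (mul_ne_zero ha0 hb0), natDegree_mul ha0 hb0]
    have : b.natDegree < n := by exact_mod_cast hb
    exact_mod_cast (by omega)
  induction k with
  | zero => simpa [stW] using hs
  | succ k ih =>
    rw [stW_succ, add_mul, one_mul, ← add_assoc]
    refine Submodule.add_mem _ (key _ _ _ ?_ ih) (key _ _ _ le_rfl ?_)
    · refine (natDegree_C_mul_le _ _).trans ((natDegree_derivative_le _).trans (Nat.sub_le _ _))
    · rw [mem_degreeLT] at ih ⊢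
      exact lt_of_le_of_lt (degree_derivative_le) ih

open Polynomial in
theorem stW_deriv {F : Type*} [Field F] (f : F[X]) (c : F) (l : ℕ) (s G : F[X])
    (hG : f * derivative G = C c * derivative f * G) (k : ℕ) (hk : k ≤ l) :
    derivative^[k] (f ^ l * s * G) = f ^ (l - k) * stW f c l k s * G := by
  induction k with
  | zero => simp [stW]
  | succ k ih =>
    rw [Function.iterate_succ_apply', ih (by omega), stW_succ]
    obtain ⟨n, hn⟩ : ∃ n, l - k = n + 1 := ⟨l - k - 1, by omega⟩
    have hn' : l - (k + 1) = n := by omega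
    rw [hn, hn']
    simp only [derivative_mul, derivative_pow_succ, C_add, map_natCast]
    push_cast
    simp only [map_one]
    linear_combination f ^ n * stW f c l k s * hG


open Polynomial in
theorem st_count {p : ℕ} [Fact p.Prime] (hp2 : p ≠ 2) (f : (ZMod p)[X])
    (hf0 : f.eval 0 ≠ 0) (α : ZMod p) (hα : Odd (f.rootMultiplicity α))
    (d : ℕ) (hd : 2 * d + f.natDegree ≤ p + 1) (J l : ℕ) (hl : 1 ≤ l) (hlp : l ≤ p)
    (hcount : l * (d + l * f.natDegree + J) < 2 * (J * d)) (a : ZMod p) :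
    l * (Finset.univ.filter fun x : ZMod p => (f.eval x) ^ (p / 2) = a).card
      ≤ l * f.natDegree + (d + (p / 2) * f.natDegree + (J - 1) * p) := by
  classical
  have hp : p.Prime := Fact.out
  set m := f.natDegree with hm
  set D := d + l * m + J with hD
  set c : (ZMod p) := ((p / 2 : ℕ) : (ZMod p)) with hc
  -- the linear system
  let σ : ((Fin J → degreeLT (ZMod p) d) × (Fin J → degreeLT (ZMod p) d)) →ₗ[(ZMod p)] (Fin l → (ZMod p)[X]) :=
    LinearMap.pi fun k =>
      ∑ j : Fin J, (LinearMap.mulRight (ZMod p) (X ^ (j : ℕ) : (ZMod p)[X])) ∘ₗ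
        ((stW f 0 l k ∘ₗ (degreeLT (ZMod p) d).subtype ∘ₗ LinearMap.proj j ∘ₗ LinearMap.fst (ZMod p) _ _)
        + a • (stW f c l k ∘ₗ (degreeLT (ZMod p) d).subtype ∘ₗ LinearMap.proj j ∘ₗ LinearMap.snd (ZMod p) _ _))
  have hσ : ∀ v k, σ v k = ∑ j : Fin J, (stW f 0 l k (v.1 j : (ZMod p)[X])
      + a • stW f c l k (v.2 j : (ZMod p)[X])) * X ^ (j : ℕ) := by
    intro v k
    simp [σ]
  let Φ : ((Fin J → degreeLT (ZMod p) d) × (Fin J → degreeLT (ZMod p) d)) →ₗ[(ZMod p)] (Fin l → Fin D → (ZMod p)) :=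
    LinearMap.pi fun k => LinearMap.pi fun i => lcoeff (ZMod p) i ∘ₗ LinearMap.proj k ∘ₗ σ
  have hker : LinearMap.ker Φ ≠ ⊥ := by
    apply LinearMap.ker_ne_bot_of_finrank_lt
    have hfd : Module.finrank (ZMod p) (degreeLT (ZMod p) d) = d := by
      rw [(degreeLTEquiv (ZMod p) d).finrank_eq]; simp
    rw [Module.finrank_prod, Module.finrank_pi_fintype, Module.finrank_pi_fintype]
    simp only [hfd, Module.finrank_pi_fintype, Module.finrank_self, mul_one, Finset.sum_const, Finset.card_univ, Fintype.card_fin,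
      smul_eq_mul]
    omega
  obtain ⟨v, hv, hv0⟩ := (Submodule.ne_bot_iff _).1 hker
  have hσ0 : ∀ k, σ v k = 0 := by
    intro k
    have hmem : σ v k ∈ degreeLT (ZMod p) D := by
      rw [hσ]
      refine Submodule.sum_mem _ fun j _ => ?_
      have h1 : stW f 0 l k (v.1 j : (ZMod p)[X]) + a • stW f c l k (v.2 j : (ZMod p)[X])
          ∈ degreeLT (ZMod p) (d + k * m) :=
        Submodule.add_mem _ (stW_degree f 0 l d _ (v.1 j).2 k)
          (Submodule.smul_mem _ _ (stW_degree f c l d _ (v.2 j).2 k))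
      rw [mem_degreeLT] at h1 ⊢
      set w := stW f 0 l k (v.1 j : (ZMod p)[X]) + a • stW f c l k (v.2 j : (ZMod p)[X])
      by_cases hw : w = 0
      · simp [hw]
      rw [degree_eq_natDegree hw] at h1
      have h1' : w.natDegree < d + k * m := by exact_mod_cast h1
      rw [degree_mul, degree_X_pow, degree_eq_natDegree hw]
      have h2 : (k : ℕ) * m ≤ l * m := Nat.mul_le_mul_right _ k.2.le
      have := j.2
      exact_mod_cast (by omega : w.natDegree + (j : ℕ) < D)
    ext i
    by_cases hi : i < D
    · have := congrFun (congrFun (LinearMap.mem_ker.1 hv) k) ⟨i, hi⟩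
      simpa [Φ] using this
    · rw [mem_degreeLT] at hmem
      rw [coeff_zero]
      apply coeff_eq_zero_of_degree_lt
      exact lt_of_lt_of_le hmem (by exact_mod_cast not_lt.1 hi)
  -- the auxiliary polynomial
  let r : ℕ → (ZMod p)[X] := fun j => if h : j < J then (v.1 ⟨j, h⟩ : (ZMod p)[X]) else 0
  let s : ℕ → (ZMod p)[X] := fun j => if h : j < J then (v.2 ⟨j, h⟩ : (ZMod p)[X]) else 0
  have hr : ∀ j, (r j).degree < d := by
    intro j
    by_cases h : j < J
    · simpa [r, h] using mem_degreeLT.1 (v.1 ⟨j, h⟩).2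
    · simp [r, h]
  have hs : ∀ j, (s j).degree < d := by
    intro j
    by_cases h : j < J
    · simpa [s, h] using mem_degreeLT.1 (v.2 ⟨j, h⟩).2
    · simp [s, h]
  set P := ∑ j ∈ Finset.range J, (r j + s j * f ^ (p / 2)) * X ^ (j * p) with hP
  have hP0 : P ≠ 0 := by
    intro h
    have := st_nonvanish hp2 f hf0 α hα d hd J r s hr hs h
    apply hv0
    ext1 <;> ext1 j <;> ext1
    · simpa [r] using (this j j.2).1
    · simpa [s] using (this j j.2).2
  have hfne : f ≠ 0 := by rintro rfl; simp at hf0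
  set R := f ^ l * P with hR
  have hR0 : R ≠ 0 := mul_ne_zero (pow_ne_zero _ hfne) hP0
  have hder : ∀ k ≤ l, derivative^[k] R = ∑ j : Fin J, (f ^ (l - k) * stW f 0 l k (v.1 j : (ZMod p)[X]) *
      X ^ ((j : ℕ) * p) + f ^ (l - k) * stW f c l k (v.2 j : (ZMod p)[X]) *
      (f ^ (p / 2) * X ^ ((j : ℕ) * p))) := by
    intro k hk
    have hZ : ∀ j : ℕ, derivative (X ^ (j * p) : (ZMod p)[X]) = 0 := by
      intro j; rw [derivative_X_pow]; simp
    have : R = ∑ j : Fin J, (f ^ l * (v.1 j : (ZMod p)[X]) *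
      X ^ ((j : ℕ) * p) + f ^ l * (v.2 j : (ZMod p)[X]) *
      (f ^ (p / 2) * X ^ ((j : ℕ) * p))) := by
      rw [hR, hP, Finset.mul_sum, Finset.sum_range]
      refine Finset.sum_congr rfl fun j _ => ?_
      simp only [r, s, j.2, dif_pos]
      ring
    rw [this, iterate_derivative_sum]
    refine Finset.sum_congr rfl fun j _ => ?_
    rw [iterate_map_add]
    congr 1
    · exact stW_deriv f 0 l _ _ (by rw [hZ]; simp) k hk
    · refine stW_deriv f c l _ _ ?_ k hk
      rw [derivative_mul, hZ, derivative_pow]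
      have : p / 2 = (p / 2 - 1) + 1 := by have := hp.two_le; omega
      have h2 : f ^ (p / 2) = f ^ (p / 2 - 1) * f := by rw [← pow_succ, ← this]
      rw [h2]
      simp only [hc]
      ring
  have hroot : ∀ x : (ZMod p), f.eval x ^ (p / 2) = a → l ≤ R.rootMultiplicity x := by
    intro x hx
    have := lt_rootMultiplicity_of_isRoot_iterate_derivative_of_mem_nonZeroDivisors
      (p := R) (t := x) (n := l - 1) hR0 ?_ ?_
    · omega
    · intro k hk
      have hkl : k < l := by omega
      rw [IsRoot, hder k hkl.le, eval_finsetSum]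
      have h0 := congrArg (eval x) (hσ0 ⟨k, hkl⟩)
      rw [hσ, eval_finsetSum, eval_zero] at h0
      refine Eq.trans ?_ (mul_eq_zero_of_right (eval x f ^ (l - k)) h0)
      rw [Finset.mul_sum]
      refine Finset.sum_congr rfl fun j _ => ?_
      have hxp : x ^ ((j : ℕ) * p) = x ^ (j : ℕ) := by
        rw [mul_comm, pow_mul, ZMod.pow_card]
      simp only [eval_add, eval_mul, eval_pow, eval_X, eval_smul, smul_eq_mul, hx, hxp]
      ring
    · apply mem_nonZeroDivisors_of_ne_zero
      rw [Ne, CharP.cast_eq_zero_iff (ZMod p) p, hp.dvd_factorial]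
      omega
  have hle : l * (Finset.univ.filter fun x : (ZMod p) => (f.eval x) ^ (p / 2) = a).card
      ≤ R.natDegree := by
    refine le_trans ?_ (card_roots' R)
    rw [← Multiset.toFinset_sum_count_eq, mul_comm, ← smul_eq_mul, ← Finset.sum_const]
    refine le_trans (Finset.sum_le_sum (g := fun x => R.roots.count x) ?_)
      (Finset.sum_le_sum_of_subset ?_)
    · intro x hx
      rw [count_roots]
      exact hroot x (Finset.mem_filter.1 hx).2
    · intro x hx
      have := hroot x (Finset.mem_filter.1 hx).2
      rw [Multiset.mem_toFinset, ← Multiset.count_pos, count_roots]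
      omega
  refine hle.trans ?_
  refine natDegree_mul_le.trans (add_le_add natDegree_pow_le ?_)
  refine natDegree_sum_le_of_forall_le _ _ ?_
  intro j hj
  have hj' := Finset.mem_range.1 hj
  have hn : ∀ q : (ZMod p)[X], q.degree < d → q.natDegree ≤ d := fun q hq =>
    natDegree_le_of_degree_le hq.le
  refine natDegree_mul_le.trans (add_le_add ?_ ?_)
  · refine (natDegree_add_le _ _).trans (max_le ((hn _ (hr j)).trans (Nat.le_add_right _ _)) ?_)
    exact natDegree_mul_le.trans (add_le_add (hn _ (hs j)) natDegree_pow_le)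
  · rw [natDegree_X_pow]
    exact Nat.mul_le_mul_right _ (by omega)


open Polynomial in
theorem st_bound {p : ℕ} [Fact p.Prime] (hp2 : p ≠ 2) (f : (ZMod p)[X])
    (hf0 : f.eval 0 ≠ 0) (α : ZMod p) (hα : Odd (f.rootMultiplicity α))
    (d L : ℕ) (hd : 2 * d + f.natDegree ≤ p + 1) (hL : 1 ≤ L) (hLp : 2 * L ≤ p)
    (hLd : L * (2 * L * f.natDegree + L + 1) < d) :
    2 * (L : ℤ) * |∑ x : ZMod p, quadraticChar (ZMod p) (f.eval x)|
      ≤ 6 * L * f.natDegree + (f.natDegree + 1) * p + 1 := by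
  classical
  have hp : p.Prime := Fact.out
  have hcnt := st_count hp2 f hf0 α hα d hd (L + 1) (2 * L) (by omega) hLp (by nlinarith)
  have hp1 := hcnt 1
  have hpm := hcnt (-1)
  set m := f.natDegree with hm
  have hfne : f ≠ 0 := by rintro rfl; simp at hf0
  set N1 := (Finset.univ.filter fun x : ZMod p => (f.eval x) ^ (p / 2) = 1).card with hN1
  set N2 := (Finset.univ.filter fun x : ZMod p => (f.eval x) ^ (p / 2) = -1).card with hN2
  set N0 := (Finset.univ.filter fun x : ZMod p => f.eval x = 0).card with hN0
  have hN0m : N0 ≤ m := by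
    refine le_trans ?_ (card_roots' f)
    refine le_trans (Finset.card_le_card ?_) (Multiset.toFinset_card_le f.roots)
    intro x hx
    simpa [hfne] using hx
  have hpodd : 2 * (p / 2) + 1 = p := by have := hp.eq_two_or_odd; omega
  have hne1 : (-1 : ZMod p) ≠ 1 := by
    have : Fact (2 < p) := ⟨by have := hp.two_le; omega⟩
    exact ZMod.neg_one_ne_one
  have hpt : ∀ x : ZMod p,
      quadraticChar (ZMod p) (f.eval x) = (if f.eval x ^ (p / 2) = 1 then (1 : ℤ) else 0)
        - (if f.eval x ^ (p / 2) = -1 then 1 else 0) ∧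
      (1 : ℤ) = (if f.eval x ^ (p / 2) = 1 then (1 : ℤ) else 0)
        + (if f.eval x ^ (p / 2) = -1 then 1 else 0) + (if f.eval x = 0 then 1 else 0) := by
    intro x
    have hp20 : p / 2 ≠ 0 := by have := hp.two_le; omega
    by_cases h0 : f.eval x = 0
    · simp [h0, hp20]
    · have hq := quadraticChar_eq_pow_of_char_ne_two (F := ZMod p)
        (by rw [ZMod.ringChar_zmod_n]; exact hp2) h0
      rw [ZMod.card] at hq
      rcases ZMod.pow_div_two_eq_neg_one_or_one p h0 with h | h
      · rw [hq]; simp [h, h0, hne1.symm]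
      · rw [hq]; simp [h, h0, hne1]
  have hsum : ∑ x : ZMod p, quadraticChar (ZMod p) (f.eval x) = N1 - N2 := by
    rw [Finset.sum_congr rfl fun x _ => (hpt x).1, Finset.sum_sub_distrib]
    simp [hN1, hN2]
  have htot : (p : ℤ) = N1 + N2 + N0 := by
    have : ∑ x : ZMod p, (1 : ℤ) = p := by simp
    rw [← this, Finset.sum_congr rfl fun x _ => (hpt x).2, Finset.sum_add_distrib,
      Finset.sum_add_distrib]
    simp [hN1, hN2, hN0]
  rw [hsum]
  have e1 : (2 * L * N1 : ℤ) ≤ 2 * L * m + (d + (p / 2 : ℕ) * m + L * p) := by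
    exact_mod_cast hp1
  have e2 : (2 * L * N2 : ℤ) ≤ 2 * L * m + (d + (p / 2 : ℕ) * m + L * p) := by
    exact_mod_cast hpm
  have e3 : (2 * (p / 2 : ℕ) + 1 : ℤ) = p := by exact_mod_cast hpodd
  have e4 : (2 * d + m : ℤ) ≤ p + 1 := by exact_mod_cast hd
  have e5 : (N0 : ℤ) ≤ m := by exact_mod_cast hN0m
  have e6 : (L : ℤ) * N0 ≤ L * m := by gcongr
  have e7 : (2 * (p / 2 : ℕ) + 1 : ℤ) * m = p * m := by rw [e3]
  have e8 : (L : ℤ) * p = L * (N1 + N2 + N0) := by rw [htot]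
  have hm0 : (0 : ℤ) ≤ m := by positivity
  rcases abs_cases ((N1 : ℤ) - N2) with ⟨h, _⟩ | ⟨h, _⟩ <;> rw [h] <;> nlinarith

theorem st_real_aux (m p L q : ℕ) (hq : q = Nat.sqrt p) (hL : L = q / (4 * (m + 1)))
    (hL1 : 1 ≤ L) (T : ℝ) (hT : 2 * (L : ℝ) * T ≤ 6 * L * m + (m + 1) * p + 1) :
    T ≤ (40 * (m + 1) ^ 2 : ℝ) * Real.sqrt p := by
  have hqp : (q : ℝ) ≤ Real.sqrt p := by
    rw [hq]; exact Real.nat_sqrt_le_real_sqrt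
  have hqp2 : Real.sqrt p ≤ q + 1 := by
    rw [hq]; exact Real.real_sqrt_le_nat_sqrt_succ
  have hLq : (q : ℝ) + 1 ≤ 4 * (m + 1) * (L + 1) := by
    have := Nat.lt_mul_div_succ q (show 0 < 4 * (m + 1) by omega)
    rw [← hL] at this
    exact_mod_cast this
  have hL1' : (1 : ℝ) ≤ L := by exact_mod_cast hL1
  have hs2 : Real.sqrt p * Real.sqrt p = p := Real.mul_self_sqrt (by positivity)
  set S := Real.sqrt p with hS
  have hm : (0 : ℝ) ≤ m := by positivity
  have h8 : S ≤ 8 * (m + 1) * L := by nlinarith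
  have hLS : (L : ℝ) ≤ S := by
    refine le_trans ?_ hqp
    exact_mod_cast (hL ▸ Nat.div_le_self _ _)
  have hS1 : 1 ≤ S := hL1'.trans hLS
  -- p ≤ S * 8 (m+1) L
  have hpS : (p : ℝ) ≤ S * (8 * (m + 1) * L) := by
    rw [← hs2]; gcongr
  have : 2 * (L : ℝ) * T ≤ 2 * L * ((40 * (m + 1) ^ 2 : ℝ) * S) := by
    refine hT.trans ?_
    have h1 : (m + 1 : ℝ) * p ≤ (m + 1) * (S * (8 * (m + 1) * L)) := by gcongr
    have h2 : 6 * (L : ℝ) * m ≤ 6 * L * ((m + 1) ^ 2 * S) := by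
      have : (m : ℝ) ≤ (m + 1) ^ 2 * S := by nlinarith [mul_nonneg hm hm]
      gcongr
    have h3 : (1 : ℝ) ≤ L * ((m + 1) ^ 2 * S) := by
      have : (1 : ℝ) ≤ (m + 1) ^ 2 := by nlinarith
      have : (1 : ℝ) ≤ (m + 1) ^ 2 * S := by nlinarith
      nlinarith
    nlinarith
  have hLpos : (0 : ℝ) < 2 * L := by linarith
  exact le_of_mul_le_mul_left this hLpos

open Polynomial in
/-- A Weil type bound for the quadratic character, by Stepanov's method. -/
theorem weil_tuple (k : ℕ) : ∀ (p : ℕ) [Fact p.Prime], 64 * (k + 1) ^ 2 ≤ p →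
    ∀ n : Fin k → ZMod p,
    (∃ b, Odd (Finset.univ.filter fun i => n i = b).card) →
    |((∑ x : ZMod p, ∏ i, quadraticChar (ZMod p) (x + n i) : ℤ) : ℝ)|
      ≤ (40 * (k + 1) ^ 2 : ℝ) * Real.sqrt p := by
  classical
  intro p _ hpk n ⟨b, hb⟩
  have hp : p.Prime := Fact.out
  have h3 : 64 * k + 64 ≤ p := by
    have : (k + 1) * 1 ≤ (k + 1) * (k + 1) := Nat.mul_le_mul_left _ (by omega)
    nlinarith
  have hp2 : p ≠ 2 := by omega
  -- choose a shift
  obtain ⟨c, hc⟩ : ∃ c : ZMod p, ∀ i, c + n i ≠ 0 := by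
    by_contra hcon
    push Not at hcon
    choose g hg using hcon
    have hinj : Function.Injective g := by
      intro x y hxy
      have h1 := hg x
      have h2 := hg y
      rw [hxy] at h1
      exact add_right_cancel (h1.trans h2.symm)
    have := Fintype.card_le_of_injective g hinj
    rw [ZMod.card, Fintype.card_fin] at this
    nlinarith
  set M : Multiset (ZMod p) := Finset.univ.val.map fun i => -(c + n i) with hM
  set f : (ZMod p)[X] := (M.map fun a => X - C a).prod with hf
  have hroots : f.roots = M := roots_multiset_prod_X_sub_C M
  have hdeg : f.natDegree = k := by
    rw [hf, natDegree_multiset_prod_X_sub_C_eq_card, hM]; simp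
  have heval : ∀ x, f.eval x = ∏ i, (x + (c + n i)) := by
    intro x
    rw [hf, hM, Multiset.map_map, eval_multiset_prod, Multiset.map_map]
    rw [Finset.prod]
    congr 1
    refine Multiset.map_congr rfl fun i _ => ?_
    simp [sub_eq_add_neg, add_comm]
  have hf0 : f.eval 0 ≠ 0 := by
    rw [heval, Finset.prod_ne_zero_iff]
    intro i _
    simpa using hc i
  have hodd : Odd (f.rootMultiplicity (-(c + b))) := by
    rw [← count_roots, hroots, hM, Multiset.count_map]
    convert hb using 1
    rw [Finset.card, Finset.filter_val]
    congr 1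
    refine Multiset.filter_congr fun i _ => ?_
    rw [neg_inj, add_right_inj, eq_comm]
  have hS : ∑ x : ZMod p, ∏ i, quadraticChar (ZMod p) (x + n i)
      = ∑ x : ZMod p, quadraticChar (ZMod p) (f.eval x) := by
    rw [← Equiv.sum_comp (Equiv.addRight c)]
    refine Finset.sum_congr rfl fun x _ => ?_
    rw [heval, map_prod]
    refine Finset.prod_congr rfl fun i _ => ?_
    simp [add_assoc]
  set q := Nat.sqrt p with hq
  set L := q / (4 * (k + 1)) with hL
  have hq8 : 8 * (k + 1) ≤ q := by
    rw [hq, Nat.le_sqrt]; nlinarith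
  have hL1 : 1 ≤ L := by
    rw [hL, Nat.le_div_iff_mul_le (by omega)]; omega
  have hLq : 4 * (k + 1) * L ≤ q := Nat.mul_div_le _ _
  have hqq : q * q ≤ p := Nat.sqrt_le p
  have hLL : (4 * (k + 1) * L) * (4 * (k + 1) * L) ≤ p :=
    (Nat.mul_le_mul hLq hLq).trans hqq
  have hbnd := st_bound hp2 f hf0 _ hodd ((p + 1 - k) / 2) L (by rw [hdeg]; omega) hL1
    (by nlinarith) (by
      rw [hdeg]
      have h1 : L * (2 * L * k + L + 1) ≤ L * L * (2 * (k + 1)) := by nlinarith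
      have h2 : 8 * (L * L * (2 * (k + 1))) ≤ p := by
        refine le_trans ?_ hLL
        have : 8 * (2 * (k + 1)) ≤ (4 * (k + 1)) * (4 * (k + 1)) := by nlinarith
        nlinarith [Nat.zero_le (L * L), Nat.mul_le_mul_left (L * L) this]
      omega)
  rw [hS]
  rw [hdeg] at hbnd
  refine st_real_aux k p L q hq hL hL1 _ ?_
  have : ((2 * (L : ℤ) * |∑ x : ZMod p, quadraticChar (ZMod p) (f.eval x)| : ℤ) : ℝ)
      ≤ ((6 * L * k + (k + 1) * p + 1 : ℤ) : ℝ) := by exact_mod_cast hbnd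
  push_cast at this ⊢
  exact this


theorem prod_fiber_pow {k H : ℕ} {M : Type*} [CommMonoid M] (t : Fin k → Fin H) (g : Fin H → M) :
    ∏ i, g (t i) = ∏ j, g j ^ (Finset.univ.filter fun i => t i = j).card := by
  rw [← Finset.prod_fiberwise (s := Finset.univ) (g := t)]
  refine Finset.prod_congr rfl fun j _ => ?_
  rw [← Finset.prod_const]
  refine Finset.prod_congr rfl fun i hi => ?_
  rw [(Finset.mem_filter.1 hi).2]

theorem rad_prod_even {k H : ℕ} (t : Fin k → Fin H)
    (ht : ∀ j, Even (Finset.univ.filter fun i => t i = j).card) :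
    ∑ ε : Fin H → ℤˣ, ∏ i, (((ε (t i) : ℤˣ) : ℤ) : ℝ) = 2 ^ H := by
  have : ∀ ε : Fin H → ℤˣ, ∏ i, (((ε (t i) : ℤˣ) : ℤ) : ℝ) = 1 := by
    intro ε
    rw [prod_fiber_pow t (fun j => (((ε j : ℤˣ) : ℤ) : ℝ))]
    refine Finset.prod_eq_one fun j _ => ?_
    rcases Int.units_eq_one_or (ε j) with h | h
    · simp [h]
    · simp [h, (ht j).neg_one_pow]
  rw [Finset.sum_congr rfl fun ε _ => this ε]
  simp [Fintype.card_units_int]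

theorem rad_prod_odd {k H : ℕ} (t : Fin k → Fin H) (j : Fin H)
    (ht : Odd (Finset.univ.filter fun i => t i = j).card) :
    ∑ ε : Fin H → ℤˣ, ∏ i, (((ε (t i) : ℤˣ) : ℤ) : ℝ) = 0 := by
  set A := ∑ ε : Fin H → ℤˣ, ∏ i, (((ε (t i) : ℤˣ) : ℤ) : ℝ) with hA
  have h : A = -A := by
    conv_lhs => rw [hA, ← Equiv.sum_comp (Equiv.mulLeft (Pi.mulSingle j (-1 : ℤˣ)))]
    rw [hA, ← Finset.sum_neg_distrib]
    refine Finset.sum_congr rfl fun ε _ => ?_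
    simp only [Equiv.coe_mulLeft, Pi.mul_apply, Units.val_mul, Int.cast_mul,
      Finset.prod_mul_distrib]
    have : ∏ i, ((((Pi.mulSingle j (-1 : ℤˣ) : Fin H → ℤˣ) (t i) : ℤˣ) : ℤ) : ℝ) = -1 := by
      rw [prod_fiber_pow t (fun l => ((((Pi.mulSingle j (-1 : ℤˣ) : Fin H → ℤˣ) l : ℤˣ) : ℤ) : ℝ)),
        Finset.prod_eq_single j]
      · simp [ht.neg_one_pow]
      · intro l _ hl
        simp [Pi.mulSingle_eq_of_ne hl]
      · simp
    rw [this]; ring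
  linarith

theorem char_prod_even {p : ℕ} [Fact p.Prime] {k H : ℕ} (t : Fin k → Fin H)
    (ht : ∀ j, Even (Finset.univ.filter fun i => t i = j).card) :
    |(∑ x : ZMod p, ∏ i, (quadraticChar (ZMod p) (x + (1 + ((t i : ℕ) : ZMod p))) : ℝ)) - p|
      ≤ k := by
  classical
  have hterm : ∀ x : ZMod p,
      ∏ i, (quadraticChar (ZMod p) (x + (1 + ((t i : ℕ) : ZMod p))) : ℝ)
        = 1 - if ∃ i, x = -(1 + ((t i : ℕ) : ZMod p)) then 1 else 0 := by
    intro x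
    split_ifs with h
    · obtain ⟨i, hi⟩ := h
      rw [sub_self]
      apply Finset.prod_eq_zero (Finset.mem_univ i)
      rw [hi]; simp
    · push Not at h
      rw [sub_zero, prod_fiber_pow t
        (fun j => (quadraticChar (ZMod p) (x + (1 + ((j : ℕ) : ZMod p))) : ℝ))]
      refine Finset.prod_eq_one fun j _ => ?_
      by_cases hj : x + (1 + ((j : ℕ) : ZMod p)) = 0
      · have : (Finset.univ.filter fun i => t i = j).card = 0 := by
          rw [Finset.card_eq_zero, Finset.filter_eq_empty_iff]
          intro i _ hi
          exact h i (by rw [hi]; exact eq_neg_of_add_eq_zero_left hj)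
        rw [this, pow_zero]
      · rcases quadraticChar_dichotomy hj with h' | h'
        · rw [h']; simp
        · rw [h']; simp [(ht j).neg_one_pow]
  rw [Finset.sum_congr rfl fun x _ => hterm x, Finset.sum_sub_distrib]
  simp only [Finset.sum_const, Finset.card_univ, ZMod.card, nsmul_eq_mul, mul_one,
    Finset.sum_boole, sub_sub_cancel_left, abs_neg, Nat.abs_cast, Nat.cast_le]
  have hsub : (Finset.univ.filter fun x : ZMod p => ∃ i, x = -(1 + ((t i : ℕ) : ZMod p)))
      ⊆ Finset.univ.image fun i => -(1 + ((t i : ℕ) : ZMod p)) := by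
    intro x hx
    obtain ⟨i, hi⟩ := (Finset.mem_filter.1 hx).2
    exact Finset.mem_image.2 ⟨i, Finset.mem_univ _, hi.symm⟩
  refine (Finset.card_le_card hsub).trans (Finset.card_image_le.trans ?_)
  simp

theorem moment_compare (k p H : ℕ) [Fact p.Prime] (hpk : 64 * (k + 1) ^ 2 ≤ p) (hH : H ≤ p) :
    |(∑ x : ZMod p, (∑ j : Fin H,
        (quadraticChar (ZMod p) (x + (1 + ((j : ℕ) : ZMod p))) : ℝ)) ^ k) / p
      - (∑ ε : Fin H → ℤˣ, (∑ j, (((ε j : ℤˣ) : ℤ) : ℝ)) ^ k) / 2 ^ H|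
      ≤ H ^ k * ((40 * (k + 1) ^ 2 : ℝ) / Real.sqrt p) := by
  have hp : p.Prime := Fact.out
  have hp0 : (0 : ℝ) < p := by exact_mod_cast hp.pos
  have hsq : 0 < Real.sqrt p := Real.sqrt_pos.2 hp0
  have hss : Real.sqrt p * Real.sqrt p = p := Real.mul_self_sqrt hp0.le
  simp_rw [Fintype.sum_pow]
  rw [Finset.sum_comm (s := (Finset.univ : Finset (ZMod p))),
    Finset.sum_comm (s := (Finset.univ : Finset (Fin H → ℤˣ))), Finset.sum_div, Finset.sum_div,
    ← Finset.sum_sub_distrib]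
  refine (Finset.abs_sum_le_sum_abs _ _).trans ?_
  have hterm : ∀ t : Fin k → Fin H,
      |(∑ x : ZMod p, ∏ i, (quadraticChar (ZMod p) (x + (1 + ((t i : ℕ) : ZMod p))) : ℝ)) / p
        - (∑ ε : Fin H → ℤˣ, ∏ i, (((ε (t i) : ℤˣ) : ℤ) : ℝ)) / 2 ^ H|
      ≤ (40 * (k + 1) ^ 2 : ℝ) / Real.sqrt p := by
    intro t
    by_cases ht : ∀ j, Even (Finset.univ.filter fun i => t i = j).card
    · rw [rad_prod_even t ht, div_self (by positivity)]
      have h1 := char_prod_even (p := p) t ht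
      set A := ∑ x : ZMod p, ∏ i, (quadraticChar (ZMod p) (x + (1 + ((t i : ℕ) : ZMod p))) : ℝ)
      have : A / p - 1 = (A - p) / p := by field_simp
      rw [this, abs_div, abs_of_pos hp0, div_le_div_iff₀ hp0 hsq]
      have h1p : (1 : ℝ) ≤ p := by exact_mod_cast hp.one_le
      have h2 : Real.sqrt p ≤ p := by
        have : 1 ≤ Real.sqrt p := Real.one_le_sqrt.2 h1p
        nlinarith
      have h3 : (k : ℝ) ≤ 40 * (k + 1) ^ 2 := by
        have : (0 : ℝ) ≤ k := by positivity
        nlinarith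
      exact mul_le_mul (h1.trans h3) h2 hsq.le (by positivity)
    · push Not at ht
      obtain ⟨j, hj⟩ := ht
      rw [Nat.not_even_iff_odd] at hj
      rw [rad_prod_odd t j hj, zero_div, sub_zero, abs_div, abs_of_pos hp0,
        div_le_div_iff₀ hp0 hsq]
      have hinj : ∀ a b : Fin H, (1 : ZMod p) + ((a : ℕ) : ZMod p) = 1 + ((b : ℕ) : ZMod p)
          ↔ a = b := by
        intro a b
        refine ⟨fun h => ?_, fun h => by rw [h]⟩
        have h := add_left_cancel h
        rw [ZMod.natCast_eq_natCast_iff'] at h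
        have ha := a.2
        have hb := b.2
        rw [Nat.mod_eq_of_lt (by omega), Nat.mod_eq_of_lt (by omega)] at h
        exact Fin.ext h
      have := weil_tuple k p hpk (fun i => 1 + ((t i : ℕ) : ZMod p))
        ⟨1 + ((j : ℕ) : ZMod p), by simpa only [hinj] using hj⟩
      push_cast at this
      calc _ ≤ (40 * (k + 1) ^ 2 * Real.sqrt p) * Real.sqrt p := by gcongr
        _ = _ := by rw [mul_assoc, hss]
  refine (Finset.sum_le_sum fun t _ => hterm t).trans ?_
  simp

/-- Moment generating function bound for Rademacher sums. -/
theorem rad_exp (H : ℕ) (z : ℂ) :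
    (∑ ε : Fin H → ℤˣ, Complex.exp (z * ∑ j, (((ε j : ℤˣ) : ℤ) : ℂ))) / 2 ^ H
      = Complex.cosh z ^ H := by
  have : ∀ ε : Fin H → ℤˣ, Complex.exp (z * ∑ j, (((ε j : ℤˣ) : ℤ) : ℂ))
      = ∏ j, Complex.exp (z * (((ε j : ℤˣ) : ℤ) : ℂ)) := by
    intro ε; rw [Finset.mul_sum, Complex.exp_sum]
  simp_rw [this]
  have h2 := Finset.prod_univ_sum (fun _ : Fin H => (Finset.univ : Finset ℤˣ))
    (fun _ u => Complex.exp (z * ((u : ℤ) : ℂ)))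
  rw [Fintype.piFinset_univ] at h2
  rw [← h2, Finset.prod_const, Finset.card_univ, Fintype.card_fin, ← div_pow]
  congr 1
  have : (Finset.univ : Finset ℤˣ) = {1, -1} := rfl
  rw [this, Finset.sum_pair (by decide), Complex.cosh]
  simp

theorem rad_exp_real (H : ℕ) (z : ℝ) :
    (∑ ε : Fin H → ℤˣ, Real.exp (z * ∑ j, (((ε j : ℤˣ) : ℤ) : ℝ))) / 2 ^ H
      = Real.cosh z ^ H := by
  have := rad_exp H z
  exact_mod_cast this

theorem rad_moment_bound (H K : ℕ) (hH : 1 ≤ H) (hK : Even K) (t : ℝ) :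
    (∑ ε : Fin H → ℤˣ, (t * ((∑ j, (((ε j : ℤˣ) : ℤ) : ℝ)) / Real.sqrt H)) ^ K / K.factorial)
      / 2 ^ H ≤ 2 * Real.exp (2 * t ^ 2) / 2 ^ K := by
  have hH0 : (0 : ℝ) < H := by exact_mod_cast hH
  set s := 2 * t / Real.sqrt H with hs
  have hpt : ∀ y : ℝ, (t * (y / Real.sqrt H)) ^ K / K.factorial
      ≤ (Real.exp (s * y) + Real.exp (-s * y)) / 2 ^ K := by
    intro y
    have e : t * (y / Real.sqrt H) = (s * y) / 2 := by rw [hs]; ring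
    rw [e, div_pow, div_right_comm]
    gcongr
    rw [← hK.pow_abs]
    refine (Real.pow_div_factorial_le_exp _ (abs_nonneg _) K).trans ?_
    rcases abs_cases (s * y) with ⟨h, _⟩ | ⟨h, _⟩ <;> rw [h]
    · have := Real.exp_pos (-s * y); linarith
    · rw [neg_mul]; have := Real.exp_pos (s * y); linarith
  calc _ ≤ (∑ ε : Fin H → ℤˣ, (Real.exp (s * (∑ j, (((ε j : ℤˣ) : ℤ) : ℝ)))
        + Real.exp (-s * (∑ j, (((ε j : ℤˣ) : ℤ) : ℝ)))) / 2 ^ K) / 2 ^ H := by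
        refine div_le_div_of_nonneg_right (Finset.sum_le_sum fun ε _ => hpt _) (by positivity)
    _ = (Real.cosh s ^ H + Real.cosh (-s) ^ H) / 2 ^ K := by
        rw [← Finset.sum_div, Finset.sum_add_distrib, ← rad_exp_real, ← rad_exp_real]
        ring
    _ ≤ _ := by
        rw [Real.cosh_neg, ← two_mul]
        gcongr
        have h1 := Real.cosh_le_exp_half_sq s
        calc Real.cosh s ^ H ≤ Real.exp (s ^ 2 / 2) ^ H := by
              gcongr
          _ = _ := by
              rw [← Real.exp_nat_mul]
              congr 1
              rw [hs, div_pow, Real.sq_sqrt hH0.le]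
              field_simp


theorem exp_I_taylor_aux (u : ℂ) (hu : ‖u‖ = 1) (hre : ∀ y : ℝ, ‖Complex.exp (u * y)‖ = 1) (K : ℕ) :
    ∀ y : ℝ, 0 ≤ y →
      ‖Complex.exp (u * y) - ∑ k ∈ Finset.range K, (u * y) ^ k / (k.factorial : ℂ)‖
        ≤ y ^ K / K.factorial := by
  induction K with
  | zero => intro y _; simp [hre]
  | succ K ih =>
    intro y hy
    have hd : ∀ x : ℝ, HasDerivAt (fun x : ℝ => Complex.exp (u * x)
        - ∑ k ∈ Finset.range (K + 1), (u * x) ^ k / (k.factorial : ℂ))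
        (u * (Complex.exp (u * x) - ∑ k ∈ Finset.range K, (u * x) ^ k / (k.factorial : ℂ))) x := by
      intro x
      have hlin : HasDerivAt (fun x : ℝ => u * (x : ℂ)) u x := by
        simpa using (Complex.ofRealCLM.hasDerivAt (x := x)).const_mul u
      have h1 : HasDerivAt (fun x : ℝ => Complex.exp (u * x)) (Complex.exp (u * x) * u) x :=
        hlin.cexp
      have h2 : HasDerivAt (fun x : ℝ => ∑ k ∈ Finset.range (K + 1),
          (u * x) ^ k / (k.factorial : ℂ))
          (∑ k ∈ Finset.range (K + 1), ((k : ℂ) * (u * x) ^ (k - 1) * u) / (k.factorial : ℂ)) x :=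
        HasDerivAt.fun_sum fun k _ => (hlin.pow k).div_const _
      refine (h1.sub h2).congr_deriv (Eq.symm ?_)
      rw [Finset.sum_range_succ', mul_sub, mul_comm u, Finset.mul_sum]
      congr 1
      simp only [Nat.cast_zero, zero_mul, zero_div, add_zero]
      refine Finset.sum_congr rfl fun k _ => ?_
      rw [Nat.factorial_succ, Nat.add_sub_cancel]
      have h3 : (k.factorial : ℂ) ≠ 0 := by exact_mod_cast k.factorial_ne_zero
      have h4 : ((k + 1 : ℕ) : ℂ) ≠ 0 := by exact_mod_cast k.succ_ne_zero
      push_cast at h4 ⊢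
      field_simp
    have hB : ∀ x : ℝ, HasDerivAt (fun x : ℝ => x ^ (K + 1) / ((K + 1).factorial : ℝ))
        (x ^ K / K.factorial) x := by
      intro x
      refine ((hasDerivAt_pow (K + 1) x).div_const ((K + 1).factorial : ℝ)).congr_deriv (Eq.symm ?_)
      rw [Nat.factorial_succ, Nat.add_sub_cancel]
      have h3 : (K.factorial : ℝ) ≠ 0 := by exact_mod_cast K.factorial_ne_zero
      push_cast
      field_simp
    refine image_norm_le_of_norm_deriv_right_le_deriv_boundary (a := 0) (b := y)
      (fun x _ => (hd x).continuousAt.continuousWithinAt)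
      (fun x _ => (hd x).hasDerivWithinAt) ?_ hB ?_ ⟨hy, le_rfl⟩
    · rw [Finset.sum_range_succ']
      simp
    · intro x hx
      rw [norm_mul, hu, one_mul]
      exact ih x hx.1

theorem exp_I_taylor (K : ℕ) (y : ℝ) :
    ‖Complex.exp (y * Complex.I) - ∑ k ∈ Finset.range K, (y * Complex.I) ^ k / (k.factorial : ℂ)‖
        ≤ |y| ^ K / K.factorial := by
  rcases le_total 0 y with h | h
  · have := exp_I_taylor_aux Complex.I (by simp) Complex.norm_exp_I_mul_ofReal K y h
    rw [abs_of_nonneg h]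
    simpa only [mul_comm] using this
  · have := exp_I_taylor_aux (-Complex.I) (by simp)
      (fun y => by simpa using Complex.norm_exp_I_mul_ofReal (-y)) K (-y) (by linarith)
    rw [abs_of_nonpos h]
    have e : -Complex.I * ((-y : ℝ) : ℂ) = y * Complex.I := by push_cast; ring
    simpa only [e] using this

theorem avg_taylor {Ω : Type*} [Fintype Ω] (N : ℝ) (hN : 0 < N) (X : Ω → ℝ) (t : ℝ) (K : ℕ)
    (hK : Even K) :
    ‖(∑ x, Complex.exp (t * X x * Complex.I)) / N
      - ∑ k ∈ Finset.range K, (t * Complex.I) ^ k / (k.factorial : ℂ) * (((∑ x, X x ^ k) / N : ℝ) : ℂ)‖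
      ≤ t ^ K / K.factorial * ((∑ x, X x ^ K) / N) := by
  have e : (∑ x, Complex.exp (t * X x * Complex.I)) / N
      - ∑ k ∈ Finset.range K,
        (t * Complex.I) ^ k / (k.factorial : ℂ) * (((∑ x, X x ^ k) / N : ℝ) : ℂ)
      = (∑ x, (Complex.exp (((t * X x : ℝ) : ℂ) * Complex.I) - ∑ k ∈ Finset.range K,
        (((t * X x : ℝ) : ℂ) * Complex.I) ^ k / (k.factorial : ℂ))) / N := by
    rw [Finset.sum_sub_distrib, sub_div]
    congr 1
    · push_cast; rfl
    · rw [Finset.sum_comm, Finset.sum_div]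
      refine Finset.sum_congr rfl fun k _ => ?_
      push_cast
      rw [← mul_div_assoc, Finset.mul_sum]
      congr 1
      refine Finset.sum_congr rfl fun x _ => ?_
      ring
  rw [e, norm_div, Complex.norm_real, Real.norm_eq_abs, abs_of_pos hN, ← mul_div_assoc]
  gcongr
  refine (norm_sum_le _ _).trans ?_
  rw [Finset.mul_sum]
  gcongr with x
  refine (exp_I_taylor K _).trans (le_of_eq ?_)
  rw [hK.pow_abs]; ring

theorem cf_compare {Ω Ω' : Type*} [Fintype Ω] [Fintype Ω'] (N N' : ℝ) (hN : 0 < N) (hN' : 0 < N')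
    (X : Ω → ℝ) (Y : Ω' → ℝ) (t : ℝ) (K : ℕ) (hK : Even K) :
    ‖(∑ x, Complex.exp (t * X x * Complex.I)) / N - (∑ x, Complex.exp (t * Y x * Complex.I)) / N'‖
      ≤ ∑ k ∈ Finset.range (K + 1),
          |t| ^ k / k.factorial * |(∑ x, X x ^ k) / N - (∑ x, Y x ^ k) / N'|
        + 2 * ((∑ x, (t * Y x) ^ K / K.factorial) / N') := by
  have h1 := avg_taylor N hN X t K hK
  have h2 := avg_taylor N' hN' Y t K hK
  set φ := (∑ x, Complex.exp (t * X x * Complex.I)) / N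
  set ψ := (∑ x, Complex.exp (t * Y x * Complex.I)) / N'
  set A : ℕ → ℝ := fun k => (∑ x, X x ^ k) / N with hA
  set B : ℕ → ℝ := fun k => (∑ x, Y x ^ k) / N' with hB
  have e : (∑ x, (t * Y x) ^ K / K.factorial) / N' = t ^ K / K.factorial * B K := by
    rw [hB]
    simp only
    rw [← mul_div_assoc, Finset.mul_sum]
    congr 1
    refine Finset.sum_congr rfl fun x _ => ?_
    ring
  have h3 : ‖(∑ k ∈ Finset.range K, (t * Complex.I) ^ k / (k.factorial : ℂ) * ((A k : ℝ) : ℂ))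
      - ∑ k ∈ Finset.range K, (t * Complex.I) ^ k / (k.factorial : ℂ) * ((B k : ℝ) : ℂ)‖
      ≤ ∑ k ∈ Finset.range K, |t| ^ k / k.factorial * |A k - B k| := by
    rw [← Finset.sum_sub_distrib]
    refine (norm_sum_le _ _).trans (Finset.sum_le_sum fun k _ => le_of_eq ?_)
    rw [← mul_sub, norm_mul, ← Complex.ofReal_sub, Complex.norm_real, norm_div, norm_pow, norm_mul]
    simp
  have h4 : t ^ K / K.factorial * A K ≤ |t| ^ K / K.factorial * |A K - B K|
      + t ^ K / K.factorial * B K := by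
    rw [hK.pow_abs, ← mul_add]
    have : 0 ≤ t ^ K := hK.pow_nonneg t
    gcongr
    have := le_abs_self (A K - B K)
    linarith
  rw [e, Finset.sum_range_succ]
  set P := ∑ k ∈ Finset.range K, (t * Complex.I) ^ k / (k.factorial : ℂ) * ((A k : ℝ) : ℂ)
  set Q := ∑ k ∈ Finset.range K, (t * Complex.I) ^ k / (k.factorial : ℂ) * ((B k : ℝ) : ℂ)
  have h5 : ‖φ - ψ‖ ≤ ‖φ - P‖ + ‖P - Q‖ + ‖ψ - Q‖ := by
    have : φ - ψ = (φ - P) + (P - Q) - (ψ - Q) := by ring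
    rw [this]
    exact (norm_sub_le _ _).trans (by gcongr; exact norm_add_le _ _)
  change _ ≤ ∑ k ∈ Finset.range K, |t| ^ k / k.factorial * |A k - B k|
    + |t| ^ K / K.factorial * |A K - B K| + _
  change ‖φ - P‖ ≤ t ^ K / K.factorial * A K at h1
  change ‖ψ - Q‖ ≤ t ^ K / K.factorial * B K at h2
  linarith

open Filter Topology in
theorem cos_limit (t : ℝ) :
    Tendsto (fun n : ℕ => Complex.cosh ((t / Real.sqrt n : ℝ) * Complex.I) ^ n) atTop
      (𝓝 (Complex.exp (-t ^ 2 / 2))) := by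
  have h0 : Tendsto (fun n : ℕ => t ^ 4 * (5 / 96) / (n : ℝ)) atTop (𝓝 0) :=
    tendsto_const_div_atTop_nhds_zero_nat _
  have key : Tendsto (fun n : ℕ => (n : ℂ) * (Complex.cos ((t / Real.sqrt n : ℝ) : ℂ) - 1)) atTop
      (𝓝 (-t ^ 2 / 2)) := by
    rw [tendsto_iff_norm_sub_tendsto_zero]
    refine squeeze_zero' (Eventually.of_forall fun n => norm_nonneg _) ?_ h0
    have hn : ∀ᶠ n : ℕ in atTop, t ^ 2 + 1 ≤ (n : ℝ) :=
      tendsto_natCast_atTop_atTop.eventually_ge_atTop _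
    filter_upwards [hn] with n hn
    have hn0 : (0 : ℝ) < n := by nlinarith [sq_nonneg t]
    set y := t / Real.sqrt n with hy
    have hy2 : y ^ 2 = t ^ 2 / n := by rw [hy, div_pow, Real.sq_sqrt hn0.le]
    have hy1 : |y| ≤ 1 := by
      rw [← sq_le_one_iff_abs_le_one, hy2, div_le_one hn0]; linarith
    have hb := Complex.cos_bound (x := (y : ℂ)) (by simpa using hy1)
    have e : (n : ℂ) * (Complex.cos (y : ℂ) - 1) - (-t ^ 2 / 2)
        = n * (Complex.cos (y : ℂ) - (1 - (y : ℂ) ^ 2 / 2)) := by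
      have : (y : ℂ) ^ 2 = (t : ℂ) ^ 2 / n := by exact_mod_cast hy2
      rw [this]
      have : (n : ℂ) ≠ 0 := by exact_mod_cast hn0.ne'
      field_simp
      ring
    rw [e, norm_mul]
    have hn' : ‖(n : ℂ)‖ = n := by simp
    have h4 : |y| ^ 4 = t ^ 4 / n ^ 2 := by
      rw [(by decide : Even 4).pow_abs, show y ^ 4 = (y ^ 2) ^ 2 by ring, hy2]
      ring
    rw [Complex.norm_real, Real.norm_eq_abs, h4] at hb
    rw [hn']
    refine (mul_le_mul_of_nonneg_left hb hn0.le).trans (le_of_eq ?_)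
    field_simp
  have := Complex.tendsto_one_add_pow_exp_of_tendsto key
  simpa [Complex.cosh_mul_I] using this


theorem clt_of_cf (N : ℕ → ℕ) (hN : ∀ n, 0 < N n) (Z : ℕ → ℕ → ℝ)
    (hcf : ∀ t : ℝ, Filter.Tendsto (fun n => (∑ x ∈ Finset.range (N n),
      Complex.exp ((t : ℂ) * (Z n x : ℂ) * Complex.I)) / (N n : ℂ)) Filter.atTop
      (nhds (Complex.exp (-(t : ℂ) ^ 2 / 2)))) (lam : ℝ) :
    Filter.Tendsto (fun n => (((Finset.range (N n)).filter (fun x => Z n x ≤ lam)).card : ℝ) / (N n : ℝ))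
      Filter.atTop
      (nhds ((1 / Real.sqrt (2 * Real.pi)) * ∫ t in Set.Iic lam, Real.exp (-t ^ 2 / 2))) := by
  classical
  let M : ℕ → MeasureTheory.Measure ℝ := fun n =>
    ((N n : ENNReal)⁻¹) • ∑ x ∈ Finset.range (N n), MeasureTheory.Measure.dirac (Z n x)
  have hN0 : ∀ n, (N n : ENNReal) ≠ 0 := fun n => by exact_mod_cast (hN n).ne'
  have hM : ∀ n, MeasureTheory.IsProbabilityMeasure (M n) := by
    intro n
    constructor
    simp only [M, MeasureTheory.Measure.smul_apply, MeasureTheory.Measure.finsetSum_apply,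
      MeasureTheory.measure_univ, Finset.sum_const, Finset.card_range, smul_eq_mul, nsmul_eq_mul,
      mul_one]
    exact ENNReal.inv_mul_cancel (hN0 n) (ENNReal.natCast_ne_top _)
  let P : ℕ → MeasureTheory.ProbabilityMeasure ℝ := fun n => ⟨M n, hM n⟩
  let G : MeasureTheory.ProbabilityMeasure ℝ :=
    ⟨ProbabilityTheory.gaussianReal 0 1, inferInstance⟩
  have hT : Filter.Tendsto P Filter.atTop (nhds G) := by
    rw [MeasureTheory.ProbabilityMeasure.tendsto_iff_tendsto_charFun]
    intro t
    have e1 : MeasureTheory.charFun (G : MeasureTheory.Measure ℝ) t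
        = Complex.exp (-(t : ℂ) ^ 2 / 2) := by
      change MeasureTheory.charFun (ProbabilityTheory.gaussianReal 0 1) t = _
      rw [ProbabilityTheory.charFun_gaussianReal]
      congr 1
      simp
      ring
    rw [e1]
    refine (hcf t).congr fun n => ?_
    change _ = MeasureTheory.charFun (M n) t
    rw [MeasureTheory.charFun_apply_real]
    simp only [M]
    rw [MeasureTheory.integral_smul_measure, MeasureTheory.integral_finsetSum_measure]
    · simp only [MeasureTheory.integral_dirac]
      rw [ENNReal.toReal_inv, ENNReal.toReal_natCast, div_eq_inv_mul, Complex.real_smul]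
      push_cast
      rfl
    · intro i _
      exact MeasureTheory.integrable_dirac (by simp)
  have hA := MeasureTheory.ProbabilityMeasure.tendsto_measure_of_null_frontier_of_tendsto' hT
    (E := Set.Iic lam) (by
      rw [frontier_Iic]
      have := ProbabilityTheory.nullSingletonClass_gaussianReal (μ := 0) (v := 1) one_ne_zero
      change ProbabilityTheory.gaussianReal 0 1 {lam} = 0
      exact MeasureTheory.measure_singleton lam)
  have hA' := (ENNReal.tendsto_toReal (MeasureTheory.measure_ne_top _ _)).comp hA
  have e2 : ((G : MeasureTheory.Measure ℝ) (Set.Iic lam)).toReal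
      = (1 / Real.sqrt (2 * Real.pi)) * ∫ t in Set.Iic lam, Real.exp (-t ^ 2 / 2) := by
    change ((ProbabilityTheory.gaussianReal 0 1) (Set.Iic lam)).toReal = _
    rw [ProbabilityTheory.gaussianReal_apply_eq_integral 0 one_ne_zero, ENNReal.toReal_ofReal]
    · rw [ProbabilityTheory.gaussianPDFReal_def, MeasureTheory.integral_const_mul]
      simp
    · exact MeasureTheory.integral_nonneg fun x => ProbabilityTheory.gaussianPDFReal_nonneg _ _ _
  rw [e2] at hA'
  refine hA'.congr fun n => ?_
  change ((M n) (Set.Iic lam)).toReal = _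
  simp only [M, MeasureTheory.Measure.smul_apply, MeasureTheory.Measure.finsetSum_apply,
    MeasureTheory.Measure.dirac_apply' _ measurableSet_Iic, smul_eq_mul]
  rw [ENNReal.toReal_mul, ENNReal.toReal_inv, ENNReal.toReal_natCast, div_eq_inv_mul]
  congr 1
  rw [Finset.card_filter, ENNReal.toReal_sum (by
    intro a _
    by_cases hh : Z n a ≤ lam <;> simp [Set.indicator, hh])]
  push_cast
  refine Finset.sum_congr rfl fun a _ => ?_
  by_cases hh : Z n a ≤ lam <;> simp [Set.indicator, hh]

/-- Approximation principle. -/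
theorem tendsto_zero_of_approx {f : ℕ → ℝ} (B : ℝ) (g : ℕ → ℕ → ℝ) (hf : ∀ n, 0 ≤ f n)
    (hg : ∀ k, Filter.Tendsto (g k) Filter.atTop (nhds 0))
    (hb : ∀ K, Even K → ∀ᶠ n in Filter.atTop,
      f n ≤ ∑ k ∈ Finset.range (K + 1), g k n + B / 2 ^ K) :
    Filter.Tendsto f Filter.atTop (nhds 0) := by
  rw [Metric.tendsto_atTop']
  intro ε hε
  have hB : Filter.Tendsto (fun m : ℕ => B / 2 ^ (2 * m)) Filter.atTop (nhds 0) := by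
    have h := tendsto_pow_atTop_nhds_zero_of_lt_one (r := (1 / 4 : ℝ)) (by norm_num) (by norm_num)
    have h' := h.const_mul B
    rw [mul_zero] at h'
    refine h'.congr fun m => ?_
    rw [pow_mul, div_pow, one_pow, div_eq_mul_one_div B]
    norm_num
  obtain ⟨m, hm⟩ := (hB.eventually (gt_mem_nhds (half_pos hε))).exists
  have hs : Filter.Tendsto (fun n => ∑ k ∈ Finset.range (2 * m + 1), g k n) Filter.atTop (nhds 0) := by
    have := tendsto_finsetSum (Finset.range (2 * m + 1)) (fun k _ => hg k)
    simpa using this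
  have hev := (hb (2 * m) (even_two_mul m)).and (hs.eventually (gt_mem_nhds (half_pos hε)))
  obtain ⟨n0, hn0⟩ := Filter.eventually_atTop.1 hev
  refine ⟨n0, fun n hn => ?_⟩
  obtain ⟨a, b⟩ := hn0 n hn.le
  rw [Real.dist_eq, sub_zero, abs_of_nonneg (hf n)]
  linarith


theorem sum_range_zmod {β : Type*} [AddCommMonoid β] (p : ℕ) [NeZero p] (F : ZMod p → β) :
    ∑ x ∈ Finset.range p, F (x : ZMod p) = ∑ x : ZMod p, F x := by
  refine Finset.sum_bij' (fun x _ => (x : ZMod p)) (fun x _ => x.val) ?_ ?_ ?_ ?_ ?_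
  · intros; simp
  · intro x _; simpa using ZMod.val_lt x
  · intro x hx; exact ZMod.val_cast_of_lt (by simpa using hx)
  · intro x _; simp
  · intros; rfl

theorem legendre_sum_eq (p H x : ℕ) [hp : Fact p.Prime] :
    ((∑ n ∈ Finset.Icc (x + 1) (x + H), legendreSym p (n : ℤ) : ℤ) : ℝ)
      = ∑ j : Fin H, (quadraticChar (ZMod p) ((x : ZMod p) + (1 + ((j : ℕ) : ZMod p))) : ℝ) := by
  have e : Finset.Icc (x + 1) (x + H) = Finset.Ico (x + 1) (x + 1 + H) := by
    ext n; simp only [Finset.mem_Icc, Finset.mem_Ico]; omega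
  rw [e, Finset.sum_Ico_eq_sum_range, Nat.add_sub_cancel_left, ← Fin.sum_univ_eq_sum_range
    (fun i => legendreSym p ((x + 1 + i : ℕ) : ℤ))]
  push_cast
  refine Finset.sum_congr rfl fun j _ => ?_
  unfold legendreSym
  congr 2
  push_cast
  ring

theorem cf_bound (p H K : ℕ) [hp : Fact p.Prime] (hH1 : 1 ≤ H) (hHp : H ≤ p) (hK : Even K)
    (hpK : 64 * (K + 1) ^ 2 ≤ p) (t : ℝ) :
    ‖(∑ x ∈ Finset.range p, Complex.exp ((t : ℂ) *
        ((((∑ n ∈ Finset.Icc (x + 1) (x + H), legendreSym p (n : ℤ) : ℤ) : ℝ) / Real.sqrt H : ℝ) : ℂ)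
          * Complex.I)) / (p : ℂ) - Complex.cosh ((t / Real.sqrt H : ℝ) * Complex.I) ^ H‖
      ≤ ∑ k ∈ Finset.range (K + 1), (|t| ^ k / k.factorial * (40 * (k + 1) ^ 2)) *
          ((H : ℝ) ^ (k + 1) / Real.sqrt p) + 4 * Real.exp (2 * t ^ 2) / 2 ^ K := by
  have hp0 : (0 : ℝ) < p := by exact_mod_cast hp.out.pos
  have hH0 : (1 : ℝ) ≤ H := by exact_mod_cast hH1
  have hs1 : 1 ≤ Real.sqrt H := by rw [Real.one_le_sqrt]; exact hH0
  have hs0 : 0 < Real.sqrt H := by linarith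
  let X : ZMod p → ℝ := fun x =>
    (∑ j : Fin H, (quadraticChar (ZMod p) (x + (1 + ((j : ℕ) : ZMod p))) : ℝ)) / Real.sqrt H
  let Y : (Fin H → ℤˣ) → ℝ := fun ε => (∑ j, (((ε j : ℤˣ) : ℤ) : ℝ)) / Real.sqrt H
  have key := cf_compare (p : ℝ) (2 ^ H) hp0 (by positivity) X Y t K hK
  have e1 : (∑ x ∈ Finset.range p, Complex.exp ((t : ℂ) *
        ((((∑ n ∈ Finset.Icc (x + 1) (x + H), legendreSym p (n : ℤ) : ℤ) : ℝ) / Real.sqrt H : ℝ) : ℂ)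
          * Complex.I)) = ∑ x, Complex.exp (t * X x * Complex.I) := by
    rw [← sum_range_zmod p (fun x => Complex.exp (t * X x * Complex.I))]
    refine Finset.sum_congr rfl fun x _ => ?_
    rw [legendre_sum_eq]
  have e2 : Complex.cosh ((t / Real.sqrt H : ℝ) * Complex.I) ^ H
      = (∑ x, Complex.exp (t * Y x * Complex.I)) / ((2 ^ H : ℝ) : ℂ) := by
    rw [← rad_exp]
    push_cast
    congr 1
    refine Finset.sum_congr rfl fun ε _ => ?_
    congr 1
    simp only [Y]
    push_cast
    ring
  rw [e1, e2, ← Complex.ofReal_natCast]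
  refine key.trans (add_le_add (Finset.sum_le_sum fun k hk => ?_) ?_)
  · rw [mul_assoc]
    refine mul_le_mul_of_nonneg_left ?_ (by positivity)
    have hk' : k ≤ K := by simpa [Nat.lt_succ_iff] using hk
    have hm := moment_compare k p H
      ((Nat.mul_le_mul_left 64 (Nat.pow_le_pow_left (by omega) 2)).trans hpK) hHp
    have e3 : (∑ x, X x ^ k) / (p : ℝ) - (∑ x, Y x ^ k) / 2 ^ H
        = ((∑ x : ZMod p, (∑ j : Fin H,
            (quadraticChar (ZMod p) (x + (1 + ((j : ℕ) : ZMod p))) : ℝ)) ^ k) / p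
          - (∑ ε : Fin H → ℤˣ, (∑ j, (((ε j : ℤˣ) : ℤ) : ℝ)) ^ k) / 2 ^ H) / Real.sqrt H ^ k := by
      simp only [X, Y, div_pow, ← Finset.sum_div]
      ring
    rw [e3, abs_div, abs_of_pos (pow_pos hs0 k)]
    refine (div_le_self (abs_nonneg _) (one_le_pow₀ hs1)).trans (hm.trans ?_)
    have : (H : ℝ) ^ k ≤ (H : ℝ) ^ (k + 1) := pow_le_pow_right₀ hH0 (Nat.le_succ k)
    calc (H : ℝ) ^ k * ((40 * (k + 1) ^ 2 : ℝ) / Real.sqrt p)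
        ≤ (H : ℝ) ^ (k + 1) * ((40 * (k + 1) ^ 2 : ℝ) / Real.sqrt p) := by gcongr
      _ = _ := by ring
  · have := rad_moment_bound H K hH1 hK t
    calc _ ≤ 2 * (2 * Real.exp (2 * t ^ 2) / 2 ^ K) := by
          refine mul_le_mul_of_nonneg_left ?_ (by norm_num)
          exact this
      _ = _ := by ring

open Filter in
theorem clt_seq (h : ℕ → ℕ) (h1 : ∀ q, 1 ≤ h q) (u : ℕ → ℕ) (hu : ∀ n, (u n).Prime)
    (hut : Tendsto u atTop atTop) (h2 : Tendsto (fun n => h (u n)) atTop atTop)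
    (h3 : ∀ r : ℕ, 1 ≤ r →
      Tendsto (fun n : ℕ => (h (u n) : ℝ) ^ r / Real.sqrt (u n)) atTop (nhds 0)) (lam : ℝ) :
    Tendsto (fun n : ℕ =>
          ({x : ℕ | x < u n ∧ ∃ hp : Fact (u n).Prime,
              ((∑ m ∈ Finset.Icc (x + 1) (x + h (u n)), @legendreSym (u n) hp (m : ℤ) : ℤ) : ℝ)
                ≤ lam * Real.sqrt (h (u n))}.ncard : ℝ) / (u n : ℝ)) atTop
        (nhds ((1 / Real.sqrt (2 * Real.pi)) * ∫ t in Set.Iic lam, Real.exp (-t ^ 2 / 2))) := by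
  have hF : ∀ n, Fact (u n).Prime := fun n => ⟨hu n⟩
  let Z : ℕ → ℕ → ℝ := fun n x => ((∑ m ∈ Finset.Icc (x + 1) (x + h (u n)),
    @legendreSym (u n) (hF n) (m : ℤ) : ℤ) : ℝ) / Real.sqrt (h (u n))
  have main := clt_of_cf u (fun n => (hu n).pos) Z ?_ lam
  · refine main.congr fun n => ?_
    congr 2
    rw [← Set.ncard_coe_finset]
    congr 1
    ext x
    have hs0 : 0 < Real.sqrt (h (u n)) := by
      rw [Real.sqrt_pos]; exact_mod_cast h1 (u n)
    simp only [Z, Finset.coe_filter, Finset.mem_range, Set.mem_ofPred_eq, div_le_iff₀ hs0]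
    constructor
    · rintro ⟨a, b⟩; exact ⟨a, hF n, b⟩
    · rintro ⟨a, _, b⟩; exact ⟨a, b⟩
  · intro t
    have hlim := (cos_limit t).comp h2
    have hz : Tendsto (fun n => ‖(∑ x ∈ Finset.range (u n), Complex.exp ((t : ℂ) *
        (Z n x : ℂ) * Complex.I)) / (u n : ℂ) -
          Complex.cosh ((t / Real.sqrt (h (u n)) : ℝ) * Complex.I) ^ (h (u n))‖) atTop (nhds 0) := by
      refine tendsto_zero_of_approx (4 * Real.exp (2 * t ^ 2))
        (fun k n => (|t| ^ k / k.factorial * (40 * (k + 1) ^ 2)) *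
          ((h (u n) : ℝ) ^ (k + 1) / Real.sqrt (u n))) (fun n => norm_nonneg _) ?_ ?_
      · intro k
        simpa using (h3 (k + 1) (by omega)).const_mul
          (|t| ^ k / k.factorial * (40 * (k + 1) ^ 2))
      · intro K hK
        have c1 := (h3 1 le_rfl).eventually (gt_mem_nhds one_pos)
        have c2 := hut.eventually (eventually_ge_atTop (64 * (K + 1) ^ 2))
        filter_upwards [c1, c2] with n a b
        have := hF n
        refine cf_bound (u n) (h (u n)) K (h1 _) ?_ hK b t
        have hp0 : (1 : ℝ) ≤ u n := by exact_mod_cast (hu n).one_le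
        have hs : 0 < Real.sqrt (u n) := by rw [Real.sqrt_pos]; linarith
        rw [pow_one, div_lt_one hs] at a
        have : (h (u n) : ℝ) ≤ u n := a.le.trans (by
          rw [Real.sqrt_le_left (by linarith)]; nlinarith)
        exact_mod_cast this
    have hz' := tendsto_zero_iff_norm_tendsto_zero.2 hz
    have := hz'.add hlim
    rw [zero_add] at this
    refine this.congr fun n => ?_
    simp

/-- Theorem 10.1 (Davenport–Erdős): let `h : ℕ → ℕ` satisfy `h(q) ≥ 1`, `h(q) → ∞` and
`h(q)^r / √q → 0` (for every `r ≥ 1`) as `q → ∞` through the primes. For an odd prime `p` and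
`x ∈ {0, …, p-1}` put `S_{h(p)}(x) = ∑_{n=x+1}^{x+h(p)} χ_p(n)`. Then for every real `λ`,
`(1/p) #{x ∈ {0,…,p-1} : S_{h(p)}(x) ≤ λ √h(p)} → (1/√(2π)) ∫_{-∞}^λ e^{-t²/2} dt`
as `p → ∞` through the primes. -/
theorem davenport_erdos_central_limit (h : ℕ → ℕ) (h1 : ∀ q, 1 ≤ h q)
    (h2 : Filter.Tendsto h
      (Filter.atTop ⊓ Filter.principal {q : ℕ | q.Prime}) Filter.atTop)
    (h3 : ∀ r : ℕ, 1 ≤ r →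
      Filter.Tendsto (fun q : ℕ => (h q : ℝ) ^ r / Real.sqrt q)
        (Filter.atTop ⊓ Filter.principal {q : ℕ | q.Prime}) (nhds 0)) :
    ∀ lam : ℝ,
      Filter.Tendsto (fun p : ℕ =>
          ({x : ℕ | x < p ∧ ∃ hp : Fact p.Prime,
              ((∑ n ∈ Finset.Icc (x + 1) (x + h p), @legendreSym p hp (n : ℤ) : ℤ) : ℝ)
                ≤ lam * Real.sqrt (h p)}.ncard : ℝ) / (p : ℝ))
        (Filter.atTop ⊓ Filter.principal {p : ℕ | p.Prime})
        (nhds ((1 / Real.sqrt (2 * Real.pi)) * ∫ t in Set.Iic lam, Real.exp (-t ^ 2 / 2))) := by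
  intro lam
  refine Filter.tendsto_of_seq_tendsto fun u hu => ?_
  rw [Filter.tendsto_inf, Filter.tendsto_principal] at hu
  obtain ⟨n0, hn0⟩ := Filter.eventually_atTop.1 hu.2
  rw [← Filter.tendsto_add_atTop_iff_nat n0]
  have hv : Filter.Tendsto (fun n => u (n + n0)) Filter.atTop Filter.atTop :=
    hu.1.comp (Filter.tendsto_add_atTop_nat n0)
  have hvp : ∀ n, (u (n + n0)).Prime := fun n => hn0 _ (by omega)
  have hv' : Filter.Tendsto (fun n => u (n + n0)) Filter.atTop
      (Filter.atTop ⊓ Filter.principal {q : ℕ | q.Prime}) :=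
    Filter.tendsto_inf.2 ⟨hv, Filter.tendsto_principal.2 (Filter.Eventually.of_forall hvp)⟩
  exact clt_seq h h1 (fun n => u (n + n0)) hvp hv (h2.comp hv') (fun r hr => (h3 r hr).comp hv') lam
end
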